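/- If [u, v] ⊂ (b_γ, ∞) is a closed interval, then T_n(z) converges almost surely to T_0(z) = (1 + γ^{-1}·m(z))^{-1}·D² + m(z)^{-1}·I_k, uniformly in z ∈ [u, v]. -/

import Mathlib

/-!
Write `φ_n(z) = (1/n) ∑ (z - λ_α)⁻¹` and `φ = -γ⁻¹ m`. By the Woodbury identity, `T_n(z)` is a fixed
continuous function of `k × k` matrices: `D_n`, `E₁₁/√n`, the Gram matrices of the noise blocks, and
the compressions of functions of `Λ_n` by the rectangular noise blocks. Off a single null set each
of them converges as `n → ∞` and `z → z₀` jointly, for every `z₀ > b_γ`, and such joint convergence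
is locally uniform convergence. Three facts make this work.

* Largest eigenvalue. Slepian's inequality compares the maximum of `⟨x, W y⟩` over finite sets of
  unit vectors with a sum of two independent linear suprema; together with Chernoff bounds this
  gives `λ_max ≤ ζ` eventually, for every `ζ > b_γ`.
* Trace of the resolvent. A leave-one-out expansion over the rows of `W` and the concentration of
  Gaussian quadratic forms show that `φ_n` satisfies the quadratic equation of `φ` up to a vanishing
  error. The right root is selected by continuity from large `z`, where `φ_n` is small, so
  `φ_n → φ`.
* Compressions. The eigenvalues are ordered, so weights such as `1/(z - λ_α)` are nonincreasing and
  bounded. Abel summation controls the weighted sums of products of Gaussian entries by the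
  unweighted partial sums, which obey a law of large numbers uniformly in the number of terms; the
  weights may therefore be arbitrary, in particular random.
-/

open MeasureTheory ProbabilityTheory Filter Matrix Topology

noncomputable section

instance matrixMeasurableSpace {m n : Type*} : MeasurableSpace (Matrix m n ℝ) :=
  MeasurableSpace.pi

/-- Convergence in distribution (weak convergence of laws) of a sequence of random elements. -/
def TendstoInDist {Ω E : Type*} [MeasurableSpace Ω] [MeasurableSpace E] [TopologicalSpace E]
    (P : Measure Ω) (X : ℕ → Ω → E) (ν : Measure E) : Prop :=
  ∀ f : BoundedContinuousFunction E ℝ,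
    Tendsto (fun n => ∫ ω, f (X n ω) ∂P) atTop (𝓝 (∫ x, f x ∂ν))

/-- Convergence to zero in probability. -/
def TendstoInProbZero {Ω : Type*} [MeasurableSpace Ω] (P : Measure Ω) (X : ℕ → Ω → ℝ) : Prop :=
  ∀ ε : ℝ, 0 < ε → Tendsto (fun n => P {ω | ε ≤ |X n ω|}) atTop (𝓝 0)

/-- `ν` is a centered multivariate Gaussian measure with covariance function `C`
(characterized through one-dimensional projections). -/
def IsCenteredGaussianCov {ι : Type*} [Fintype ι] (ν : Measure (ι → ℝ)) (C : ι → ι → ℝ) : Prop :=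
  ∀ a : ι → ℝ,
    Measure.map (fun x => ∑ i, a i * x i) ν
      = gaussianReal 0 (Real.toNNReal (∑ i, ∑ j, a i * C i j * a j))

/-- The coordinates of `X` are iid `N(0, v)` random variables. -/
def IIDGaussian {Ω ι : Type*} [MeasurableSpace Ω] [Fintype ι] (P : Measure Ω)
    (X : Ω → ι → ℝ) (v : NNReal) : Prop :=
  Measure.map X P = Measure.pi fun _ : ι => gaussianReal 0 v

/-- Entries of a matrix, as a function on pairs of indices. -/
def matEntries {m n : Type*} (A : Matrix m n ℝ) : m × n → ℝ := fun q => A q.1 q.2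

/-- The eigenvalues of a (Hermitian) real matrix, sorted in decreasing order. -/
def eigsDesc {p : ℕ} (A : Matrix (Fin p) (Fin p) ℝ) : List ℝ :=
  if h : A.IsHermitian then (List.ofFn h.eigenvalues).insertionSort (· ≥ ·) else []

/-- The `i`-th largest eigenvalue of a (Hermitian) real matrix (`i` is 0-based). -/
def ithEigDesc {p : ℕ} (A : Matrix (Fin p) (Fin p) ℝ) (i : ℕ) : ℝ :=
  (eigsDesc A).getD i 0

/-- Lower edge `a_γ = (1 - γ^{-1/2})²` of the Marchenko–Pastur law. -/
def aGamma (γ : ℝ) : ℝ := (1 - 1 / Real.sqrt γ) ^ 2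

/-- Upper edge `b_γ = (1 + γ^{-1/2})²` of the Marchenko–Pastur law. -/
def bGamma (γ : ℝ) : ℝ := (1 + 1 / Real.sqrt γ) ^ 2

/-- Density of the Marchenko–Pastur law with aspect ratio `γ`. -/
def mpDensity (γ t : ℝ) : ℝ :=
  if t ∈ Set.Icc (aGamma γ) (bGamma γ) then
    γ * Real.sqrt ((bGamma γ - t) * (t - aGamma γ)) / (2 * Real.pi * t)
  else 0

/-- The Marchenko–Pastur law with aspect ratio `γ`. -/
def mpMeasure (γ : ℝ) : Measure ℝ :=
  volume.withDensity fun t => ENNReal.ofReal (mpDensity γ t)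

/-- Stieltjes transform `m(z) = ∫ (t - z)⁻¹ dFMP_γ(t)` of the Marchenko–Pastur law. -/
def mpStieltjes (γ z : ℝ) : ℝ := ∫ t, (t - z)⁻¹ ∂(mpMeasure γ)

/-- The spiked low-rank-plus-noise model `X_n = √n U_n D_n V_nᵀ + E_n`
(Assumptions A1–A3, with `s = σ²` the noise variance and without the CLT
assumption on the factor strengths, which is stated separately when needed). -/
structure SpikedModel (k : ℕ) (γ s : ℝ) (p : ℕ → ℕ) (Ω : Type*) [MeasurableSpace Ω]
    (P : Measure Ω) (μ : Fin k → ℝ) where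
  U : ∀ n : ℕ, Ω → Matrix (Fin n) (Fin k) ℝ
  V : ∀ n : ℕ, Ω → Matrix (Fin (p n)) (Fin k) ℝ
  d : ∀ n : ℕ, Ω → Fin k → ℝ
  E : ∀ n : ℕ, Ω → Matrix (Fin n) (Fin (p n)) ℝ
  /- A1 -/
  orthU : ∀ n ω, (U n ω)ᵀ * U n ω = 1
  orthV : ∀ n ω, (V n ω)ᵀ * V n ω = 1
  aspect : Tendsto (fun n : ℕ => Real.sqrt n * ((n : ℝ) / (p n) - γ)) atTop (𝓝 0)
  /- A2 (except for the CLT on the factor strengths) -/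
  dpos : ∀ n ω i, 0 < d n ω i
  dstrictanti : ∀ n ω, StrictAnti (d n ω)
  dconv : ∀ᵐ ω ∂P, ∀ i, Tendsto (fun n => d n ω i) atTop (𝓝 (Real.sqrt (μ i)))
  /- A3 -/
  Egauss : ∀ n, IIDGaussian P (fun ω => matEntries (E n ω)) (Real.toNNReal s)
  Eindep : ∀ n, IndepFun (E n) (fun ω => (U n ω, d n ω, V n ω)) P

/-- The observed data matrix `X_n = √n U_n D_n V_nᵀ + E_n`. -/
def SpikedModel.X {k : ℕ} {γ s : ℝ} {p : ℕ → ℕ} {Ω : Type*} [MeasurableSpace Ω]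
    {P : Measure Ω} {μ : Fin k → ℝ} (M : SpikedModel k γ s p Ω P μ) (n : ℕ) (ω : Ω) :
    Matrix (Fin n) (Fin (p n)) ℝ :=
  Real.sqrt n • (M.U n ω * Matrix.diagonal (M.d n ω) * (M.V n ω)ᵀ) + M.E n ω

/-- `√n Uh (diagonal √μh) Vhᵀ` is the SVD of `X` truncated to the `k` largest terms:
the `μh i` are the `k` largest eigenvalues of `(1/n) Xᵀ X` in decreasing order, the columns
of `Vh` are corresponding orthonormal eigenvectors (right singular vectors), and the columns
of `Uh` are corresponding orthonormal left singular vectors. -/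
def IsTruncatedSVD {n q k : ℕ} (X : Matrix (Fin n) (Fin q) ℝ)
    (Uh : Matrix (Fin n) (Fin k) ℝ) (μh : Fin k → ℝ) (Vh : Matrix (Fin q) (Fin k) ℝ) : Prop :=
  Uhᵀ * Uh = 1 ∧ Vhᵀ * Vh = 1 ∧ Antitone μh ∧ (∀ i, 0 ≤ μh i) ∧
  (∀ i : Fin k, μh i = ithEigDesc ((1 / (n : ℝ)) • (Xᵀ * X)) i) ∧
  (∀ i : Fin k, (Xᵀ * X) *ᵥ (fun j => Vh j i) = ((n : ℝ) * μh i) • fun j => Vh j i) ∧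
  (∀ i : Fin k, X *ᵥ (fun j => Vh j i) = (Real.sqrt n * Real.sqrt (μh i)) • fun j => Uh j i)

/-- Almost sure limit `μ̄` of the top sample eigenvalues (`s = σ²`). -/
def muBar (γ s μi : ℝ) : ℝ :=
  if s / Real.sqrt γ < μi then (μi + s) * (1 + s / (γ * μi))
  else s * (1 + 1 / Real.sqrt γ) ^ 2

/-- Limiting covariance matrix `Σ̄` of the fluctuations of the top sample eigenvalues. -/
def sigmaBar {k : ℕ} (γ s : ℝ) (μ : Fin k → ℝ) (Cmat : Matrix (Fin k) (Fin k) ℝ) :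
    Fin k → Fin k → ℝ := fun i j =>
  if s / Real.sqrt γ < μ i ∧ s / Real.sqrt γ < μ j then
    Cmat i j * (1 - s ^ 2 / (γ * (μ i) ^ 2)) * (1 - s ^ 2 / (γ * (μ j) ^ 2))
      + (if i = j then 2 * s * (2 * μ i + (1 + γ⁻¹) * s) * (1 - s ^ 2 / (γ * (μ i) ^ 2)) else 0)
  else 0

/-- The independent noise blocks `E_{n,12}`, `E_{n,21}` and the scaled Wishart eigenvalues
`Λ_n` appearing after the change of basis. -/
structure NoiseBlocks (k : ℕ) (γ : ℝ) (p : ℕ → ℕ) (Ω : Type*) [MeasurableSpace Ω]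
    (P : Measure Ω) where
  E12 : ∀ n : ℕ, Ω → Matrix (Fin k) (Fin (p n - k)) ℝ
  E21 : ∀ n : ℕ, Ω → Matrix (Fin (p n - k)) (Fin k) ℝ
  W : ∀ n : ℕ, Ω → Matrix (Fin (n - k)) (Fin (p n - k)) ℝ
  lam : ∀ n : ℕ, Ω → Fin (p n - k) → ℝ
  aspect : Tendsto (fun n : ℕ => (n : ℝ) / (p n)) atTop (𝓝 γ)
  pTop : Tendsto p atTop atTop
  E12gauss : ∀ n, IIDGaussian P (fun ω => matEntries (E12 n ω)) 1
  E21gauss : ∀ n, IIDGaussian P (fun ω => matEntries (E21 n ω)) 1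
  Wgauss : ∀ n, IIDGaussian P (fun ω => matEntries (W n ω)) 1
  /-- `n λ_{n,α}` are the decreasingly ordered eigenvalues of the white Wishart
  matrix `Wᵀ W`. -/
  lamEig : ∀ n ω, ∀ α : Fin (p n - k), (n : ℝ) * lam n ω α = ithEigDesc ((W n ω)ᵀ * W n ω) α
  indep1 : ∀ n, IndepFun (E12 n) (fun ω => (E21 n ω, W n ω)) P
  indep2 : ∀ n, IndepFun (E21 n) (W n) P

namespace NoiseBlocks

variable {k : ℕ} {γ : ℝ} {p : ℕ → ℕ} {Ω : Type*} [MeasurableSpace Ω] {P : Measure Ω}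

/-- `(1/n) E_{n,12} (Λ_n − z I)⁻¹ E_{n,12}ᵀ`. -/
def q1 (B : NoiseBlocks k γ p Ω P) (n : ℕ) (ω : Ω) (z : ℝ) : Matrix (Fin k) (Fin k) ℝ :=
  (1 / (n : ℝ)) • (B.E12 n ω * (Matrix.diagonal (B.lam n ω) - z • 1)⁻¹ * (B.E12 n ω)ᵀ)

/-- `(1/n) E_{n,21}ᵀ (Λ_n − z I)⁻¹ E_{n,21}`. -/
def q2 (B : NoiseBlocks k γ p Ω P) (n : ℕ) (ω : Ω) (z : ℝ) : Matrix (Fin k) (Fin k) ℝ :=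
  (1 / (n : ℝ)) • ((B.E21 n ω)ᵀ * (Matrix.diagonal (B.lam n ω) - z • 1)⁻¹ * B.E21 n ω)

/-- `(1/n) E_{n,12} (Λ_n − z I)⁻¹ Λ_n^{1/2} E_{n,21}`. -/
def q3 (B : NoiseBlocks k γ p Ω P) (n : ℕ) (ω : Ω) (z : ℝ) : Matrix (Fin k) (Fin k) ℝ :=
  (1 / (n : ℝ)) • (B.E12 n ω * (Matrix.diagonal (B.lam n ω) - z • 1)⁻¹ *
    Matrix.diagonal (fun α => Real.sqrt (B.lam n ω α)) * B.E21 n ω)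

/-- `F_n(z)`. -/
def Fn (B : NoiseBlocks k γ p Ω P) (n : ℕ) (ω : Ω) (z : ℝ) : Matrix (Fin k) (Fin k) ℝ :=
  Real.sqrt n • (B.q1 n ω z - (γ⁻¹ * mpStieltjes γ z) • 1)

/-- `G_n(z)`. -/
def Gn (B : NoiseBlocks k γ p Ω P) (n : ℕ) (ω : Ω) (z : ℝ) : Matrix (Fin k) (Fin k) ℝ :=
  Real.sqrt n • B.q3 n ω z

/-- `H_n(z)`. -/
def Hn (B : NoiseBlocks k γ p Ω P) (n : ℕ) (ω : Ω) (z : ℝ) : Matrix (Fin k) (Fin k) ℝ :=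
  Real.sqrt n • (B.q2 n ω z - (γ⁻¹ * mpStieltjes γ z) • 1)

end NoiseBlocks

/-- The difference quotient `(m(z₁) − m(z₂))/(z₁ − z₂)`, interpreted as `m'(z₁)` when
`z₁ = z₂`: covariance kernel of `F` and `H`. -/
def qFH (γ z₁ z₂ : ℝ) : ℝ :=
  if z₁ = z₂ then deriv (mpStieltjes γ) z₁
  else (mpStieltjes γ z₁ - mpStieltjes γ z₂) / (z₁ - z₂)

/-- The difference quotient `(z₁ m(z₁) − z₂ m(z₂))/(z₁ − z₂)`, interpreted as
`m(z₁) + z₁ m'(z₁)` when `z₁ = z₂`: covariance kernel of `G`. -/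
def qG (γ z₁ z₂ : ℝ) : ℝ :=
  if z₁ = z₂ then mpStieltjes γ z₁ + z₁ * deriv (mpStieltjes γ) z₁
  else (z₁ * mpStieltjes γ z₁ - z₂ * mpStieltjes γ z₂) / (z₁ - z₂)

/-- Covariance function of the limiting Gaussian family
`(F(z_r), G(z_r), H(z_r))_{r}` (index component `Fin 3`: `0 ↦ F`, `1 ↦ G`, `2 ↦ H`);
it encodes that `F`, `G`, `H` are mutually independent, that `F` and `H` are symmetric,
and that all covariances vanish except the ones prescribed. -/
def covFGH (γ : ℝ) {l k : ℕ} (zs : Fin l → ℝ) :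
    Fin l × Fin 3 × Fin k × Fin k → Fin l × Fin 3 × Fin k × Fin k → ℝ := fun q q' =>
  if q.2.1 = q'.2.1 then
    if q.2.1 = 1 then
      γ⁻¹ * qG γ (zs q.1) (zs q'.1) *
        (if q.2.2.1 = q'.2.2.1 ∧ q.2.2.2 = q'.2.2.2 then 1 else 0)
    else
      γ⁻¹ * qFH γ (zs q.1) (zs q'.1) *
        ((if q.2.2.1 = q'.2.2.1 ∧ q.2.2.2 = q'.2.2.2 then 1 else 0)
          + (if q.2.2.1 = q'.2.2.2 ∧ q.2.2.2 = q'.2.2.1 then 1 else 0))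
  else 0

/-- The model after the orthogonal change of basis: the data matrix `X̃_n` has block form
`[[√n D_n + E₁₁, E₁₂], [E₂₁, √n Λ_n^{1/2}], [E₃₁, 0]]`, with all blocks mutually independent,
the `E`-blocks having iid `N(0,1)` entries and `n λ_{n,α}` the decreasingly ordered
eigenvalues of a white Wishart matrix of dimension `p − k` with `n − k` degrees of freedom.
(Monotonicity assumptions on `d` and `μ` are stated separately when needed.) -/
structure BlockModel (k : ℕ) (γ : ℝ) (p : ℕ → ℕ) (Ω : Type*) [MeasurableSpace Ω]
    (P : Measure Ω) (μ : Fin k → ℝ) where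
  d : ∀ n : ℕ, Ω → Fin k → ℝ
  E11 : ∀ n : ℕ, Ω → Matrix (Fin k) (Fin k) ℝ
  E12 : ∀ n : ℕ, Ω → Matrix (Fin k) (Fin (p n - k)) ℝ
  E21 : ∀ n : ℕ, Ω → Matrix (Fin (p n - k)) (Fin k) ℝ
  E31 : ∀ n : ℕ, Ω → Matrix (Fin (n - p n)) (Fin k) ℝ
  W : ∀ n : ℕ, Ω → Matrix (Fin (n - k)) (Fin (p n - k)) ℝ
  lam : ∀ n : ℕ, Ω → Fin (p n - k) → ℝ
  aspect : Tendsto (fun n : ℕ => Real.sqrt n * ((n : ℝ) / (p n) - γ)) atTop (𝓝 0)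
  pTop : Tendsto p atTop atTop
  dpos : ∀ n ω i, 0 < d n ω i
  dconv : ∀ᵐ ω ∂P, ∀ i, Tendsto (fun n => d n ω i) atTop (𝓝 (Real.sqrt (μ i)))
  E11gauss : ∀ n, IIDGaussian P (fun ω => matEntries (E11 n ω)) 1
  E12gauss : ∀ n, IIDGaussian P (fun ω => matEntries (E12 n ω)) 1
  E21gauss : ∀ n, IIDGaussian P (fun ω => matEntries (E21 n ω)) 1
  E31gauss : ∀ n, IIDGaussian P (fun ω => matEntries (E31 n ω)) 1
  Wgauss : ∀ n, IIDGaussian P (fun ω => matEntries (W n ω)) 1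
  lamEig : ∀ n ω, ∀ α : Fin (p n - k), (n : ℝ) * lam n ω α = ithEigDesc ((W n ω)ᵀ * W n ω) α
  indep1 : ∀ n, IndepFun (d n) (fun ω => (E11 n ω, E12 n ω, E21 n ω, E31 n ω, W n ω)) P
  indep2 : ∀ n, IndepFun (E11 n) (fun ω => (E12 n ω, E21 n ω, E31 n ω, W n ω)) P
  indep3 : ∀ n, IndepFun (E12 n) (fun ω => (E21 n ω, E31 n ω, W n ω)) P
  indep4 : ∀ n, IndepFun (E21 n) (fun ω => (E31 n ω, W n ω)) P
  indep5 : ∀ n, IndepFun (E31 n) (W n) P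

namespace BlockModel

variable {k : ℕ} {γ : ℝ} {p : ℕ → ℕ} {Ω : Type*} [MeasurableSpace Ω] {P : Measure Ω}
  {μ : Fin k → ℝ}

/-- Upper-left block `S_{n,11}` of `S_n = (1/n) X̃_nᵀ X̃_n`. -/
def S11 (M : BlockModel k γ p Ω P μ) (n : ℕ) (ω : Ω) : Matrix (Fin k) (Fin k) ℝ :=
  Matrix.diagonal (fun i => (M.d n ω i) ^ 2)
    + (1 / Real.sqrt n) •
      (Matrix.diagonal (M.d n ω) * M.E11 n ω + (M.E11 n ω)ᵀ * Matrix.diagonal (M.d n ω))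
    + (1 / (n : ℝ)) •
      ((M.E11 n ω)ᵀ * M.E11 n ω + (M.E21 n ω)ᵀ * M.E21 n ω + (M.E31 n ω)ᵀ * M.E31 n ω)

/-- Block `S_{n,12}` of `S_n = (1/n) X̃_nᵀ X̃_n`. -/
def S12 (M : BlockModel k γ p Ω P μ) (n : ℕ) (ω : Ω) : Matrix (Fin k) (Fin (p n - k)) ℝ :=
  (1 / Real.sqrt n) • (Matrix.diagonal (M.d n ω) * M.E12 n ω
      + (M.E21 n ω)ᵀ * Matrix.diagonal (fun α => Real.sqrt (M.lam n ω α)))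
    + (1 / (n : ℝ)) • ((M.E11 n ω)ᵀ * M.E12 n ω)

/-- Block `S_{n,21}` of `S_n = (1/n) X̃_nᵀ X̃_n`. -/
def S21 (M : BlockModel k γ p Ω P μ) (n : ℕ) (ω : Ω) : Matrix (Fin (p n - k)) (Fin k) ℝ :=
  (1 / Real.sqrt n) • ((M.E12 n ω)ᵀ * Matrix.diagonal (M.d n ω)
      + Matrix.diagonal (fun α => Real.sqrt (M.lam n ω α)) * M.E21 n ω)
    + (1 / (n : ℝ)) • ((M.E12 n ω)ᵀ * M.E11 n ω)

/-- Lower-right block `S_{n,22}` of `S_n = (1/n) X̃_nᵀ X̃_n`. -/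
def S22 (M : BlockModel k γ p Ω P μ) (n : ℕ) (ω : Ω) :
    Matrix (Fin (p n - k)) (Fin (p n - k)) ℝ :=
  Matrix.diagonal (M.lam n ω) + (1 / (n : ℝ)) • ((M.E12 n ω)ᵀ * M.E12 n ω)

/-- The secular-equation matrix `T_n(z) = S₁₁ − z I − S₁₂ (S₂₂ − z I)⁻¹ S₂₁`. -/
def T (M : BlockModel k γ p Ω P μ) (n : ℕ) (ω : Ω) (z : ℝ) : Matrix (Fin k) (Fin k) ℝ :=
  M.S11 n ω - z • 1 - M.S12 n ω * (M.S22 n ω - z • 1)⁻¹ * M.S21 n ω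

/-- `F_n(z)` in the block model. -/
def Fmat (M : BlockModel k γ p Ω P μ) (n : ℕ) (ω : Ω) (z : ℝ) : Matrix (Fin k) (Fin k) ℝ :=
  Real.sqrt n • ((1 / (n : ℝ)) •
      (M.E12 n ω * (Matrix.diagonal (M.lam n ω) - z • 1)⁻¹ * (M.E12 n ω)ᵀ)
    - (γ⁻¹ * mpStieltjes γ z) • 1)

/-- `G_n(z)` in the block model. -/
def Gmat (M : BlockModel k γ p Ω P μ) (n : ℕ) (ω : Ω) (z : ℝ) : Matrix (Fin k) (Fin k) ℝ :=
  Real.sqrt n • ((1 / (n : ℝ)) •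
    (M.E12 n ω * (Matrix.diagonal (M.lam n ω) - z • 1)⁻¹ *
      Matrix.diagonal (fun α => Real.sqrt (M.lam n ω α)) * M.E21 n ω))

/-- `H_n(z)` in the block model. -/
def Hmat (M : BlockModel k γ p Ω P μ) (n : ℕ) (ω : Ω) (z : ℝ) : Matrix (Fin k) (Fin k) ℝ :=
  Real.sqrt n • ((1 / (n : ℝ)) •
      ((M.E21 n ω)ᵀ * (Matrix.diagonal (M.lam n ω) - z • 1)⁻¹ * M.E21 n ω)
    - (γ⁻¹ * mpStieltjes γ z) • 1)

/-- `R_n(z) = D_n + n^{-1/2} E₁₁ − n^{-1/2} E₁₂ (S₂₂ − z I)⁻¹ S₂₁`. -/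
def Rmat (M : BlockModel k γ p Ω P μ) (n : ℕ) (ω : Ω) (z : ℝ) : Matrix (Fin k) (Fin k) ℝ :=
  Matrix.diagonal (M.d n ω) + (1 / Real.sqrt n) • M.E11 n ω
    - (1 / Real.sqrt n) • (M.E12 n ω * (M.S22 n ω - z • 1)⁻¹ * M.S21 n ω)

/-- Euclidean norm of `x̃ = (x; −(S₂₂ − z I)⁻¹ S₂₁ x)`. -/
def xtNorm (M : BlockModel k γ p Ω P μ) (n : ℕ) (ω : Ω) (z : ℝ) (x : Fin k → ℝ) : ℝ :=
  Real.sqrt (∑ j, x j ^ 2 +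
    ∑ α, ((((M.S22 n ω - z • 1)⁻¹ * M.S21 n ω) *ᵥ x) α) ^ 2)

/-- First `k` components of the left singular vector: `y = R_n(z) x / ‖x̃‖₂`. -/
def yvec (M : BlockModel k γ p Ω P μ) (n : ℕ) (ω : Ω) (z : ℝ) (x : Fin k → ℝ) :
    Fin k → ℝ :=
  (M.xtNorm n ω z x)⁻¹ • (M.Rmat n ω z *ᵥ x)

end BlockModel

/-- The deterministic limit `T₀(z) = (1 + γ⁻¹ m(z))⁻¹ D² + m(z)⁻¹ I` of `T_n(z)`. -/
def T0lim {k : ℕ} (γ : ℝ) (μ : Fin k → ℝ) (z : ℝ) : Matrix (Fin k) (Fin k) ℝ :=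
  (1 + γ⁻¹ * mpStieltjes γ z)⁻¹ • Matrix.diagonal μ + (mpStieltjes γ z)⁻¹ • 1

/-! ### Poisson-type integrals -/

lemma sq_one_sub_abs_le_poisson_denom (s θ : ℝ) :
    (1 - |s|) ^ 2 ≤ 1 + s ^ 2 - 2 * s * Real.cos θ := by
  have : s * Real.cos θ ≤ |s| := by
    calc s * Real.cos θ ≤ |s * Real.cos θ| := le_abs_self _
      _ = |s| * |Real.cos θ| := abs_mul _ _
      _ ≤ |s| := mul_le_of_le_one_right (abs_nonneg s) (Real.abs_cos_le_one θ)
  nlinarith [sq_abs s]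

lemma poisson_denom_pos {s : ℝ} (hs : |s| < 1) (θ : ℝ) :
    0 < 1 + s ^ 2 - 2 * s * Real.cos θ :=
  (pow_pos (sub_pos.2 hs) 2).trans_le (sq_one_sub_abs_le_poisson_denom s θ)

lemma hasSum_pow_mul_sin {s : ℝ} (hs : |s| < 1) (θ : ℝ) :
    HasSum (fun k : ℕ => s ^ k * Real.sin ((k + 1) * θ))
      (Real.sin θ / (1 + s ^ 2 - 2 * s * Real.cos θ)) := by
  set e := Complex.exp (θ * Complex.I) with he
  have hre : e.re = Real.cos θ := Complex.exp_ofReal_mul_I_re θ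
  have him : e.im = Real.sin θ := Complex.exp_ofReal_mul_I_im θ
  have hnorm : ‖(s : ℂ) * e‖ < 1 := by
    rwa [norm_mul, Complex.norm_exp_ofReal_mul_I, mul_one, Complex.norm_real]
  convert Complex.hasSum_im ((hasSum_geometric_of_norm_lt_one hnorm).mul_left e) using 2 with k
  · have hpow : e * e ^ k = Complex.exp (((k + 1) * θ : ℝ) * Complex.I) := by
      rw [← pow_succ', he, ← Complex.exp_nat_mul]
      congr 1
      push_cast
      ring
    rw [mul_pow, mul_left_comm, hpow, ← Complex.ofReal_pow, Complex.im_ofReal_mul,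
      Complex.exp_ofReal_mul_I_im]
  · have hsq : Complex.normSq (1 - s * e) = 1 + s ^ 2 - 2 * s * Real.cos θ := by
      rw [Complex.normSq_apply]
      simp only [Complex.sub_re, Complex.one_re, Complex.re_ofReal_mul, Complex.sub_im,
        Complex.one_im, Complex.im_ofReal_mul, hre, him]
      linear_combination s ^ 2 * Real.sin_sq_add_cos_sq θ
    rw [Complex.mul_im, Complex.inv_im, Complex.inv_re, hsq]
    simp only [Complex.sub_re, Complex.one_re, Complex.re_ofReal_mul, Complex.sub_im,
      Complex.one_im, Complex.im_ofReal_mul, hre, him]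
    have := (poisson_denom_pos hs θ).ne'
    field_simp
    ring

lemma integral_sin_mul_sin_nat_succ (k : ℕ) :
    ∫ θ in (0 : ℝ)..Real.pi, Real.sin θ * Real.sin ((k + 1) * θ)
      = if k = 0 then Real.pi / 2 else 0 := by
  split_ifs with hk
  · simp [hk, ← sq, integral_sin_sq]
  · have hk0 : (k : ℝ) ≠ 0 := by exact_mod_cast hk
    have hk2 : (k + 2 : ℝ) ≠ 0 := by positivity
    have hprod (θ : ℝ) : Real.sin θ * Real.sin ((k + 1) * θ)
        = (Real.cos (k * θ) - Real.cos ((k + 2) * θ)) / 2 := by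
      have hsub : (k : ℝ) * θ = (k + 1) * θ - θ := by ring
      have hadd : (k + 2 : ℝ) * θ = (k + 1) * θ + θ := by ring
      rw [hsub, hadd, Real.cos_add, Real.cos_sub]
      ring
    have hsin : Real.sin ((k + 2) * Real.pi) = 0 := by exact_mod_cast Real.sin_nat_mul_pi (k + 2)
    simp_rw [hprod]
    rw [intervalIntegral.integral_div,
      intervalIntegral.integral_sub (Continuous.intervalIntegrable (by fun_prop) _ _)
        (Continuous.intervalIntegrable (by fun_prop) _ _),
      intervalIntegral.integral_comp_mul_left Real.cos hk0,
      intervalIntegral.integral_comp_mul_left Real.cos hk2]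
    simp [hsin]

-- Only the first term of the sine series contributes, so the value does not depend on `s`.
lemma integral_sin_sq_div_poisson_of_abs_lt {s : ℝ} (hs : |s| < 1) :
    ∫ θ in (0 : ℝ)..Real.pi, Real.sin θ ^ 2 / (1 + s ^ 2 - 2 * s * Real.cos θ) = Real.pi / 2 := by
  have hterm (k : ℕ) : ∫ θ in (0 : ℝ)..Real.pi, Real.sin θ * (s ^ k * Real.sin ((k + 1) * θ))
      = s ^ k * if k = 0 then Real.pi / 2 else 0 := by
    simp_rw [mul_left_comm (Real.sin _)]
    rw [intervalIntegral.integral_const_mul, integral_sin_mul_sin_nat_succ]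
  have hsum := intervalIntegral.hasSum_integral_of_dominated_convergence (a := 0) (b := Real.pi)
    (μ := volume) (F := fun (k : ℕ) θ => Real.sin θ * (s ^ k * Real.sin ((k + 1) * θ)))
    (f := fun θ => Real.sin θ ^ 2 / (1 + s ^ 2 - 2 * s * Real.cos θ)) (fun (k : ℕ) _ => |s| ^ k)
    (fun k => Continuous.aestronglyMeasurable (by fun_prop))
    (fun k => ae_of_all _ fun θ _ => ?_)
    (ae_of_all _ fun _ _ => summable_geometric_of_lt_one (abs_nonneg s) hs)
    intervalIntegrable_const
    (ae_of_all _ fun θ _ => ?_)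
  · simp_rw [hterm] at hsum
    refine hsum.unique ?_
    convert hasSum_single (0 : ℕ) fun k hk => ?_ using 1 <;> simp_all
  · rw [Real.norm_eq_abs, abs_mul, abs_mul, abs_pow]
    exact (mul_le_of_le_one_left (by positivity) (Real.abs_sin_le_one θ)).trans
      (mul_le_of_le_one_right (by positivity) (Real.abs_sin_le_one _))
  · simpa only [sq, mul_div_assoc] using (hasSum_pow_mul_sin hs θ).mul_left (Real.sin θ)

lemma integral_sin_sq_div_poisson {s : ℝ} (hs : -1 < s) (hs1 : s ≤ 1) :
    ∫ θ in (0 : ℝ)..Real.pi, Real.sin θ ^ 2 / (1 + s ^ 2 - 2 * s * Real.cos θ) = Real.pi / 2 := by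
  rcases hs1.lt_or_eq with h | rfl
  · exact integral_sin_sq_div_poisson_of_abs_lt (abs_lt.2 ⟨hs, h⟩)
  · have hcongr : ∫ θ in (0 : ℝ)..Real.pi, Real.sin θ ^ 2 / (1 + 1 ^ 2 - 2 * 1 * Real.cos θ)
        = ∫ θ in (0 : ℝ)..Real.pi, (1 + Real.cos θ) / 2 := by
      refine intervalIntegral.integral_congr_ae (ae_of_all _ fun θ hθ => ?_)
      rw [Set.uIoc_of_le Real.pi_pos.le] at hθ
      have hcos : Real.cos θ < 1 := by
        simpa using
          Real.strictAntiOn_cos (Set.left_mem_Icc.2 Real.pi_pos.le) ⟨hθ.1.le, hθ.2⟩ hθ.1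
      rw [div_eq_iff (by linarith), Real.sin_sq]
      ring
    rw [hcongr, intervalIntegral.integral_div, intervalIntegral.integral_add] <;> simp

lemma setIntegral_sin_sq_div_poisson {s : ℝ} (hs : -1 < s) (hs1 : s ≤ 1) :
    ∫ θ in Set.Ioo 0 Real.pi, Real.sin θ ^ 2 / (1 + s ^ 2 - 2 * s * Real.cos θ)
      = Real.pi / 2 := by
  rw [← integral_Ioc_eq_integral_Ioo, ← intervalIntegral.integral_of_le Real.pi_pos.le,
    integral_sin_sq_div_poisson hs hs1]

-- A non-integrable function would have integral `0`.
lemma integrableOn_sin_sq_div_poisson {s : ℝ} (hs : -1 < s) (hs1 : s ≤ 1) :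
    IntegrableOn (fun θ => Real.sin θ ^ 2 / (1 + s ^ 2 - 2 * s * Real.cos θ))
      (Set.Ioo 0 Real.pi) :=
  not_imp_comm.1 integral_undef <| by
    rw [setIntegral_sin_sq_div_poisson hs hs1]
    positivity

/-! ### The Stieltjes transform of the Marchenko–Pastur law -/

lemma aGamma_eq (γ : ℝ) : aGamma γ = (1 - √γ⁻¹) ^ 2 := by
  rw [aGamma, Real.sqrt_inv, one_div]

lemma bGamma_eq (γ : ℝ) : bGamma γ = (1 + √γ⁻¹) ^ 2 := by
  rw [bGamma, Real.sqrt_inv, one_div]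

lemma mpDensity_nonneg {γ : ℝ} (hγ : 0 ≤ γ) (t : ℝ) : 0 ≤ mpDensity γ t := by
  unfold mpDensity
  split_ifs with h
  · have : 0 ≤ t := (sq_nonneg _).trans h.1
    positivity
  · exact le_rfl

lemma measurable_mpDensity (γ : ℝ) : Measurable (mpDensity γ) :=
  Measurable.ite measurableSet_Icc (by fun_prop) measurable_const

lemma integral_mpMeasure {γ : ℝ} (hγ : 0 ≤ γ) (f : ℝ → ℝ) :
    ∫ t, f t ∂mpMeasure γ = ∫ t in Set.Ioo (aGamma γ) (bGamma γ),
      γ * √((bGamma γ - t) * (t - aGamma γ)) / (2 * Real.pi * t) * f t := by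
  rw [mpMeasure, integral_withDensity_eq_integral_toReal_smul
    (measurable_mpDensity γ).ennreal_ofReal (by simp), ← integral_Icc_eq_integral_Ioo,
    ← integral_indicator measurableSet_Icc]
  congr 1 with t
  rw [ENNReal.toReal_ofReal (mpDensity_nonneg hγ t), mpDensity, Set.indicator_apply]
  split_ifs <;> simp

/-- The substitution `t = 1 + s² - 2 s cos θ` that maps `[0, π]` onto the support
`[(1 - s)², (1 + s)²]` of the Marchenko–Pastur law with aspect ratio `s⁻²`. -/
def mpAngle (s θ : ℝ) : ℝ := 1 + s ^ 2 - 2 * s * Real.cos θ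

lemma hasDerivAt_mpAngle (s θ : ℝ) : HasDerivAt (mpAngle s) (2 * s * Real.sin θ) θ :=
  (((Real.hasDerivAt_cos θ).const_mul (2 * s)).const_sub (1 + s ^ 2)).congr_deriv (by ring)

lemma strictMonoOn_mpAngle {s : ℝ} (hs : 0 < s) :
    StrictMonoOn (mpAngle s) (Set.Icc 0 Real.pi) := fun x hx y hy hxy => by
  have := Real.strictAntiOn_cos hx hy hxy
  simp only [mpAngle]
  gcongr

lemma image_mpAngle_Ioo {s : ℝ} (hs : 0 < s) :
    mpAngle s '' Set.Ioo 0 Real.pi = Set.Ioo ((1 - s) ^ 2) ((1 + s) ^ 2) := by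
  have h0 : mpAngle s 0 = (1 - s) ^ 2 := by rw [mpAngle, Real.cos_zero]; ring
  have hπ : mpAngle s Real.pi = (1 + s) ^ 2 := by rw [mpAngle, Real.cos_pi]; ring
  have hcont : Continuous (mpAngle s) :=
    continuous_iff_continuousAt.2 fun θ => (hasDerivAt_mpAngle s θ).continuousAt
  rw [← h0, ← hπ]
  refine Set.Subset.antisymm ?_ (intermediate_value_Ioo Real.pi_pos.le hcont.continuousOn)
  rintro _ ⟨θ, hθ, rfl⟩
  have hmem := Set.Ioo_subset_Icc_self hθ
  exact ⟨strictMonoOn_mpAngle hs (Set.left_mem_Icc.2 Real.pi_pos.le) hmem hθ.1,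
    strictMonoOn_mpAngle hs hmem (Set.right_mem_Icc.2 Real.pi_pos.le) hθ.2⟩

lemma integral_mpMeasure_eq_integral_mpAngle {γ : ℝ} (hγ : 0 < γ) (f : ℝ → ℝ) :
    ∫ t, f t ∂mpMeasure γ = ∫ θ in Set.Ioo 0 Real.pi,
      2 / Real.pi * (Real.sin θ ^ 2 / mpAngle √γ⁻¹ θ) * f (mpAngle √γ⁻¹ θ) := by
  set s := √γ⁻¹ with hs
  have hs0 : 0 < s := Real.sqrt_pos.2 (inv_pos.2 hγ)
  have hγs : γ * s ^ 2 = 1 := by rw [hs, Real.sq_sqrt (inv_pos.2 hγ).le, mul_inv_cancel₀ hγ.ne']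
  rw [integral_mpMeasure hγ.le, aGamma_eq, bGamma_eq, ← hs, ← image_mpAngle_Ioo hs0,
    integral_image_eq_integral_abs_deriv_smul measurableSet_Ioo
      (fun θ _ => (hasDerivAt_mpAngle s θ).hasDerivWithinAt)
      ((strictMonoOn_mpAngle hs0).injOn.mono Set.Ioo_subset_Icc_self)]
  refine setIntegral_congr_fun measurableSet_Ioo fun θ hθ => ?_
  have hsin : 0 < Real.sin θ := Real.sin_pos_of_mem_Ioo hθ
  have hpos : 0 < 2 * s * Real.sin θ := by positivity
  have hradicand : ((1 + s) ^ 2 - mpAngle s θ) * (mpAngle s θ - (1 - s) ^ 2)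
      = (2 * s * Real.sin θ) ^ 2 := by
    rw [mpAngle]
    linear_combination (-4 * s ^ 2) * Real.sin_sq_add_cos_sq θ
  simp only [hradicand, Real.sqrt_sq hpos.le, abs_of_pos hpos, smul_eq_mul]
  calc 2 * s * Real.sin θ * (γ * (2 * s * Real.sin θ) / (2 * Real.pi * mpAngle s θ)
        * f (mpAngle s θ))
      = γ * s ^ 2 * (2 / Real.pi * (Real.sin θ ^ 2 / mpAngle s θ) * f (mpAngle s θ)) := by ring
    _ = _ := by rw [hγs, one_mul]

-- The factorization `z - t = (s / r) (1 + r² + 2 r cos θ)` splits the integrand into two Poisson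
-- kernels.
lemma mpStieltjes_eq_of_joukowski {γ r z : ℝ} (hγ : 1 ≤ γ) (hr0 : 0 < r) (hr1 : r < 1)
    (hz : z = 1 + √γ⁻¹ ^ 2 + √γ⁻¹ * (r + r⁻¹)) :
    mpStieltjes γ z = -(1 / z) * (1 + r / √γ⁻¹) := by
  rw [mpStieltjes, integral_mpMeasure_eq_integral_mpAngle (by linarith)]
  set s := √γ⁻¹
  have hs0 : 0 < s := Real.sqrt_pos.2 (by positivity)
  have hs1 : s ≤ 1 := Real.sqrt_le_one.2 (inv_le_one_of_one_le₀ hγ)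
  have hz0 : 0 < z := by rw [hz]; positivity
  have hsplit : Set.EqOn
      (fun θ => 2 / Real.pi * (Real.sin θ ^ 2 / mpAngle s θ) * (mpAngle s θ - z)⁻¹)
      (fun θ => -(2 / (Real.pi * z)) *
        (Real.sin θ ^ 2 / (1 + s ^ 2 - 2 * s * Real.cos θ)
          + r / s * (Real.sin θ ^ 2 / (1 + (-r) ^ 2 - 2 * (-r) * Real.cos θ))))
      (Set.Ioo 0 Real.pi) := fun θ hθ => by
    have ht0 : 0 < mpAngle s θ :=
      (sq_nonneg (1 - s)).trans_lt (image_mpAngle_Ioo hs0 ▸ Set.mem_image_of_mem _ hθ).1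
    have hd0 : 0 < 1 + (-r) ^ 2 - 2 * (-r) * Real.cos θ :=
      poisson_denom_pos (by rwa [abs_neg, abs_of_pos hr0]) θ
    have hdz : mpAngle s θ - z = -(s / r * (1 + (-r) ^ 2 - 2 * (-r) * Real.cos θ)) := by
      rw [hz, mpAngle]
      field_simp
      ring
    have hz' : z = mpAngle s θ + s / r * (1 + (-r) ^ 2 - 2 * (-r) * Real.cos θ) := by
      linarith
    simp only [hdz]
    change _ = -(2 / (Real.pi * z)) * (Real.sin θ ^ 2 / mpAngle s θ + _)
    generalize 1 + (-r) ^ 2 - 2 * (-r) * Real.cos θ = d at *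
    generalize mpAngle s θ = t at *
    subst hz'
    field_simp
    ring
  rw [setIntegral_congr_fun measurableSet_Ioo hsplit, integral_const_mul,
    integral_add (integrableOn_sin_sq_div_poisson (by linarith) hs1)
      ((integrableOn_sin_sq_div_poisson (by linarith) (by linarith)).const_mul _),
    integral_const_mul, setIntegral_sin_sq_div_poisson (by linarith) hs1,
    setIntegral_sin_sq_div_poisson (by linarith) (by linarith)]
  field_simp

/-- The inverse `y ↦ y - √(y² - 1)` of the Joukowski map `r ↦ (r + r⁻¹) / 2` on `(0, 1)`. -/
def joukowskiInv (y : ℝ) : ℝ := y - √(y ^ 2 - 1)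

lemma joukowskiInv_mul_conj {y : ℝ} (hy : 1 < y) : joukowskiInv y * (y + √(y ^ 2 - 1)) = 1 := by
  have : √(y ^ 2 - 1) ^ 2 = y ^ 2 - 1 := Real.sq_sqrt (by nlinarith)
  rw [joukowskiInv]
  linear_combination -this

lemma joukowskiInv_eq_inv {y : ℝ} (hy : 1 < y) : joukowskiInv y = (y + √(y ^ 2 - 1))⁻¹ :=
  eq_inv_of_mul_eq_one_left (joukowskiInv_mul_conj hy)

lemma joukowskiInv_pos {y : ℝ} (hy : 1 < y) : 0 < joukowskiInv y := by
  rw [joukowskiInv_eq_inv hy]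
  positivity

lemma joukowskiInv_lt_one {y : ℝ} (hy : 1 < y) : joukowskiInv y < 1 := by
  rw [joukowskiInv_eq_inv hy]
  exact inv_lt_one_of_one_lt₀ (hy.trans_le (le_add_of_nonneg_right (Real.sqrt_nonneg _)))

lemma joukowskiInv_add_inv {y : ℝ} (hy : 1 < y) : joukowskiInv y + (joukowskiInv y)⁻¹ = 2 * y := by
  nth_rw 2 [joukowskiInv_eq_inv hy]
  rw [inv_inv, joukowskiInv]
  ring

/-- The limit `φ(z) = -γ⁻¹ m(z)` of the normalized resolvent traces `(1/n) tr (z - WᵀW/n)⁻¹`. -/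
def mpTrace (γ z : ℝ) : ℝ := -(γ⁻¹ * mpStieltjes γ z)

lemma one_lt_of_bGamma_lt {γ z : ℝ} (hγ : 0 < γ) (hz : bGamma γ < z) :
    1 < (z - 1 - γ⁻¹) / (2 * √γ⁻¹) := by
  have hs : 0 < √γ⁻¹ := Real.sqrt_pos.2 (inv_pos.2 hγ)
  rw [bGamma_eq] at hz
  rw [lt_div_iff₀ (by positivity)]
  nlinarith [Real.sq_sqrt (inv_pos.2 hγ).le]

lemma bGamma_nonneg (γ : ℝ) : 0 ≤ bGamma γ := sq_nonneg _

section MpTrace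

variable {γ z : ℝ}

lemma exists_joukowski_mpTrace (hγ : 1 ≤ γ) (hz : bGamma γ < z) :
    ∃ r, 0 < r ∧ r < 1 ∧ z = 1 + √γ⁻¹ ^ 2 + √γ⁻¹ * (r + r⁻¹) ∧
      r = joukowskiInv ((z - 1 - γ⁻¹) / (2 * √γ⁻¹)) ∧ mpTrace γ z = √γ⁻¹ * r / (1 + √γ⁻¹ * r) := by
  have : 0 < √γ⁻¹ := Real.sqrt_pos.2 (by positivity)
  have hs2 : √γ⁻¹ ^ 2 = γ⁻¹ := Real.sq_sqrt (by positivity)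
  have hy := one_lt_of_bGamma_lt (by positivity) hz
  have hr0 := joukowskiInv_pos hy
  have hr1 := joukowskiInv_lt_one hy
  have hrr := joukowskiInv_add_inv hy
  generalize joukowskiInv ((z - 1 - γ⁻¹) / (2 * √γ⁻¹)) = r at *
  have hzr : z = 1 + √γ⁻¹ ^ 2 + √γ⁻¹ * (r + r⁻¹) := by
    rw [hrr, hs2]
    field_simp
    ring
  refine ⟨r, hr0, hr1, hzr, rfl, ?_⟩
  have hfac : z = (1 + √γ⁻¹ * r) * (r + √γ⁻¹) / r := by
    rw [hzr]
    field_simp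
    ring
  rw [mpTrace, mpStieltjes_eq_of_joukowski hγ hr0 hr1 hzr, hfac]
  nth_rw 1 [← hs2]
  field_simp
  ring

lemma mpTrace_pos (hγ : 1 ≤ γ) (hz : bGamma γ < z) : 0 < mpTrace γ z := by
  obtain ⟨r, hr0, -, -, -, h⟩ := exists_joukowski_mpTrace hγ hz
  have : 0 < √γ⁻¹ := Real.sqrt_pos.2 (by positivity)
  rw [h]
  positivity

lemma mpTrace_lt (hγ : 1 ≤ γ) (hz : bGamma γ < z) : mpTrace γ z < √γ⁻¹ / (1 + √γ⁻¹) := by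
  obtain ⟨r, hr0, hr1, -, -, h⟩ := exists_joukowski_mpTrace hγ hz
  have : 0 < √γ⁻¹ := Real.sqrt_pos.2 (by positivity)
  rw [h, div_lt_div_iff₀ (by positivity) (by positivity)]
  nlinarith

lemma mpTrace_lt_one (hγ : 1 ≤ γ) (hz : bGamma γ < z) : mpTrace γ z < 1 :=
  (mpTrace_lt hγ hz).trans ((div_lt_one (by positivity)).2 (lt_one_add _))

lemma continuousAt_mpTrace (hγ : 1 ≤ γ) (hz : bGamma γ < z) : ContinuousAt (mpTrace γ) z := by
  have hden (x : ℝ) (hx : bGamma γ < x) :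
      1 + √γ⁻¹ * joukowskiInv ((x - 1 - γ⁻¹) / (2 * √γ⁻¹)) ≠ 0 := by
    have := joukowskiInv_pos (one_lt_of_bGamma_lt (by positivity) hx)
    positivity
  have hform : mpTrace γ =ᶠ[𝓝 z] fun x =>
      √γ⁻¹ * joukowskiInv ((x - 1 - γ⁻¹) / (2 * √γ⁻¹))
        / (1 + √γ⁻¹ * joukowskiInv ((x - 1 - γ⁻¹) / (2 * √γ⁻¹))) := by
    filter_upwards [lt_mem_nhds hz] with x hx
    obtain ⟨r, -, -, -, rfl, h⟩ := exists_joukowski_mpTrace hγ hx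
    exact h
  have hcont : Continuous joukowskiInv := by
    unfold joukowskiInv
    fun_prop
  refine ContinuousAt.congr ?_ hform.symm
  exact ContinuousAt.div (by fun_prop) (by fun_prop) (hden z hz)

end MpTrace

/-- The left side of the quadratic equation `(1 - x) (z x - c) - x = 0` satisfied by the limit `x`
of the normalized resolvent traces at `z`, where `c` is the limiting dimension ratio. -/
def mpPoly (c z x : ℝ) : ℝ := (1 - x) * (z * x - c) - x

lemma mpPoly_mpTrace {γ z : ℝ} (hγ : 1 ≤ γ) (hz : bGamma γ < z) :
    mpPoly γ⁻¹ z (mpTrace γ z) = 0 := by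
  obtain ⟨r, hr0, -, hzr, -, h⟩ := exists_joukowski_mpTrace hγ hz
  have hs0 : 0 < √γ⁻¹ := Real.sqrt_pos.2 (by positivity)
  have hs2 : √γ⁻¹ ^ 2 = γ⁻¹ := Real.sq_sqrt (by positivity)
  rw [h, mpPoly, hzr]
  generalize √γ⁻¹ = s at *
  rw [← hs2]
  field_simp
  ring

lemma mpPoly_threshold_pos {γ z : ℝ} (hγ : 0 < γ) (hz : bGamma γ < z) :
    0 < mpPoly γ⁻¹ z (√γ⁻¹ / (1 + √γ⁻¹)) := by
  rw [bGamma_eq] at hz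
  have hs0 : 0 < √γ⁻¹ := Real.sqrt_pos.2 (by positivity)
  have hs2 : √γ⁻¹ ^ 2 = γ⁻¹ := Real.sq_sqrt (by positivity)
  have hval : mpPoly γ⁻¹ z (√γ⁻¹ / (1 + √γ⁻¹))
      = √γ⁻¹ / (1 + √γ⁻¹) ^ 2 * (z - (1 + √γ⁻¹) ^ 2) := by
    rw [mpPoly]
    generalize √γ⁻¹ = s at *
    rw [← hs2]
    field_simp
    ring
  rw [hval]
  exact mul_pos (by positivity) (sub_pos.2 hz)

/-! ### Concentration of Gaussian quadratic forms -/

/-- The standard Gaussian measure on `ι → ℝ`: the law of a vector of iid `N(0, 1)` coordinates. -/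
abbrev gaussianPi (ι : Type*) [Fintype ι] : Measure (ι → ℝ) :=
  Measure.pi fun _ : ι => gaussianReal 0 1

lemma gaussianPDFReal_mul_exp_sq (a x : ℝ) :
    gaussianPDFReal 0 1 x * Real.exp (a * (x ^ 2 - 1))
      = (√(2 * Real.pi))⁻¹ * Real.exp (-a) * Real.exp (-(1 / 2 - a) * x ^ 2) := by
  simp only [gaussianPDFReal, NNReal.coe_one, mul_one, sub_zero]
  rw [mul_assoc, mul_assoc, ← Real.exp_add, ← Real.exp_add]
  congr 2
  ring

lemma integrable_gaussianReal_iff {m : ℝ} {v : NNReal} (hv : v ≠ 0) {f : ℝ → ℝ} :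
    Integrable f (gaussianReal m v) ↔ Integrable fun x => gaussianPDFReal m v x * f x := by
  rw [gaussianReal_of_var_ne_zero _ hv,
    integrable_withDensity_iff_integrable_smul' (measurable_gaussianPDF m v)
      (ae_of_all _ fun x => gaussianPDF_lt_top)]
  simp_rw [toReal_gaussianPDF, smul_eq_mul]

lemma integrable_exp_mul_sq_sub_one {a : ℝ} (ha : a < 1 / 2) :
    Integrable (fun x : ℝ => Real.exp (a * (x ^ 2 - 1))) (gaussianReal 0 1) := by
  simp_rw [integrable_gaussianReal_iff one_ne_zero, gaussianPDFReal_mul_exp_sq]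
  exact (integrable_exp_neg_mul_sq (by linarith)).const_mul _

lemma integral_exp_mul_sq_sub_one {a : ℝ} (ha : a < 1 / 2) :
    ∫ x, Real.exp (a * (x ^ 2 - 1)) ∂gaussianReal 0 1 = Real.exp (-a) * √(1 - 2 * a)⁻¹ := by
  rw [integral_gaussianReal_eq_integral_smul one_ne_zero]
  simp_rw [smul_eq_mul, gaussianPDFReal_mul_exp_sq]
  have hdiv : Real.pi / (1 / 2 - a) = 2 * Real.pi * (1 - 2 * a)⁻¹ := by
    have : 1 / 2 - a ≠ 0 := by linarith
    have : 1 - 2 * a ≠ 0 := by linarith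
    field_simp
  have hc : √(2 * Real.pi) ≠ 0 := by positivity
  rw [integral_const_mul, integral_gaussian, hdiv, Real.sqrt_mul (by positivity) (1 - 2 * a)⁻¹]
  field_simp

lemma integral_exp_mul_sq_sub_one_le {a : ℝ} (ha : |a| ≤ 1 / 4) :
    ∫ x, Real.exp (a * (x ^ 2 - 1)) ∂gaussianReal 0 1 ≤ Real.exp (4 * a ^ 2) := by
  have ha' : a ≤ 1 / 4 := le_of_abs_le ha
  have hsqrt : √(1 - 2 * a)⁻¹ ≤ Real.exp (a + 4 * a ^ 2) := by
    refine Real.sqrt_le_iff.2 ⟨(Real.exp_pos _).le, ?_⟩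
    have hexp : 2 * (a + 4 * a ^ 2) + 1 ≤ Real.exp (a + 4 * a ^ 2) ^ 2 := by
      rw [← Real.exp_nat_mul, Nat.cast_ofNat]
      exact Real.add_one_le_exp _
    refine ((inv_le_iff_one_le_mul₀ (by linarith)).2 ?_).trans hexp
    nlinarith [mul_nonneg (sq_nonneg a) (by linarith : (0 : ℝ) ≤ 1 - 4 * a)]
  calc ∫ x, Real.exp (a * (x ^ 2 - 1)) ∂gaussianReal 0 1
      = Real.exp (-a) * √(1 - 2 * a)⁻¹ := integral_exp_mul_sq_sub_one (by linarith)
    _ ≤ Real.exp (-a) * Real.exp (a + 4 * a ^ 2) := by gcongr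
    _ = Real.exp (4 * a ^ 2) := by rw [← Real.exp_add, neg_add_cancel_left]

lemma abs_mul_le_of_abs_le_one {s b c : ℝ} (hs : |s| ≤ c) (hb : |b| ≤ 1) : |s * b| ≤ c := by
  rw [abs_mul]
  exact (mul_le_of_le_one_right (abs_nonneg s) hb).trans hs

section WeightedSq

variable {ι : Type*} [Fintype ι] {s : ℝ} {b : ι → ℝ}

lemma exp_mul_sum_sq_sub_one (s : ℝ) (b y : ι → ℝ) :
    Real.exp (s * ∑ i, b i * (y i ^ 2 - 1)) = ∏ i, Real.exp (s * b i * (y i ^ 2 - 1)) := by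
  simp_rw [Finset.mul_sum, Real.exp_sum, mul_assoc]

lemma integrable_exp_mul_sum_sq_sub_one (hs : |s| ≤ 1 / 4) (hb : ∀ i, |b i| ≤ 1) :
    Integrable (fun y : ι → ℝ => Real.exp (s * ∑ i, b i * (y i ^ 2 - 1))) (gaussianPi ι) := by
  simp_rw [exp_mul_sum_sq_sub_one]
  refine Integrable.fintype_prod (f := fun i x => Real.exp (s * b i * (x ^ 2 - 1))) fun i => ?_
  exact integrable_exp_mul_sq_sub_one
    ((le_of_abs_le (abs_mul_le_of_abs_le_one hs (hb i))).trans_lt (by norm_num))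

lemma integral_exp_mul_sum_sq_sub_one_le (hs : |s| ≤ 1 / 4) (hb : ∀ i, |b i| ≤ 1) :
    ∫ y, Real.exp (s * ∑ i, b i * (y i ^ 2 - 1)) ∂gaussianPi ι
      ≤ Real.exp (4 * s ^ 2 * Fintype.card ι) := by
  simp_rw [exp_mul_sum_sq_sub_one]
  rw [integral_fintype_prod_eq_prod (f := fun i x => Real.exp (s * b i * (x ^ 2 - 1)))]
  calc ∏ i, ∫ x, Real.exp (s * b i * (x ^ 2 - 1)) ∂gaussianReal 0 1
      ≤ ∏ _i : ι, Real.exp (4 * s ^ 2) := by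
        refine Finset.prod_le_prod (fun i _ => integral_nonneg fun x => (Real.exp_pos _).le)
          fun i _ => ?_
        refine (integral_exp_mul_sq_sub_one_le (abs_mul_le_of_abs_le_one hs (hb i))).trans
          (Real.exp_le_exp.2 ?_)
        rw [mul_pow]
        gcongr
        exact mul_le_of_le_one_right (sq_nonneg s) ((sq_le_one_iff_abs_le_one _).2 (hb i))
    _ = Real.exp (4 * s ^ 2 * Fintype.card ι) := by
        rw [Finset.prod_const, ← Real.exp_nat_mul, Finset.card_univ, mul_comm]

lemma gaussianPi_sum_sq_sub_one_ge_le (τ : ℝ) (hs0 : 0 ≤ s) (hs : s ≤ 1 / 4)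
    (hb : ∀ i, |b i| ≤ 1) :
    gaussianPi ι {y | τ ≤ ∑ i, b i * (y i ^ 2 - 1)}
      ≤ ENNReal.ofReal (Real.exp (-s * τ + 4 * s ^ 2 * Fintype.card ι)) := by
  have hs' : |s| ≤ 1 / 4 := by rwa [abs_of_nonneg hs0]
  rw [← ofReal_measureReal, Real.exp_add]
  refine ENNReal.ofReal_le_ofReal
    ((measure_ge_le_exp_mul_mgf τ hs0 (integrable_exp_mul_sum_sq_sub_one hs' hb)).trans ?_)
  gcongr
  exact integral_exp_mul_sum_sq_sub_one_le hs' hb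

end WeightedSq

section Eigenbasis

variable {ι : Type*} [Fintype ι] [DecidableEq ι] {B : Matrix ι ι ℝ} (hB : B.IsHermitian)

lemma map_sum_smul_eigenvectorBasis_gaussianPi :
    (gaussianPi ι).map (fun y => ∑ i, y i • (hB.eigenvectorBasis i).ofLp) = gaussianPi ι := by
  have hlaw := congrArg (Measure.map WithLp.ofLp)
    (map_pi_eq_stdGaussian.trans (stdGaussian_eq_map_pi_orthonormalBasis hB.eigenvectorBasis))
  have hid : (WithLp.ofLp ∘ WithLp.toLp 2 : (ι → ℝ) → ι → ℝ) = id := rfl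
  rw [Measure.map_map (by fun_prop) (by fun_prop), Measure.map_map (by fun_prop) (by fun_prop),
    hid, Measure.map_id] at hlaw
  convert hlaw.symm using 2
  ext y j
  simp

lemma dotProduct_eigenvectorBasis (i j : ι) :
    (hB.eigenvectorBasis i).ofLp ⬝ᵥ (hB.eigenvectorBasis j).ofLp = if i = j then 1 else 0 := by
  rw [← hB.eigenvectorBasis.inner_eq_ite i j, EuclideanSpace.inner_eq_star_dotProduct,
    dotProduct_comm, star_trivial]

lemma dotProduct_mulVec_sum_smul_eigenvectorBasis (y : ι → ℝ) :
    (∑ i, y i • (hB.eigenvectorBasis i).ofLp) ⬝ᵥ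
      B *ᵥ (∑ i, y i • (hB.eigenvectorBasis i).ofLp) = ∑ i, hB.eigenvalues i * y i ^ 2 := by
  rw [Matrix.mulVec_sum]
  simp_rw [Matrix.mulVec_smul, hB.mulVec_eigenvectorBasis, sum_dotProduct, dotProduct_sum,
    smul_dotProduct, dotProduct_smul, dotProduct_eigenvectorBasis]
  refine Finset.sum_congr rfl fun i _ => ?_
  simp only [smul_eq_mul, mul_ite, mul_one, mul_zero, Finset.sum_ite_eq, Finset.mem_univ, if_true]
  ring

lemma dotProduct_mulVec_eigenvectorBasis (i : ι) :
    (hB.eigenvectorBasis i).ofLp ⬝ᵥ B *ᵥ (hB.eigenvectorBasis i).ofLp = hB.eigenvalues i := by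
  rw [hB.mulVec_eigenvectorBasis, dotProduct_smul, dotProduct_eigenvectorBasis, if_pos rfl,
    smul_eq_mul, mul_one]

end Eigenbasis

-- A Hanson–Wright bound: in the eigenbasis the centered quadratic form is a weighted sum of
-- independent centered `χ²₁` variables.
lemma gaussianPi_abs_quadForm_sub_trace_ge_le {ι : Type*} [Fintype ι] {B : Matrix ι ι ℝ}
    (hB : B.IsHermitian) (hbd : ∀ x : ι → ℝ, |x ⬝ᵥ B *ᵥ x| ≤ x ⬝ᵥ x) (τ : ℝ) {s : ℝ}
    (hs0 : 0 ≤ s) (hs : s ≤ 1 / 4) :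
    gaussianPi ι {x | τ ≤ |x ⬝ᵥ B *ᵥ x - B.trace|}
      ≤ ENNReal.ofReal (2 * Real.exp (-s * τ + 4 * s ^ 2 * Fintype.card ι)) := by
  classical
  have hb (i : ι) : |hB.eigenvalues i| ≤ 1 := by
    simpa only [dotProduct_mulVec_eigenvectorBasis, dotProduct_eigenvectorBasis, if_pos] using
      hbd (hB.eigenvectorBasis i).ofLp
  have hmeas : MeasurableSet {x : ι → ℝ | τ ≤ |x ⬝ᵥ B *ᵥ x - B.trace|} :=
    measurableSet_le measurable_const (Continuous.measurable (by fun_prop))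
  have hcenter (y : ι → ℝ) : ∑ i, hB.eigenvalues i * y i ^ 2 - B.trace
      = ∑ i, hB.eigenvalues i * (y i ^ 2 - 1) := by
    simp only [hB.trace_eq_sum_eigenvalues, RCLike.ofReal_real_eq_id, id, mul_sub, mul_one,
      Finset.sum_sub_distrib]
  have hsub : (fun y : ι → ℝ => ∑ i, y i • (hB.eigenvectorBasis i).ofLp) ⁻¹'
      {x | τ ≤ |x ⬝ᵥ B *ᵥ x - B.trace|}
      ⊆ {y | τ ≤ ∑ i, hB.eigenvalues i * (y i ^ 2 - 1)} ∪
        {y | τ ≤ ∑ i, -hB.eigenvalues i * (y i ^ 2 - 1)} := fun y hy => by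
    simpa only [Set.mem_preimage, Set.mem_ofPred_eq, Set.mem_union, neg_mul,
      dotProduct_mulVec_sum_smul_eigenvectorBasis, hcenter, Finset.sum_neg_distrib,
      le_abs] using hy
  rw [← map_sum_smul_eigenvectorBasis_gaussianPi hB, Measure.map_apply (by fun_prop) hmeas,
    two_mul, ENNReal.ofReal_add (by positivity) (by positivity)]
  exact (measure_mono hsub).trans <| (measure_union_le _ _).trans <|
    add_le_add (gaussianPi_sum_sq_sub_one_ge_le τ hs0 hs hb)
      (gaussianPi_sum_sq_sub_one_ge_le τ hs0 hs fun i => by rw [abs_neg]; exact hb i)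

/-! ### Gaussian integration by parts and Slepian's comparison inequality -/

lemma measurePreserving_update_pi {ι : Type*} [Fintype ι] [DecidableEq ι] {X : ι → Type*}
    [∀ i, MeasurableSpace (X i)] (μ : ∀ i, Measure (X i)) [∀ i, IsProbabilityMeasure (μ i)]
    (l : ι) : MeasurePreserving (fun q : (∀ i, X i) × X l => Function.update q.1 l q.2)
      ((Measure.pi μ).prod (μ l)) (Measure.pi μ) := by
  have hmeas : Measurable fun q : (∀ i, X i) × X l => Function.update q.1 l q.2 :=
    measurable_update'
  refine ⟨hmeas, (Measure.pi_eq fun s hs => ?_).symm⟩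
  have hpre : (fun q : (∀ i, X i) × X l => Function.update q.1 l q.2) ⁻¹' Set.univ.pi s
      = Set.univ.pi (Function.update s l Set.univ) ×ˢ s l := by
    ext q
    simp only [Set.mem_preimage, Set.mem_univ_pi, Set.mem_prod]
    constructor
    · refine fun h => ⟨fun i => ?_, by simpa using h l⟩
      rcases eq_or_ne i l with rfl | hi
      · simp
      · simpa [hi] using h i
    · rintro ⟨h, hl⟩ i
      rcases eq_or_ne i l with rfl | hi
      · simpa using hl
      · simpa [hi] using h i
  rw [Measure.map_apply hmeas (MeasurableSet.univ_pi hs), hpre, Measure.prod_prod, Measure.pi_pi,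
    ← Finset.mul_prod_erase _ _ (Finset.mem_univ l), ← Finset.mul_prod_erase _ _
    (Finset.mem_univ l), Function.update_self, measure_univ, one_mul, mul_comm]
  congr 1
  exact Finset.prod_congr rfl fun i hi => by rw [Function.update_of_ne (Finset.ne_of_mem_erase hi)]

section Resample

variable {ι : Type*} [Fintype ι] [DecidableEq ι] {X : ι → Type*} [∀ i, MeasurableSpace (X i)]
  {μ : ∀ i, Measure (X i)} [∀ i, IsProbabilityMeasure (μ i)] {f : (∀ i, X i) → ℝ}

lemma integral_pi_eq_integral_integral_update (hf : Integrable f (Measure.pi μ)) (l : ι) :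
    ∫ x, f x ∂Measure.pi μ = ∫ x, ∫ t, f (Function.update x l t) ∂μ l ∂Measure.pi μ := by
  have hmp := measurePreserving_update_pi μ l
  calc ∫ x, f x ∂Measure.pi μ = ∫ q, f (Function.update q.1 l q.2) ∂(Measure.pi μ).prod (μ l) := by
        have hmap := integral_map hmp.measurable.aemeasurable
          (hmp.map_eq.symm ▸ hf.aestronglyMeasurable)
        rwa [hmp.map_eq] at hmap
    _ = ∫ x, ∫ t, f (Function.update x l t) ∂μ l ∂Measure.pi μ :=
        integral_prod (fun q => f (Function.update q.1 l q.2))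
          (hmp.integrable_comp_of_integrable hf)

lemma ae_integrable_update (hf : Integrable f (Measure.pi μ)) (l : ι) :
    ∀ᵐ x ∂Measure.pi μ, Integrable (fun t => f (Function.update x l t)) (μ l) :=
  ((measurePreserving_update_pi μ l).integrable_comp_of_integrable hf).prod_right_ae

end Resample

lemma hasDerivAt_gaussianPDFReal_std (x : ℝ) :
    HasDerivAt (gaussianPDFReal 0 1) (-x * gaussianPDFReal 0 1 x) x := by
  have hpdf : gaussianPDFReal 0 1
      = fun x : ℝ => (√(2 * Real.pi))⁻¹ * Real.exp (-x ^ 2 / 2) := by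
    ext x
    simp [gaussianPDFReal]
  have hexp : HasDerivAt (fun x : ℝ => -x ^ 2 / 2) (-x) x :=
    ((hasDerivAt_pow 2 x).neg.div_const 2).congr_deriv (by push_cast; ring)
  rw [hpdf]
  exact (hexp.exp.const_mul _).congr_deriv (by ring)

lemma integral_mul_gaussianReal_eq_integral_deriv {f f' : ℝ → ℝ}
    (hd : ∀ x, HasDerivAt f (f' x) x) (hf : Integrable f (gaussianReal 0 1))
    (hxf : Integrable (fun x => x * f x) (gaussianReal 0 1))
    (hf' : Integrable f' (gaussianReal 0 1)) :
    ∫ x, x * f x ∂gaussianReal 0 1 = ∫ x, f' x ∂gaussianReal 0 1 := by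
  rw [integrable_gaussianReal_iff one_ne_zero] at hf hxf hf'
  have hparts := integral_mul_deriv_eq_deriv_mul_of_integrable
    (u := gaussianPDFReal 0 1) (v := f) (v' := f') (u' := fun x => -x * gaussianPDFReal 0 1 x)
    (fun x _ => hasDerivAt_gaussianPDFReal_std x) (fun x _ => hd x) hf'
    (hxf.neg.congr (ae_of_all _ fun x => by simp only [Pi.neg_apply, Pi.mul_apply]; ring)) hf
  rw [integral_gaussianReal_eq_integral_smul one_ne_zero,
    integral_gaussianReal_eq_integral_smul one_ne_zero]
  simp only [smul_eq_mul, hparts, ← integral_neg]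
  congr 1 with x
  ring

section Stein

variable {ι : Type*} [Fintype ι]

lemma integrable_eval_gaussianPi (l : ι) : Integrable (fun x : ι → ℝ => x l) (gaussianPi ι) :=
  integrable_comp_eval (μ := fun _ : ι => gaussianReal 0 1) (i := l) (f := fun x : ℝ => x)
    ((memLp_id_gaussianReal 1).integrable (by simp))

lemma integrable_dotProduct_gaussianPi (w : ι → ℝ) :
    Integrable (fun x : ι → ℝ => w ⬝ᵥ x) (gaussianPi ι) := by
  simp only [dotProduct]
  exact integrable_finsetSum _ fun l _ => (integrable_eval_gaussianPi l).const_mul _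

variable [DecidableEq ι] {f : (ι → ℝ) → ℝ} {f' : (ι → ℝ) → (ι → ℝ) →L[ℝ] ℝ}

lemma integral_eval_mul_gaussianPi (hd : ∀ x, HasFDerivAt f (f' x) x)
    (hf : Integrable f (gaussianPi ι)) (l : ι)
    (hxf : Integrable (fun x => x l * f x) (gaussianPi ι))
    (hf' : Integrable (fun x => f' x (Pi.single l 1)) (gaussianPi ι)) :
    ∫ x, x l * f x ∂gaussianPi ι = ∫ x, f' x (Pi.single l 1) ∂gaussianPi ι := by
  rw [integral_pi_eq_integral_integral_update hxf l, integral_pi_eq_integral_integral_update hf' l]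
  refine integral_congr_ae ?_
  filter_upwards [ae_integrable_update hf l, ae_integrable_update hxf l,
    ae_integrable_update hf' l] with x hx hxf hx'
  simp only [Function.update_self] at hxf ⊢
  exact integral_mul_gaussianReal_eq_integral_deriv
    (fun t => (hd _).comp_hasDerivAt t (hasDerivAt_update x l t)) hx hxf hx'

lemma integral_dotProduct_mul_gaussianPi (hd : ∀ x, HasFDerivAt f (f' x) x) {C : ℝ}
    (hf : ∀ x, |f x| ≤ C)
    (hf' : ∀ l, Integrable (fun x => f' x (Pi.single l 1)) (gaussianPi ι)) (w : ι → ℝ) :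
    ∫ x, (w ⬝ᵥ x) * f x ∂gaussianPi ι = ∫ x, f' x w ∂gaussianPi ι := by
  have hcont : Continuous f := continuous_iff_continuousAt.2 fun x => (hd x).continuousAt
  have hxf (l : ι) : Integrable (fun x : ι → ℝ => x l * f x) (gaussianPi ι) :=
    (integrable_eval_gaussianPi l).mul_bdd (c := C) hcont.aestronglyMeasurable (ae_of_all _ hf)
  have hint : Integrable f (gaussianPi ι) :=
    Integrable.of_bound hcont.aestronglyMeasurable C (ae_of_all _ hf)
  calc ∫ x, (w ⬝ᵥ x) * f x ∂gaussianPi ι = ∑ l, w l * ∫ x, x l * f x ∂gaussianPi ι := by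
        simp_rw [dotProduct, Finset.sum_mul, mul_assoc]
        rw [integral_finsetSum _ fun l _ => (hxf l).const_mul _]
        simp_rw [integral_const_mul]
    _ = ∑ l, w l * ∫ x, f' x (Pi.single l 1) ∂gaussianPi ι := by
        simp_rw [integral_eval_mul_gaussianPi hd hint _ (hxf _) (hf' _)]
    _ = ∫ x, f' x w ∂gaussianPi ι := by
        simp_rw [← integral_const_mul]
        rw [← integral_finsetSum _ fun l _ => (hf' l).const_mul _]
        congr 1 with x
        conv_rhs => rw [pi_eq_sum_univ' w, map_sum]
        simp only [map_smul, smul_eq_mul]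

end Stein

/-- The distribution function `∏ exp (-exp (-yᵢ))` of independent Gumbel variables at `y = -x`: a
smooth surrogate for the indicator of `{max xᵢ < 0}`. -/
def gumbel {T : Type*} [Fintype T] (x : T → ℝ) : ℝ := Real.exp (-∑ i, Real.exp (x i))

section Gumbel

variable {T : Type*} [Fintype T]

lemma gumbel_pos (x : T → ℝ) : 0 < gumbel x := Real.exp_pos _

lemma gumbel_le_one (x : T → ℝ) : gumbel x ≤ 1 :=
  Real.exp_le_one_iff.2 (neg_nonpos.2 (Finset.sum_nonneg fun _ _ => (Real.exp_pos _).le))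

lemma exp_le_sum_exp (x : T → ℝ) (i : T) : Real.exp (x i) ≤ ∑ i, Real.exp (x i) :=
  Finset.single_le_sum (f := fun i => Real.exp (x i)) (fun _ _ => (Real.exp_pos _).le)
    (Finset.mem_univ i)

lemma gumbel_le_of_le {x : T → ℝ} {r : ℝ} {i : T} (hi : r ≤ x i) :
    gumbel x ≤ Real.exp (-Real.exp r) :=
  Real.exp_le_exp.2 (neg_le_neg ((Real.exp_le_exp.2 hi).trans (exp_le_sum_exp x i)))

lemma one_sub_card_mul_exp_le_gumbel {x : T → ℝ} {r : ℝ} (hx : ∀ i, x i ≤ r) :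
    1 - Fintype.card T * Real.exp r ≤ gumbel x := by
  have hsum : ∑ i, Real.exp (x i) ≤ Fintype.card T * Real.exp r := by
    simpa using Finset.sum_le_card_nsmul Finset.univ (fun i => Real.exp (x i)) (Real.exp r)
      fun i _ => Real.exp_le_exp.2 (hx i)
  exact (sub_le_sub_left hsum 1).trans (Real.one_sub_le_exp_neg _)

lemma abs_exp_mul_gumbel_le (x : T → ℝ) (i : T) : |Real.exp (x i) * gumbel x| ≤ 1 := by
  rw [abs_of_pos (mul_pos (Real.exp_pos _) (gumbel_pos x)), gumbel, Real.exp_neg,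
    ← div_eq_mul_inv, div_le_one (Real.exp_pos _)]
  linarith [Real.add_one_le_exp (∑ i, Real.exp (x i)), exp_le_sum_exp x i]

lemma abs_exp_mul_exp_mul_gumbel_le (x : T → ℝ) (i j : T) :
    |Real.exp (x i) * Real.exp (x j) * gumbel x| ≤ 2 := by
  have h0 : 0 ≤ ∑ i, Real.exp (x i) := (Real.exp_pos _).le.trans (exp_le_sum_exp x i)
  have hprod := mul_le_mul (exp_le_sum_exp x i) (exp_le_sum_exp x j) (Real.exp_pos _).le h0
  rw [abs_of_pos (mul_pos (by positivity) (gumbel_pos x)), gumbel, Real.exp_neg,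
    ← div_eq_mul_inv, div_le_iff₀ (Real.exp_pos _)]
  linarith [Real.quadratic_le_exp_of_nonneg h0]

@[fun_prop]
lemma continuous_gumbel : Continuous (gumbel : (T → ℝ) → ℝ) := by
  unfold gumbel
  fun_prop

lemma hasFDerivAt_gumbel (x : T → ℝ) : HasFDerivAt gumbel
    (-∑ i, (Real.exp (x i) * gumbel x) • ContinuousLinearMap.proj (R := ℝ) (φ := fun _ => ℝ) i)
    x := by
  unfold gumbel
  refine (HasFDerivAt.fun_sum (u := Finset.univ) fun i _ =>
    (hasFDerivAt_apply i x).exp).fun_neg.exp.congr_fderiv ?_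
  simp only [smul_neg, Finset.smul_sum, smul_smul, mul_comm]

lemma hasFDerivAt_exp_mul_gumbel (x : T → ℝ) (i : T) :
    HasFDerivAt (fun x => Real.exp (x i) * gumbel x)
      ((Real.exp (x i) * gumbel x) • ContinuousLinearMap.proj (R := ℝ) (φ := fun _ => ℝ) i
        - ∑ j, (Real.exp (x i) * Real.exp (x j) * gumbel x) •
          ContinuousLinearMap.proj (R := ℝ) (φ := fun _ => ℝ) j) x := by
  refine ((hasFDerivAt_apply i x).exp.mul (hasFDerivAt_gumbel x)).congr_fderiv ?_
  simp only [smul_neg, Finset.smul_sum, smul_smul, mul_assoc, mul_comm (gumbel x)]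
  rw [add_comm, sub_eq_add_neg]

end Gumbel

section Slepian

variable {T ι : Type*} [Fintype ι]

lemma abs_interpolate_mulVec_le (A B : Matrix T ι ℝ) (ξ : ι → ℝ) (t : ℝ) (i : T) :
    |((-Real.sin t • A + Real.cos t • B) *ᵥ ξ) i| ≤ |A i ⬝ᵥ ξ| + |B i ⬝ᵥ ξ| := by
  simp only [add_mulVec, smul_mulVec, Pi.add_apply, Pi.smul_apply, smul_eq_mul]
  refine (abs_add_le _ _).trans (add_le_add ?_ ?_) <;> rw [abs_mul]
  · rw [abs_neg]
    exact mul_le_of_le_one_left (abs_nonneg _) (Real.abs_sin_le_one t)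
  · exact mul_le_of_le_one_left (abs_nonneg _) (Real.abs_cos_le_one t)

lemma interpolate_mul_transpose {A B : Matrix T ι ℝ} (horth : A * Bᵀ = 0) (x y : ℝ) :
    (x • A + y • B) * (-y • A + x • B)ᵀ = -((x * y) • (A * Aᵀ - B * Bᵀ)) := by
  have horth' : B * Aᵀ = 0 := by simpa using congrArg transpose horth
  rw [transpose_add, transpose_smul, transpose_smul]
  simp only [Matrix.add_mul, Matrix.mul_add, Matrix.smul_mul, Matrix.mul_smul, horth, horth']
  module

variable [Fintype T]

lemma integral_dotProduct_mul_exp_mul_gumbel (V : Matrix T ι ℝ) (w : ι → ℝ) (c : T → ℝ) (i : T) :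
    ∫ ξ, (w ⬝ᵥ ξ) * (Real.exp ((V *ᵥ ξ + c) i) * gumbel (V *ᵥ ξ + c)) ∂gaussianPi ι
      = ∫ ξ, ((Real.exp ((V *ᵥ ξ + c) i) * gumbel (V *ᵥ ξ + c)) * (V *ᵥ w) i
        - ∑ j, (Real.exp ((V *ᵥ ξ + c) i) * Real.exp ((V *ᵥ ξ + c) j) * gumbel (V *ᵥ ξ + c))
          * (V *ᵥ w) j) ∂gaussianPi ι := by
  classical
  have hd (ξ : ι → ℝ) := (hasFDerivAt_exp_mul_gumbel (V *ᵥ ξ + c) i).comp ξ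
    (V.mulVecLin.toContinuousLinearMap.hasFDerivAt.add_const c)
  refine (integral_dotProduct_mul_gaussianPi hd
    (fun ξ => abs_exp_mul_gumbel_le (V *ᵥ ξ + c) i) (fun l => ?_) w).trans (by simp)
  simp only [Pi.add_apply, ContinuousLinearMap.sub_comp, ContinuousLinearMap.smul_comp,
    _root_.sub_apply, _root_.smul_apply, ContinuousLinearMap.comp_apply,
    LinearMap.coe_toContinuousLinearMap', mulVecBilin_apply, mulVec_single, MulOpposite.op_one,
    one_smul, ContinuousLinearMap.proj_apply, col_apply, smul_eq_mul, _root_.sum_apply]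
  refine Integrable.of_bound (Continuous.aestronglyMeasurable (by fun_prop))
    (1 * |V i l| + ∑ j, 2 * |V j l|) (ae_of_all _ fun ξ => ?_)
  refine (norm_sub_le _ _).trans (add_le_add ?_ ((norm_sum_le _ _).trans
    (Finset.sum_le_sum fun j _ => ?_)))
  · rw [norm_mul]
    exact mul_le_mul_of_nonneg_right (abs_exp_mul_gumbel_le (V *ᵥ ξ + c) i) (abs_nonneg _)
  · rw [norm_mul]
    exact mul_le_mul_of_nonneg_right (abs_exp_mul_exp_mul_gumbel_le (V *ᵥ ξ + c) i j)
      (abs_nonneg _)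

section Interpolation

variable (A B : Matrix T ι ℝ) (c : T → ℝ)

lemma hasDerivAt_gumbel_interpolate (ξ : ι → ℝ) (t : ℝ) :
    HasDerivAt (fun t => gumbel ((Real.cos t • A + Real.sin t • B) *ᵥ ξ + c))
      (-∑ i, ((-Real.sin t • A + Real.cos t • B) *ᵥ ξ) i *
        (Real.exp (((Real.cos t • A + Real.sin t • B) *ᵥ ξ + c) i)
          * gumbel ((Real.cos t • A + Real.sin t • B) *ᵥ ξ + c))) t := by
  have hd : HasDerivAt (fun t => (Real.cos t • A + Real.sin t • B) *ᵥ ξ + c)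
      ((-Real.sin t • A + Real.cos t • B) *ᵥ ξ) t := by
    simp only [add_mulVec, smul_mulVec]
    exact (((Real.hasDerivAt_cos t).smul_const _).fun_add
      ((Real.hasDerivAt_sin t).smul_const _)).add_const c
  refine ((hasFDerivAt_gumbel _).comp_hasDerivAt t hd).congr_deriv ?_
  simp only [_root_.neg_apply, _root_.sum_apply, _root_.smul_apply,
    ContinuousLinearMap.proj_apply, smul_eq_mul, mul_comm]

lemma integrable_gumbel_affine : Integrable (fun ξ => gumbel (A *ᵥ ξ + c)) (gaussianPi ι) :=
  Integrable.of_bound (Continuous.aestronglyMeasurable (by fun_prop)) 1 (ae_of_all _ fun ξ => by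
    rw [Real.norm_of_nonneg (gumbel_pos _).le]
    exact gumbel_le_one _)

lemma integrable_dotProduct_mul_exp_mul_gumbel (w : ι → ℝ) (i : T) :
    Integrable (fun ξ => (w ⬝ᵥ ξ) * (Real.exp ((A *ᵥ ξ + c) i) * gumbel (A *ᵥ ξ + c)))
      (gaussianPi ι) :=
  (integrable_dotProduct_gaussianPi w).mul_bdd (c := 1)
    (Continuous.aestronglyMeasurable (by fun_prop))
    (ae_of_all _ fun ξ => abs_exp_mul_gumbel_le (A *ᵥ ξ + c) i)

lemma hasDerivAt_integral_gumbel_interpolate (t : ℝ) :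
    HasDerivAt (fun t => ∫ ξ, gumbel ((Real.cos t • A + Real.sin t • B) *ᵥ ξ + c) ∂gaussianPi ι)
      (-∑ i, ∫ ξ, ((-Real.sin t • A + Real.cos t • B) i ⬝ᵥ ξ) *
        (Real.exp (((Real.cos t • A + Real.sin t • B) *ᵥ ξ + c) i)
          * gumbel ((Real.cos t • A + Real.sin t • B) *ᵥ ξ + c)) ∂gaussianPi ι) t := by
  have hint (s : ℝ) (i : T) := integrable_dotProduct_mul_exp_mul_gumbel
    (Real.cos s • A + Real.sin s • B) c ((-Real.sin s • A + Real.cos s • B) i) i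
  rw [← integral_finsetSum _ fun i _ => hint t i, ← integral_neg]
  refine (hasDerivAt_integral_of_dominated_loc_of_deriv_le (𝕜 := ℝ) (x₀ := t)
    (bound := fun ξ => ∑ i, (|A i ⬝ᵥ ξ| + |B i ⬝ᵥ ξ|)) (s := Set.univ) univ_mem
    (Eventually.of_forall fun s => (integrable_gumbel_affine _ c).aestronglyMeasurable)
    (integrable_gumbel_affine _ c) (integrable_finsetSum _ fun i _ => hint t i).neg.1
    (ae_of_all _ fun ξ s _ => ?_)
    (integrable_finsetSum _ fun i _ => (integrable_dotProduct_gaussianPi (A i)).abs.add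
      (integrable_dotProduct_gaussianPi (B i)).abs)
    (ae_of_all _ fun ξ s _ => hasDerivAt_gumbel_interpolate A B c ξ s)).2
  rw [norm_neg]
  refine (norm_sum_le _ _).trans (Finset.sum_le_sum fun i _ => ?_)
  rw [norm_mul]
  exact (mul_le_of_le_one_right (norm_nonneg _) (abs_exp_mul_gumbel_le _ i)).trans
    (abs_interpolate_mulVec_le A B ξ s i)

variable {A B}

/- Along the interpolation `cos t • A + sin t • B` of two independent centred Gaussian families with
equal variances, integration by parts turns the derivative of the expectation into a combination of
covariance differences with coefficients of a fixed sign. -/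
lemma integral_gumbel_le_integral_gumbel (horth : A * Bᵀ = 0)
    (hle : ∀ i j, (B * Bᵀ) i j ≤ (A * Aᵀ) i j) (heq : ∀ i, (A * Aᵀ) i i = (B * Bᵀ) i i) :
    ∫ ξ, gumbel (B *ᵥ ξ + c) ∂gaussianPi ι ≤ ∫ ξ, gumbel (A *ᵥ ξ + c) ∂gaussianPi ι := by
  have hanti : AntitoneOn (fun t => ∫ ξ, gumbel ((Real.cos t • A + Real.sin t • B) *ᵥ ξ + c)
      ∂gaussianPi ι) (Set.Icc 0 (Real.pi / 2)) := by
    have hder := hasDerivAt_integral_gumbel_interpolate A B c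
    refine antitoneOn_of_deriv_nonpos (convex_Icc _ _)
      (fun t _ => (hder t).continuousAt.continuousWithinAt)
      (fun t _ => (hder t).differentiableAt.differentiableWithinAt) fun t ht => ?_
    rw [interior_Icc] at ht
    have hsin : 0 ≤ Real.sin t :=
      Real.sin_nonneg_of_nonneg_of_le_pi ht.1.le (by linarith [ht.2, Real.pi_pos])
    have hcos : 0 ≤ Real.cos t :=
      Real.cos_nonneg_of_mem_Icc ⟨by linarith [ht.1, Real.pi_pos], ht.2.le⟩
    rw [(hder t).deriv, neg_nonpos]
    refine Finset.sum_nonneg fun i _ => ?_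
    rw [integral_dotProduct_mul_exp_mul_gumbel]
    have hcov (j : T) : ((Real.cos t • A + Real.sin t • B) *ᵥ
        (-Real.sin t • A + Real.cos t • B) i) j
          = -((Real.cos t * Real.sin t) * ((A * Aᵀ) j i - (B * Bᵀ) j i)) :=
      congrFun₂ (interpolate_mul_transpose horth _ _) j i
    refine integral_nonneg fun ξ => ?_
    simp only [hcov, heq, sub_self, mul_zero, neg_zero, zero_sub, Pi.zero_apply, mul_neg,
      Finset.sum_neg_distrib, neg_neg]
    exact Finset.sum_nonneg fun j _ => mul_nonneg (mul_nonneg (by positivity) (gumbel_pos _).le)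
      (mul_nonneg (mul_nonneg hcos hsin) (sub_nonneg.2 (hle j i)))
  have hends := hanti ⟨le_rfl, by positivity⟩ ⟨by positivity, le_rfl⟩
    (show (0 : ℝ) ≤ Real.pi / 2 by positivity)
  simpa using hends

end Interpolation

end Slepian

section Indicator

variable {Ω : Type*} [MeasurableSpace Ω] {P : Measure Ω} [IsProbabilityMeasure P] {f : Ω → ℝ}
  {s : Set Ω}

lemma integral_le_one_sub_measureReal_mul (hf : Integrable f P) (hs : MeasurableSet s) {ε : ℝ}
    (hf1 : ∀ ω, f ω ≤ 1) (hfs : ∀ ω ∈ s, f ω ≤ ε) :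
    ∫ ω, f ω ∂P ≤ 1 - P.real s * (1 - ε) := by
  calc ∫ ω, f ω ∂P ≤ ∫ ω, (1 - s.indicator (fun _ => 1 - ε) ω) ∂P := by
        refine integral_mono hf ((integrable_const _).sub ((integrable_const _).indicator hs))
          fun ω => ?_
        by_cases hω : ω ∈ s
        · simpa only [Set.indicator_of_mem hω, sub_sub_cancel] using hfs ω hω
        · simpa only [Set.indicator_of_notMem hω, sub_zero] using hf1 ω
    _ = 1 - P.real s * (1 - ε) := by
        rw [integral_sub (integrable_const _) ((integrable_const _).indicator hs),
          integral_indicator_const _ hs, integral_const, probReal_univ, one_smul, smul_eq_mul]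

lemma one_sub_measureReal_sub_le_integral (hf : Integrable f P) (hs : MeasurableSet s) {ε : ℝ}
    (hε : 0 ≤ ε) (hf0 : ∀ ω, 0 ≤ f ω) (hfs : ∀ ω ∉ s, 1 - ε ≤ f ω) :
    1 - P.real s - ε ≤ ∫ ω, f ω ∂P := by
  have h := integral_le_one_sub_measureReal_mul (f := fun ω => 1 - f ω) (ε := ε)
    ((integrable_const _).sub hf) hs.compl (fun ω => by linarith [hf0 ω])
    (fun ω hω => by linarith [hfs ω hω])
  rw [integral_sub (integrable_const _) hf, integral_const, probReal_univ, one_smul,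
    probReal_compl_eq_one_sub hs] at h
  nlinarith [measureReal_nonneg (μ := P) (s := s)]

end Indicator

section Slepian

variable {T ι : Type*} [Fintype T] [Fintype ι]

lemma slepian_of_inverseTemperature (A B : Matrix T ι ℝ) (horth : A * Bᵀ = 0)
    (hle : ∀ i j, (B * Bᵀ) i j ≤ (A * Aᵀ) i j) (heq : ∀ i, (A * Aᵀ) i i = (B * Bᵀ) i i)
    (m δ : ℝ) {β : ℝ} (hβ : 0 ≤ β) :
    (gaussianPi ι).real {ξ | ∃ i, m + δ ≤ A i ⬝ᵥ ξ} * (1 - Real.exp (-Real.exp (β * δ)))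
      ≤ (gaussianPi ι).real {ξ | ∃ i, m - δ < B i ⬝ᵥ ξ}
        + Fintype.card T * Real.exp (-(β * δ)) := by
  have hA : MeasurableSet {ξ : ι → ℝ | ∃ i, m + δ ≤ A i ⬝ᵥ ξ} := by
    rw [Set.ofPred_exists]
    exact MeasurableSet.iUnion fun i => measurableSet_le measurable_const
      (Continuous.measurable (by fun_prop))
  have hB : MeasurableSet {ξ : ι → ℝ | ∃ i, m - δ < B i ⬝ᵥ ξ} := by
    rw [Set.ofPred_exists]
    exact MeasurableSet.iUnion fun i => measurableSet_lt measurable_const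
      (Continuous.measurable (by fun_prop))
  have hcomp := integral_gumbel_le_integral_gumbel (A := β • A) (B := β • B) (fun _ => -(β * m))
    (by simp [horth])
    (fun i j => by
      simpa using mul_le_mul_of_nonneg_left (mul_le_mul_of_nonneg_left (hle i j) hβ) hβ)
    (fun i => by simp [heq])
  have hval (C : Matrix T ι ℝ) (ξ : ι → ℝ) (i : T) :
      ((β • C) *ᵥ ξ + Function.const T (-(β * m))) i = β * (C i ⬝ᵥ ξ - m) := by
    simp only [smul_mulVec, Pi.add_apply, Pi.smul_apply, smul_eq_mul, mulVec, Function.const_apply]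
    ring
  have hupper := integral_le_one_sub_measureReal_mul
    (integrable_gumbel_affine (β • A) fun _ => -(β * m)) hA (fun _ => gumbel_le_one _)
    fun ξ ⟨i, hi⟩ => gumbel_le_of_le (r := β * δ) (i := i)
      ((mul_le_mul_of_nonneg_left (by linarith) hβ).trans_eq (hval A ξ i).symm)
  have hlower := one_sub_measureReal_sub_le_integral
    (integrable_gumbel_affine (β • B) fun _ => -(β * m)) hB (by positivity)
    (fun _ => (gumbel_pos _).le)
    fun ξ hξ => one_sub_card_mul_exp_le_gumbel (r := -(β * δ)) fun i => by
      refine (hval B ξ i).trans_le ((mul_le_mul_of_nonneg_left ?_ hβ).trans_eq (mul_neg β δ))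
      linarith [not_lt.1 (not_exists.1 hξ i)]
  linarith

end Slepian

lemma slepian {T ι : Type*} [Finite T] [Fintype ι] (A B : Matrix T ι ℝ) (horth : A * Bᵀ = 0)
    (hle : ∀ i j, (B * Bᵀ) i j ≤ (A * Aᵀ) i j) (heq : ∀ i, (A * Aᵀ) i i = (B * Bᵀ) i i)
    {s s' : ℝ} (hs : s < s') :
    gaussianPi ι {ξ | ∃ i, s' ≤ A i ⬝ᵥ ξ} ≤ gaussianPi ι {ξ | ∃ i, s < B i ⬝ᵥ ξ} := by
  have := Fintype.ofFinite T
  have hδ : 0 < (s' - s) / 2 := by linarith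
  have hβδ : Tendsto (fun β : ℝ => β * ((s' - s) / 2)) atTop atTop :=
    tendsto_id.atTop_mul_const hδ
  have hleft := ((Real.tendsto_exp_neg_atTop_nhds_zero.comp
    (Real.tendsto_exp_atTop.comp hβδ)).const_sub 1).const_mul
      ((gaussianPi ι).real {ξ | ∃ i, s' ≤ A i ⬝ᵥ ξ})
  have hright := ((Real.tendsto_exp_neg_atTop_nhds_zero.comp hβδ).const_mul
    (Fintype.card T : ℝ)).const_add ((gaussianPi ι).real {ξ | ∃ i, s < B i ⬝ᵥ ξ})
  have hlim := le_of_tendsto_of_tendsto hleft hright <| (eventually_ge_atTop 0).mono fun β hβ => by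
    have h := slepian_of_inverseTemperature A B horth hle heq ((s + s') / 2) ((s' - s) / 2) hβ
    rwa [show (s + s') / 2 + (s' - s) / 2 = s' by ring,
      show (s + s') / 2 - (s' - s) / 2 = s by ring] at h
  rw [sub_zero, mul_one, mul_zero, add_zero] at hlim
  exact (ENNReal.toReal_le_toReal (measure_ne_top _ _) (measure_ne_top _ _)).1 hlim

/-! ### The largest singular value of a Gaussian matrix -/

lemma dotProduct_self_nonneg {ι : Type*} [Fintype ι] (x : ι → ℝ) : 0 ≤ x ⬝ᵥ x :=
  Finset.sum_nonneg fun _ _ => mul_self_nonneg _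

lemma dotProduct_sq_le {ι : Type*} [Fintype ι] (x y : ι → ℝ) :
    (x ⬝ᵥ y) ^ 2 ≤ (x ⬝ᵥ x) * (y ⬝ᵥ y) := by
  simpa only [dotProduct, sq] using Finset.sum_mul_sq_le_sq_mul_sq Finset.univ x y

lemma dotProduct_le_of_dotProduct_self_le_sq {ι : Type*} [Fintype ι] {x y : ι → ℝ} {r : ℝ}
    (hr : 0 ≤ r) (hx : x ⬝ᵥ x = 1) (hy : y ⬝ᵥ y ≤ r ^ 2) : x ⬝ᵥ y ≤ r :=
  (abs_le_of_sq_le_sq' ((dotProduct_sq_le x y).trans (by rwa [hx, one_mul])) hr).2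

lemma inv_sqrt_smul_dotProduct_self {ι : Type*} [Fintype ι] {x : ι → ℝ} (hx : 0 < x ⬝ᵥ x) :
    ((√(x ⬝ᵥ x))⁻¹ • x) ⬝ᵥ ((√(x ⬝ᵥ x))⁻¹ • x) = 1 := by
  rw [smul_dotProduct, dotProduct_smul, smul_smul, ← mul_inv, Real.mul_self_sqrt hx.le,
    smul_eq_mul, inv_mul_cancel₀ hx.ne']

lemma dotProduct_transpose_mul_self_mulVec {m n : Type*} [Fintype m] [Fintype n]
    (W : Matrix m n ℝ) (x : n → ℝ) : x ⬝ᵥ (Wᵀ * W) *ᵥ x = (W *ᵥ x) ⬝ᵥ (W *ᵥ x) := by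
  rw [← mulVec_mulVec, dotProduct_mulVec, vecMul_transpose]

lemma matEntries_vecMulVec_dotProduct_matEntries {m n : Type*} [Fintype m] [Fintype n]
    (y : m → ℝ) (x : n → ℝ) (W : Matrix m n ℝ) :
    matEntries (vecMulVec y x) ⬝ᵥ matEntries W = y ⬝ᵥ W *ᵥ x := by
  simp only [dotProduct, mulVec, matEntries, vecMulVec_apply, Fintype.sum_prod_type,
    Finset.mul_sum]
  exact Finset.sum_congr rfl fun i _ => Finset.sum_congr rfl fun j _ => by ring

/-- The Loewner bound `WᵀW ≤ r`, as an inequality between quadratic forms. -/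
def GramLE {m n : Type*} [Fintype m] [Fintype n] (W : Matrix m n ℝ) (r : ℝ) : Prop :=
  ∀ x : n → ℝ, x ⬝ᵥ (Wᵀ * W) *ᵥ x ≤ r * (x ⬝ᵥ x)

lemma GramLE.mono {m n : Type*} [Fintype m] [Fintype n] {W : Matrix m n ℝ} {r s : ℝ}
    (hW : GramLE W r) (hrs : r ≤ s) : GramLE W s := fun x =>
  (hW x).trans (mul_le_mul_of_nonneg_right hrs (dotProduct_self_nonneg x))

lemma exists_lt_dotProduct_mulVec_of_not_gramLE {m n : Type*} [Fintype m] [Fintype n]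
    {W : Matrix m n ℝ} {s : ℝ} (hW : ¬ GramLE W (s ^ 2)) :
    ∃ (u : n → ℝ) (v : m → ℝ), u ⬝ᵥ u = 1 ∧ v ⬝ᵥ v = 1 ∧ s < v ⬝ᵥ W *ᵥ u := by
  simp only [GramLE, not_forall, not_le, dotProduct_transpose_mul_self_mulVec] at hW
  obtain ⟨x, hx⟩ := hW
  have hx0 : 0 < x ⬝ᵥ x := (dotProduct_self_nonneg x).lt_of_ne' fun h => by
    rw [dotProduct_self_eq_zero.1 h] at hx
    simp at hx
  have hy0 : 0 < (W *ᵥ x) ⬝ᵥ (W *ᵥ x) :=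
    (mul_nonneg (sq_nonneg s) hx0.le).trans_lt hx
  refine ⟨_, _, inv_sqrt_smul_dotProduct_self hx0, inv_sqrt_smul_dotProduct_self hy0, ?_⟩
  have hs : s * √(x ⬝ᵥ x) < √((W *ᵥ x) ⬝ᵥ (W *ᵥ x)) :=
    Real.lt_sqrt_of_sq_lt (by rwa [mul_pow, Real.sq_sqrt hx0.le])
  rw [mulVec_smul, smul_dotProduct, dotProduct_smul, smul_eq_mul, smul_eq_mul, mul_left_comm,
    ← div_eq_inv_mul _ √((W *ᵥ x) ⬝ᵥ (W *ᵥ x)), Real.div_sqrt, ← div_eq_inv_mul,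
    lt_div_iff₀ (Real.sqrt_pos.2 hx0)]
  exact hs

lemma measurePreserving_precomp_pi {ι κ X : Type*} [Fintype ι] [Fintype κ] [MeasurableSpace X]
    (μ : Measure X) [IsProbabilityMeasure μ] {f : ι → κ} (hf : Function.Injective f) :
    MeasurePreserving (fun (x : κ → X) i => x (f i)) (Measure.pi fun _ => μ)
      (Measure.pi fun _ => μ) := by
  refine ⟨measurable_pi_lambda _ fun i => measurable_pi_apply _, ?_⟩
  have hind := (iIndepFun_pi (μ := fun _ : κ => μ) (X := fun _ x => x)
    fun _ => aemeasurable_id).precomp hf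
  rw [(iIndepFun_iff_map_fun_eq_pi_map fun i => (measurable_pi_apply (f i)).aemeasurable).1 hind]
  congr 1 with i : 1
  exact (measurePreserving_eval (fun _ : κ => μ) (f i)).map_eq

lemma one_le_two_mul_gaussianReal_Ici (v : NNReal) : 1 ≤ 2 * gaussianReal 0 v (Set.Ici 0) := by
  have hneg : gaussianReal 0 v (Set.Iic 0) = gaussianReal 0 v (Set.Ici 0) := by
    conv_lhs => rw [← neg_zero (G := ℝ), ← gaussianReal_map_neg (μ := 0)]
    rw [Measure.map_apply measurable_neg measurableSet_Iic]
    simp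
  calc (1 : ENNReal) = gaussianReal 0 v (Set.Iic 0 ∪ Set.Ici 0) := by
        rw [Set.Iic_union_Ici, measure_univ]
    _ ≤ gaussianReal 0 v (Set.Iic 0) + gaussianReal 0 v (Set.Ici 0) := measure_union_le _ _
    _ = 2 * gaussianReal 0 v (Set.Ici 0) := by rw [hneg, two_mul]

lemma gaussianPi_le_two_mul_gaussianPi_sum {α β : Type*} [Fintype α] [Fintype β]
    {E : Set (α → ℝ)} (hE : MeasurableSet E) :
    gaussianPi α E ≤ 2 * gaussianPi ((α ⊕ Unit) ⊕ β)
      {ξ | (fun i => ξ (Sum.inl (Sum.inl i))) ∈ E ∧ 0 ≤ ξ (Sum.inl (Sum.inr ()))} := by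
  have hmp := (((MeasurePreserving.id (gaussianPi α)).prod
    (measurePreserving_eval (fun _ : Unit => gaussianReal 0 1) ())).comp
    (measurePreserving_sumPiEquivProdPi fun _ : α ⊕ Unit => gaussianReal 0 1)).comp
    (measurePreserving_precomp_pi (κ := (α ⊕ Unit) ⊕ β) (gaussianReal 0 1) Sum.inl_injective)
  have hprod := hmp.measure_preimage (hE.prod (measurableSet_Ici (a := (0 : ℝ)))).nullMeasurableSet
  rw [Measure.prod_prod] at hprod
  calc gaussianPi α E ≤ gaussianPi α E * (2 * gaussianReal 0 1 (Set.Ici 0)) :=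
        le_mul_of_one_le_right' (one_le_two_mul_gaussianReal_Ici 1)
    _ = 2 * gaussianPi ((α ⊕ Unit) ⊕ β) _ := by
        rw [mul_left_comm, ← hprod]
        rfl

lemma measurableSet_lt_dotProduct_self {ι : Type*} [Fintype ι] (r : ℝ) :
    MeasurableSet {x : ι → ℝ | r < x ⬝ᵥ x} :=
  measurableSet_lt measurable_const (Continuous.measurable (by fun_prop))

lemma measurableSet_exists_le_dotProduct {T ι : Type*} [Countable T] [Fintype ι] (a : T → ι → ℝ)
    (s : ℝ) : MeasurableSet {x : ι → ℝ | ∃ t, s ≤ a t ⬝ᵥ x} := by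
  rw [Set.ofPred_exists]
  exact MeasurableSet.iUnion fun t => measurableSet_le measurable_const
    (Continuous.measurable (by fun_prop))

section Chevet

variable {T N Q : Type*} [Fintype N] [Fintype Q]

lemma gaussianPi_sum_lt_dotProduct_add_le (x : T → Q → ℝ) (y : T → N → ℝ)
    (hx : ∀ t, x t ⬝ᵥ x t = 1) (hy : ∀ t, y t ⬝ᵥ y t = 1) {r₁ r₂ : ℝ} (h₁ : 0 ≤ r₁)
    (h₂ : 0 ≤ r₂) (α : Type*) [Fintype α] :
    gaussianPi (α ⊕ (N ⊕ Q)) {ξ | ∃ t, r₁ + r₂ < (y t ⬝ᵥ fun i => ξ (Sum.inr (Sum.inl i)))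
        + (x t ⬝ᵥ fun j => ξ (Sum.inr (Sum.inr j)))}
      ≤ gaussianPi N {g | r₁ ^ 2 < g ⬝ᵥ g} + gaussianPi Q {h | r₂ ^ 2 < h ⬝ᵥ h} := by
  rw [← (measurePreserving_precomp_pi (κ := α ⊕ (N ⊕ Q)) (gaussianReal 0 1)
      (Sum.inr_injective.comp Sum.inl_injective)).measure_preimage
      (measurableSet_lt_dotProduct_self _).nullMeasurableSet,
    ← (measurePreserving_precomp_pi (κ := α ⊕ (N ⊕ Q)) (gaussianReal 0 1)
      (Sum.inr_injective.comp Sum.inr_injective)).measure_preimage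
      (measurableSet_lt_dotProduct_self _).nullMeasurableSet]
  refine (measure_mono ?_).trans (measure_union_le _ _)
  rintro ξ ⟨t, ht⟩
  by_contra hc
  simp only [Set.mem_union, Set.mem_preimage, Set.mem_ofPred_eq, not_or, not_lt] at hc
  exact ht.not_ge (add_le_add (dotProduct_le_of_dotProduct_self_le_sq h₁ (hy t) hc.1)
    (dotProduct_le_of_dotProduct_self_le_sq h₂ (hx t) hc.2))

lemma matEntries_vecMulVec_dotProduct_matEntries_vecMulVec (y y' : N → ℝ) (x x' : Q → ℝ) :
    matEntries (vecMulVec y x) ⬝ᵥ matEntries (vecMulVec y' x') = (y ⬝ᵥ y') * (x ⬝ᵥ x') := by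
  refine (matEntries_vecMulVec_dotProduct_matEntries _ _ (vecMulVec y' x')).trans ?_
  rw [vecMulVec_mulVec, op_smul_eq_smul, dotProduct_smul, smul_eq_mul, mul_comm,
    dotProduct_comm x']

/- Slepian's lemma compares `yᵀ W x + g₀` with `y ⬝ᵥ g + x ⬝ᵥ h`, where the auxiliary standard
Gaussian `g₀` equalizes the variances; it is nonnegative with probability at least one half. -/
lemma chevet_of_finite [Finite T] (x : T → Q → ℝ) (y : T → N → ℝ)
    (hx : ∀ t, x t ⬝ᵥ x t = 1) (hy : ∀ t, y t ⬝ᵥ y t = 1) {r₁ r₂ s : ℝ} (h₁ : 0 ≤ r₁)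
    (h₂ : 0 ≤ r₂) (hs : r₁ + r₂ < s) :
    gaussianPi (N × Q) {w | ∃ t, s ≤ matEntries (vecMulVec (y t) (x t)) ⬝ᵥ w}
      ≤ 2 * (gaussianPi N {g | r₁ ^ 2 < g ⬝ᵥ g} + gaussianPi Q {h | r₂ ^ 2 < h ⬝ᵥ h}) := by
  let A : Matrix T (((N × Q) ⊕ Unit) ⊕ (N ⊕ Q)) ℝ := fun t =>
    Sum.elim (Sum.elim (matEntries (vecMulVec (y t) (x t))) 1) 0
  let B : Matrix T (((N × Q) ⊕ Unit) ⊕ (N ⊕ Q)) ℝ := fun t => Sum.elim 0 (Sum.elim (y t) (x t))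
  have hA (t) (ξ : ((N × Q) ⊕ Unit) ⊕ (N ⊕ Q) → ℝ) :
      A t ⬝ᵥ ξ = matEntries (vecMulVec (y t) (x t)) ⬝ᵥ (fun q => ξ (Sum.inl (Sum.inl q)))
        + ξ (Sum.inl (Sum.inr ())) := by
    simp [A, dotProduct, Fintype.sum_sum_type]
  have hB (t) (ξ : ((N × Q) ⊕ Unit) ⊕ (N ⊕ Q) → ℝ) :
      B t ⬝ᵥ ξ = (y t ⬝ᵥ fun i => ξ (Sum.inr (Sum.inl i)))
        + (x t ⬝ᵥ fun j => ξ (Sum.inr (Sum.inr j))) := by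
    simp [B, dotProduct, Fintype.sum_sum_type]
  have hAA (t t') : (A * Aᵀ) t t' = (y t ⬝ᵥ y t') * (x t ⬝ᵥ x t') + 1 :=
    (hA t (A t')).trans (congrArg₂ (· + ·)
      (matEntries_vecMulVec_dotProduct_matEntries_vecMulVec _ _ _ _) rfl)
  have hBB (t t') : (B * Bᵀ) t t' = y t ⬝ᵥ y t' + x t ⬝ᵥ x t' := hB t (B t')
  have hAB : A * Bᵀ = 0 := by
    ext t t'
    refine (hA t (B t')).trans ?_
    simp [B, dotProduct]
  have hle (t t') : (B * Bᵀ) t t' ≤ (A * Aᵀ) t t' := by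
    have hxt := dotProduct_le_of_dotProduct_self_le_sq zero_le_one (hx t) (by rw [hx t', one_pow])
    have hyt := dotProduct_le_of_dotProduct_self_le_sq zero_le_one (hy t) (by rw [hy t', one_pow])
    rw [hAA, hBB]
    linarith [mul_nonneg (sub_nonneg.2 hxt) (sub_nonneg.2 hyt)]
  have hslepian := slepian A B hAB hle (fun t => by rw [hAA, hBB, hx, hy, one_mul]) hs
  refine (gaussianPi_le_two_mul_gaussianPi_sum (β := N ⊕ Q)
    (measurableSet_exists_le_dotProduct _ s)).trans (mul_le_mul_right ?_ 2)
  refine ((measure_mono ?_).trans hslepian).trans ((measure_mono ?_).trans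
    (gaussianPi_sum_lt_dotProduct_add_le x y hx hy h₁ h₂ ((N × Q) ⊕ Unit)))
  · rintro ξ ⟨⟨t, ht⟩, h0⟩
    exact ⟨t, (hA t ξ).symm ▸ le_add_of_le_of_nonneg ht h0⟩
  · rintro ξ ⟨t, ht⟩
    exact ⟨t, hB t ξ ▸ ht⟩

lemma chevet {r₁ r₂ s : ℝ} (h₁ : 0 ≤ r₁) (h₂ : 0 ≤ r₂) (hs : r₁ + r₂ < s) :
    gaussianPi (N × Q) {w | ∃ (u : Q → ℝ) (v : N → ℝ), u ⬝ᵥ u = 1 ∧ v ⬝ᵥ v = 1 ∧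
        s < matEntries (vecMulVec v u) ⬝ᵥ w}
      ≤ 2 * (gaussianPi N {g | r₁ ^ 2 < g ⬝ᵥ g} + gaussianPi Q {h | r₂ ^ 2 < h ⬝ᵥ h}) := by
  let K : Set ((Q → ℝ) × (N → ℝ)) := {p | p.1 ⬝ᵥ p.1 = 1 ∧ p.2 ⬝ᵥ p.2 = 1}
  rcases isEmpty_or_nonempty K with hK | hK
  · refine (measure_mono_null (t := ∅) ?_ measure_empty).le.trans zero_le
    rintro w ⟨u, v, hu, hv, -⟩
    exact hK.elim ⟨(u, v), hu, hv⟩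
  let D : ℕ → K := TopologicalSpace.denseSeq K
  let A : ℕ → Set (N × Q → ℝ) := fun n =>
    {w | ∃ t : Fin n, s ≤ matEntries (vecMulVec (D t).1.2 (D t).1.1) ⬝ᵥ w}
  have hA : Monotone A := fun m n hmn w ⟨t, ht⟩ => ⟨⟨t, t.2.trans_le hmn⟩, ht⟩
  refine (measure_mono (t := ⋃ n, A n) ?_).trans ?_
  · rintro w ⟨u, v, hu, hv, hw⟩
    have hopen : IsOpen {p : K | s < matEntries (vecMulVec p.1.2 p.1.1) ⬝ᵥ w} := by
      refine isOpen_lt continuous_const ?_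
      simp only [dotProduct, matEntries, vecMulVec_apply]
      fun_prop
    obtain ⟨n, hn⟩ := (TopologicalSpace.denseRange_denseSeq K).exists_mem_open hopen
      ⟨⟨(u, v), hu, hv⟩, hw⟩
    exact Set.mem_iUnion.2 ⟨n + 1, ⟨n, n.lt_succ_self⟩, hn.le⟩
  · rw [hA.measure_iUnion]
    exact iSup_le fun n => chevet_of_finite (fun t : Fin n => (D t).1.1)
      (fun t => (D t).1.2) (fun t => (D t).2.1) (fun t => (D t).2.2) h₁ h₂ hs

end Chevet

/-! ### Almost sure bounds along a sequence of Gaussian matrices -/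

/-- The exponential rate `c` for which a Gaussian quadratic form deviates by `η r` from its mean, in
dimension at most `L r`, with probability at most `2 exp (-c r)`. -/
def hansonWrightRate (η L : ℝ) : ℝ := min (1 / 4) (η / (8 * L)) * η / 2

lemma hansonWrightRate_pos {η L : ℝ} (hη : 0 < η) (hL : 0 < L) : 0 < hansonWrightRate η L := by
  unfold hansonWrightRate
  positivity

lemma gaussianPi_abs_quadForm_sub_trace_ge_le_exp_rate {ι : Type*} [Fintype ι]
    {B : Matrix ι ι ℝ} (hB : B.IsHermitian) (hbd : ∀ x : ι → ℝ, |x ⬝ᵥ B *ᵥ x| ≤ x ⬝ᵥ x)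
    {η L r τ : ℝ} (hη : 0 < η) (hL : 0 < L) (hr : 0 ≤ r) (hτ : η * r ≤ τ)
    (hcard : (Fintype.card ι : ℝ) ≤ L * r) :
    gaussianPi ι {x | τ ≤ |x ⬝ᵥ B *ᵥ x - B.trace|}
      ≤ ENNReal.ofReal (2 * Real.exp (-hansonWrightRate η L * r)) := by
  set s := min (1 / 4) (η / (8 * L)) with hs
  have hs0 : 0 < s := by positivity
  have hsL : s * (8 * L) ≤ η := (le_div_iff₀ (by positivity)).1 (min_le_right _ _)
  refine (gaussianPi_abs_quadForm_sub_trace_ge_le hB hbd τ hs0.le (min_le_left _ _)).trans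
    (ENNReal.ofReal_le_ofReal ?_)
  gcongr
  rw [neg_mul]
  calc _ ≤ -(s * (η * r)) + 4 * s ^ 2 * (L * r) := by gcongr
    _ = -(s * (η * r)) + s * r * (s * (8 * L)) / 2 := by ring
    _ ≤ -(s * (η * r)) + s * r * η / 2 := by gcongr
    _ = -hansonWrightRate η L * r := by rw [hansonWrightRate, ← hs]; ring

lemma exists_gaussianPi_lt_dotProduct_self_le {N : ℕ → ℕ} {a b : ℝ}
    (hN : Tendsto (fun n : ℕ => (N n : ℝ) / n) atTop (𝓝 a)) (hab : a < b) :
    ∃ c > 0, ∀ᶠ n : ℕ in atTop, gaussianPi (Fin (N n)) {g | n * b < g ⬝ᵥ g}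
      ≤ ENNReal.ofReal (2 * Real.exp (-c * n)) := by
  have hη : 0 < (b - a) / 2 := by linarith
  refine ⟨hansonWrightRate ((b - a) / 2) (|a + (b - a) / 2| + 1),
    hansonWrightRate_pos hη (by positivity), ?_⟩
  filter_upwards [hN.eventually_lt_const (lt_add_of_pos_right a hη), eventually_gt_atTop 0]
    with n hn hn0
  rw [div_lt_iff₀ (Nat.cast_pos.2 hn0)] at hn
  refine (measure_mono fun g hg => ?_).trans
    (gaussianPi_abs_quadForm_sub_trace_ge_le_exp_rate (B := 1) (τ := (b - a) / 2 * n)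
      isHermitian_one (fun x => ?_) hη (by positivity) (Nat.cast_nonneg n) le_rfl ?_)
  · rw [Set.mem_ofPred_eq] at hg
    rw [Set.mem_ofPred_eq, one_mulVec, trace_one, Fintype.card_fin]
    exact le_trans (by linarith) (le_abs_self _)
  · rw [one_mulVec, abs_of_nonneg (dotProduct_self_nonneg x)]
  · rw [Fintype.card_fin]
    exact hn.le.trans (mul_le_mul_of_nonneg_right
      ((le_abs_self _).trans (le_add_of_nonneg_right zero_le_one)) (Nat.cast_nonneg n))

lemma IIDGaussian.aemeasurable {Ω ι : Type*} [MeasurableSpace Ω] [Fintype ι] {P : Measure Ω}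
    {X : Ω → ι → ℝ} {v : NNReal} (h : IIDGaussian P X v) : AEMeasurable X P :=
  aemeasurable_of_map_neZero ⟨h.symm ▸ IsProbabilityMeasure.ne_zero _⟩

lemma IIDGaussian.measure_le {Ω ι : Type*} [MeasurableSpace Ω] [Fintype ι] {P : Measure Ω}
    {X : Ω → ι → ℝ} {v : NNReal} (h : IIDGaussian P X v) (B : Set (ι → ℝ)) :
    P {ω | X ω ∈ B} ≤ (Measure.pi fun _ => gaussianReal 0 v) B :=
  (Measure.le_map_apply h.aemeasurable B).trans_eq (congrArg (· B) h)

lemma ae_eventually_notMem_of_eventually_le_ofReal {Ω : Type*} [MeasurableSpace Ω]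
    {P : Measure Ω} {A : ℕ → Set Ω} {f : ℕ → ℝ} (hf : Summable f)
    (h : ∀ᶠ n in atTop, P (A n) ≤ ENNReal.ofReal (f n)) :
    ∀ᵐ ω ∂P, ∀ᶠ n in atTop, ω ∉ A n := by
  obtain ⟨n₀, hn₀⟩ := eventually_atTop.1 h
  have hsum : ∑' n, P (A (n + n₀)) ≠ ⊤ :=
    ne_top_of_le_ne_top ((summable_nat_add_iff n₀).2 hf).tsum_ofReal_ne_top
      (ENNReal.tsum_le_tsum fun n => hn₀ (n + n₀) (Nat.le_add_left n₀ n))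
  filter_upwards [ae_eventually_notMem hsum] with ω hω
  rw [← map_add_atTop_eq_nat n₀]
  exact eventually_map.2 hω

lemma IIDGaussian.measure_not_gramLE_le {Ω N Q : Type*} [MeasurableSpace Ω] [Fintype N] [Fintype Q]
    {P : Measure Ω} {W : Ω → Matrix N Q ℝ} (hW : IIDGaussian P (fun ω => matEntries (W ω)) 1)
    {r₁ r₂ s : ℝ} (h₁ : 0 ≤ r₁) (h₂ : 0 ≤ r₂) (hs : r₁ + r₂ < s) :
    P {ω | ¬ GramLE (W ω) (s ^ 2)}
      ≤ 2 * (gaussianPi N {g | r₁ ^ 2 < g ⬝ᵥ g} + gaussianPi Q {h | r₂ ^ 2 < h ⬝ᵥ h}) := by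
  refine (measure_mono fun ω hω => ?_).trans ((hW.measure_le _).trans (chevet h₁ h₂ hs))
  obtain ⟨u, v, hu, hv, huv⟩ := exists_lt_dotProduct_mulVec_of_not_gramLE hω
  exact ⟨u, v, hu, hv, by rwa [matEntries_vecMulVec_dotProduct_matEntries]⟩

lemma ae_eventually_gramLE {Ω : Type*} [MeasurableSpace Ω] {P : Measure Ω} {N Q : ℕ → ℕ}
    {W : ∀ n, Ω → Matrix (Fin (N n)) (Fin (Q n)) ℝ}
    (hW : ∀ n, IIDGaussian P (fun ω => matEntries (W n ω)) 1) {a c z : ℝ} (ha : 0 ≤ a)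
    (hc : 0 ≤ c) (hN : Tendsto (fun n : ℕ => (N n : ℝ) / n) atTop (𝓝 a))
    (hQ : Tendsto (fun n : ℕ => (Q n : ℝ) / n) atTop (𝓝 c)) (hz : (√a + √c) ^ 2 < z) :
    ∀ᵐ ω ∂P, ∀ᶠ n : ℕ in atTop, GramLE (W n ω) (n * z) := by
  have hz0 : 0 ≤ z := (sq_nonneg _).trans hz.le
  have hδ : 0 < (√z - (√a + √c)) / 3 := by linarith [Real.lt_sqrt_of_sq_lt hz]
  set δ := (√z - (√a + √c)) / 3 with hδ_eq
  have hsq (b : ℝ) (hb : 0 ≤ b) : b < (√b + δ) ^ 2 := by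
    nlinarith [Real.sq_sqrt hb, mul_nonneg (Real.sqrt_nonneg b) hδ.le]
  obtain ⟨c₁, hc₁, h₁⟩ := exists_gaussianPi_lt_dotProduct_self_le hN (hsq a ha)
  obtain ⟨c₂, hc₂, h₂⟩ := exists_gaussianPi_lt_dotProduct_self_le hQ (hsq c hc)
  have hsum (k : ℝ) (hk : 0 < k) : Summable fun n : ℕ => 2 * Real.exp (-k * n) := by
    simpa only [pow_zero, one_mul] using (Real.summable_pow_mul_exp_neg_nat_mul 0 hk).mul_left 2
  have key : ∀ᶠ n : ℕ in atTop, P {ω | ¬ GramLE (W n ω) (n * z)}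
      ≤ ENNReal.ofReal (2 * (2 * Real.exp (-c₁ * n) + 2 * Real.exp (-c₂ * n))) := by
    filter_upwards [h₁, h₂, eventually_gt_atTop 0] with n hn₁ hn₂ hn
    have hn0 : 0 < √n := Real.sqrt_pos.2 (Nat.cast_pos.2 hn)
    have hW' := (hW n).measure_not_gramLE_le (r₁ := √n * (√a + δ)) (r₂ := √n * (√c + δ))
      (s := √n * √z) (by positivity) (by positivity) (by
        rw [← mul_add]
        exact mul_lt_mul_of_pos_left (by linarith) hn0)
    simp only [mul_pow, Real.sq_sqrt (Nat.cast_nonneg n), Real.sq_sqrt hz0] at hW'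
    rw [ENNReal.ofReal_mul zero_le_two, ENNReal.ofReal_add (by positivity) (by positivity),
      ENNReal.ofReal_ofNat]
    exact hW'.trans (by gcongr)
  filter_upwards [ae_eventually_notMem_of_eventually_le_ofReal
    (((hsum c₁ hc₁).add (hsum c₂ hc₂)).mul_left 2) key] with ω hω
  filter_upwards [hω] with n hn
  exact not_not.1 hn

/-! ### Coercive matrices and rank-one updates -/

lemma inv_sub_inv_add_smul_vecMulVec {n R : Type*} [Fintype n] [DecidableEq n] [CommRing R]
    {A : Matrix n n R} {w : n → R} {a : R} (hA : IsUnit A)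
    (hA' : IsUnit (A + a • vecMulVec w w)) :
    A⁻¹ - (A + a • vecMulVec w w)⁻¹
      = a • vecMulVec (A⁻¹ *ᵥ w) (w ᵥ* (A + a • vecMulVec w w)⁻¹) := by
  rw [inv_sub_inv (iff_of_true hA hA'), add_sub_cancel_left, Matrix.mul_smul, Matrix.smul_mul,
    mul_vecMulVec, vecMulVec_mul]

lemma one_sub_mul_one_add_dotProduct_inv_mulVec {n R : Type*} [Fintype n] [DecidableEq n]
    [CommRing R] {A : Matrix n n R} {w : n → R} {a : R} (hA : IsUnit A)
    (hA' : IsUnit (A + a • vecMulVec w w)) :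
    (1 - a * (w ⬝ᵥ (A + a • vecMulVec w w)⁻¹ *ᵥ w)) * (1 + a * (w ⬝ᵥ A⁻¹ *ᵥ w)) = 1 := by
  have h := congrArg (fun M => w ⬝ᵥ M *ᵥ w) (inv_sub_inv_add_smul_vecMulVec hA hA')
  simp only [sub_mulVec, dotProduct_sub, smul_mulVec, vecMulVec_mulVec, op_smul_eq_smul,
    dotProduct_smul, smul_eq_mul, ← dotProduct_mulVec] at h
  linear_combination a * h

section Coercive

variable {Q : Type*} [Fintype Q] [DecidableEq Q] {A : Matrix Q Q ℝ} {η : ℝ}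

lemma isUnit_of_forall_mul_le_dotProduct_mulVec (hη : 0 < η)
    (hA : ∀ x, η * (x ⬝ᵥ x) ≤ x ⬝ᵥ A *ᵥ x) : IsUnit A := by
  rw [isUnit_iff_isUnit_det, isUnit_iff_ne_zero]
  intro h
  obtain ⟨x, hx, h0⟩ := exists_mulVec_eq_zero_iff.2 h
  have hxx := hA x
  rw [h0, dotProduct_zero] at hxx
  exact hx (dotProduct_self_eq_zero.1
    (le_antisymm (nonpos_of_mul_nonpos_right hxx hη) (dotProduct_self_nonneg x)))

lemma mul_dotProduct_self_inv_mulVec_le (hη : 0 < η) (hA : ∀ x, η * (x ⬝ᵥ x) ≤ x ⬝ᵥ A *ᵥ x)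
    (x : Q → ℝ) : η * ((A⁻¹ *ᵥ x) ⬝ᵥ (A⁻¹ *ᵥ x)) ≤ x ⬝ᵥ A⁻¹ *ᵥ x := by
  have hu := (isUnit_iff_isUnit_det A).1 (isUnit_of_forall_mul_le_dotProduct_mulVec hη hA)
  have h := hA (A⁻¹ *ᵥ x)
  rwa [mulVec_mulVec, mul_nonsing_inv _ hu, one_mulVec, dotProduct_comm _ x] at h

lemma dotProduct_inv_mulVec_nonneg (hη : 0 < η) (hA : ∀ x, η * (x ⬝ᵥ x) ≤ x ⬝ᵥ A *ᵥ x)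
    (x : Q → ℝ) : 0 ≤ x ⬝ᵥ A⁻¹ *ᵥ x :=
  (mul_nonneg hη.le (dotProduct_self_nonneg _)).trans (mul_dotProduct_self_inv_mulVec_le hη hA x)

lemma mul_dotProduct_inv_mulVec_le (hη : 0 < η) (hA : ∀ x, η * (x ⬝ᵥ x) ≤ x ⬝ᵥ A *ᵥ x)
    (x : Q → ℝ) : η * (x ⬝ᵥ A⁻¹ *ᵥ x) ≤ x ⬝ᵥ x := by
  rcases (dotProduct_inv_mulVec_nonneg hη hA x).eq_or_lt' with h | h
  · rw [h, mul_zero]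
    exact dotProduct_self_nonneg x
  refine le_of_mul_le_mul_right ?_ h
  calc η * (x ⬝ᵥ A⁻¹ *ᵥ x) * (x ⬝ᵥ A⁻¹ *ᵥ x) = η * (x ⬝ᵥ A⁻¹ *ᵥ x) ^ 2 := by ring
    _ ≤ η * ((x ⬝ᵥ x) * ((A⁻¹ *ᵥ x) ⬝ᵥ (A⁻¹ *ᵥ x))) := by
        gcongr
        exact dotProduct_sq_le _ _
    _ = (x ⬝ᵥ x) * (η * ((A⁻¹ *ᵥ x) ⬝ᵥ (A⁻¹ *ᵥ x))) := by ring
    _ ≤ (x ⬝ᵥ x) * (x ⬝ᵥ A⁻¹ *ᵥ x) :=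
        mul_le_mul_of_nonneg_left (mul_dotProduct_self_inv_mulVec_le hη hA x)
          (dotProduct_self_nonneg x)

lemma sq_mul_dotProduct_self_inv_mulVec_le (hη : 0 < η)
    (hA : ∀ x, η * (x ⬝ᵥ x) ≤ x ⬝ᵥ A *ᵥ x) (x : Q → ℝ) :
    η ^ 2 * ((A⁻¹ *ᵥ x) ⬝ᵥ (A⁻¹ *ᵥ x)) ≤ x ⬝ᵥ x := by
  rw [sq, mul_assoc]
  exact (mul_le_mul_of_nonneg_left (mul_dotProduct_self_inv_mulVec_le hη hA x) hη.le).trans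
    (mul_dotProduct_inv_mulVec_le hη hA x)

lemma sq_mul_abs_trace_inv_sub_trace_inv_add_le (hη : 0 < η)
    (hA : ∀ x, η * (x ⬝ᵥ x) ≤ x ⬝ᵥ A *ᵥ x) {a : ℝ} {w : Q → ℝ} (ha : 0 ≤ a)
    (hA' : ∀ x, η * (x ⬝ᵥ x) ≤ x ⬝ᵥ (A + a • vecMulVec w w) *ᵥ x) :
    η ^ 2 * |A⁻¹.trace - (A + a • vecMulVec w w)⁻¹.trace| ≤ a * (w ⬝ᵥ w) := by
  set y := (A + a • vecMulVec w w)⁻¹ *ᵥ (A⁻¹ *ᵥ w)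
  have htrace : A⁻¹.trace - (A + a • vecMulVec w w)⁻¹.trace = a * (y ⬝ᵥ w) := by
    rw [← trace_sub, inv_sub_inv_add_smul_vecMulVec
      (isUnit_of_forall_mul_le_dotProduct_mulVec hη hA)
      (isUnit_of_forall_mul_le_dotProduct_mulVec hη hA'), trace_smul, trace_vecMulVec,
      dotProduct_comm, ← dotProduct_mulVec, dotProduct_comm, smul_eq_mul]
  have hyw : |η ^ 2 * (y ⬝ᵥ w)| ≤ w ⬝ᵥ w := by
    refine abs_le_of_sq_le_sq ?_ (dotProduct_self_nonneg w)
    calc (η ^ 2 * (y ⬝ᵥ w)) ^ 2 = η ^ 4 * (y ⬝ᵥ w) ^ 2 := by ring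
      _ ≤ η ^ 4 * ((y ⬝ᵥ y) * (w ⬝ᵥ w)) := by
          gcongr
          exact dotProduct_sq_le y w
      _ = η ^ 2 * (η ^ 2 * (y ⬝ᵥ y)) * (w ⬝ᵥ w) := by ring
      _ ≤ (w ⬝ᵥ w) * (w ⬝ᵥ w) := by
          refine mul_le_mul_of_nonneg_right ?_ (dotProduct_self_nonneg w)
          exact (mul_le_mul_of_nonneg_left (sq_mul_dotProduct_self_inv_mulVec_le hη hA' _)
            (sq_nonneg η)).trans (sq_mul_dotProduct_self_inv_mulVec_le hη hA w)
      _ = (w ⬝ᵥ w) ^ 2 := (sq _).symm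
  rw [abs_mul, abs_of_nonneg (sq_nonneg η)] at hyw
  rw [htrace, abs_mul, abs_of_nonneg ha, mul_left_comm]
  exact mul_le_mul_of_nonneg_left hyw ha

end Coercive

/-! ### The leave-one-out identity -/

lemma transpose_mul_self_eq_add_vecMulVec {m n R : Type*} [Fintype m] [DecidableEq m]
    [NonUnitalNonAssocSemiring R] (W : Matrix m n R) (i : m) :
    Wᵀ * W = (W.updateRow i 0)ᵀ * W.updateRow i 0 + vecMulVec (W i) (W i) := by
  ext a b
  simp only [mul_apply, transpose_apply, Matrix.add_apply, vecMulVec_apply]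
  rw [← Finset.sum_erase_add _ _ (Finset.mem_univ i), ← Finset.sum_erase_add Finset.univ
    (fun j => W.updateRow i 0 j a * W.updateRow i 0 j b) (Finset.mem_univ i)]
  simp only [updateRow_self, Pi.zero_apply, mul_zero, add_zero]
  refine congrArg (· + _) (Finset.sum_congr rfl fun j hj => ?_)
  rw [updateRow_ne (Finset.ne_of_mem_erase hj)]

lemma trace_transpose_mul_self_mul {m n R : Type*} [Fintype m] [Fintype n] [CommSemiring R]
    (W : Matrix m n R) (G : Matrix n n R) : (Wᵀ * W * G).trace = ∑ i, W i ⬝ᵥ G *ᵥ W i := by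
  rw [Matrix.mul_assoc, trace_mul_comm, Matrix.mul_assoc]
  simp only [Matrix.trace, diag_apply, mul_apply, transpose_apply, dotProduct, mulVec]

/-- The matrix `z - WᵀW/n`. -/
def shiftGram {N Q : Type*} [Fintype N] [DecidableEq Q] (n z : ℝ) (W : Matrix N Q ℝ) :
    Matrix Q Q ℝ :=
  z • 1 - (1 / n) • (Wᵀ * W)

/-- The normalized trace of the resolvent of `WᵀW/n` at `z`. -/
def resTrace {N Q : Type*} [Fintype N] [Fintype Q] [DecidableEq Q] (n z : ℝ)
    (W : Matrix N Q ℝ) : ℝ :=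
  (shiftGram n z W)⁻¹.trace / n

/-- The deviation of the `i`-th row's quadratic form, in the resolvent built from the other rows,
from its conditional mean for a Gaussian matrix. -/
def rowDeviation {N Q : Type*} [Fintype N] [DecidableEq N] [Fintype Q] [DecidableEq Q] (n z : ℝ)
    (W : Matrix N Q ℝ) (i : N) : ℝ :=
  W i ⬝ᵥ (shiftGram n z (W.updateRow i 0))⁻¹ *ᵥ W i - (shiftGram n z (W.updateRow i 0))⁻¹.trace

lemma isHermitian_shiftGram {N Q : Type*} [Fintype N] [DecidableEq Q] (n z : ℝ)
    (W : Matrix N Q ℝ) : (shiftGram n z W).IsHermitian := by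
  simp [shiftGram, IsHermitian, conjTranspose_eq_transpose_of_trivial, transpose_mul]

lemma shiftGram_updateRow_zero {N Q : Type*} [Fintype N] [DecidableEq N]
    [DecidableEq Q] (n z : ℝ) (W : Matrix N Q ℝ) (i : N) :
    shiftGram n z (W.updateRow i 0) = shiftGram n z W + (1 / n) • vecMulVec (W i) (W i) := by
  rw [shiftGram, shiftGram, transpose_mul_self_eq_add_vecMulVec W i, smul_add]
  abel

lemma GramLE.updateRow_zero {N Q : Type*} [Fintype N] [DecidableEq N] [Fintype Q]
    {W : Matrix N Q ℝ} {r : ℝ} (h : GramLE W r) (i : N) :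
    GramLE (W.updateRow i 0) r := fun x => by
  have hx := h x
  rw [transpose_mul_self_eq_add_vecMulVec W i, add_mulVec, dotProduct_add, vecMulVec_mulVec,
    op_smul_eq_smul, dotProduct_smul, dotProduct_comm x (W i), smul_eq_mul] at hx
  exact (le_add_of_nonneg_right (mul_self_nonneg _)).trans hx

lemma GramLE.row_dotProduct_self_le {N Q : Type*} [Fintype N] [Fintype Q] {W : Matrix N Q ℝ}
    {r : ℝ} (h : GramLE W r) (hr : 0 ≤ r) (i : N) :
    W i ⬝ᵥ W i ≤ r := by
  rcases (dotProduct_self_nonneg (W i)).eq_or_lt' with h0 | h0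
  · rwa [h0]
  refine le_of_mul_le_mul_right ?_ h0
  calc W i ⬝ᵥ W i * (W i ⬝ᵥ W i) ≤ (W *ᵥ W i) ⬝ᵥ (W *ᵥ W i) :=
        Finset.single_le_sum (f := fun j => (W *ᵥ W i) j * (W *ᵥ W i) j)
          (fun j _ => mul_self_nonneg _) (Finset.mem_univ i)
    _ ≤ r * (W i ⬝ᵥ W i) := by
        rw [← dotProduct_transpose_mul_self_mulVec]
        exact h (W i)

section LeaveOneOut

variable {N Q : Type*} [Fintype N] [Fintype Q] [DecidableEq Q] {n ζ z : ℝ} {W : Matrix N Q ℝ}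

lemma GramLE.mul_le_dotProduct_shiftGram_mulVec (hn : 0 < n) (hW : GramLE W (n * ζ)) (z : ℝ)
    (x : Q → ℝ) : (z - ζ) * (x ⬝ᵥ x) ≤ x ⬝ᵥ shiftGram n z W *ᵥ x := by
  simp only [shiftGram, sub_mulVec, dotProduct_sub, smul_mulVec, dotProduct_smul, one_mulVec,
    smul_eq_mul, sub_mul]
  rw [one_div, sub_le_sub_iff_left, inv_mul_le_iff₀ hn, ← mul_assoc]
  exact hW x

lemma sum_dotProduct_inv_shiftGram_mulVec (h : IsUnit (shiftGram n z W)) :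
    ∑ i, 1 / n * (W i ⬝ᵥ (shiftGram n z W)⁻¹ *ᵥ W i)
      = z * (shiftGram n z W)⁻¹.trace - Fintype.card Q := by
  have htr := congrArg Matrix.trace (mul_nonsing_inv _ ((isUnit_iff_isUnit_det _).1 h))
  conv_lhs at htr => enter [1, 1]; rw [shiftGram]
  rw [sub_mul, trace_sub, smul_mul, smul_mul, trace_smul, trace_smul, Matrix.one_mul,
    trace_one, smul_eq_mul, smul_eq_mul, trace_transpose_mul_self_mul, Finset.mul_sum] at htr
  linarith

lemma GramLE.abs_trace_inv_sub_trace_inv_updateRow_le [DecidableEq N] (hn : 0 < n) (hζ : 0 ≤ ζ)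
    (hz : ζ < z) (hW : GramLE W (n * ζ)) (i : N) :
    |(shiftGram n z W)⁻¹.trace - (shiftGram n z (W.updateRow i 0))⁻¹.trace|
      ≤ ζ / (z - ζ) ^ 2 := by
  have hη : 0 < z - ζ := sub_pos.2 hz
  rw [le_div_iff₀' (by positivity), shiftGram_updateRow_zero]
  refine (sq_mul_abs_trace_inv_sub_trace_inv_add_le hη
    (hW.mul_le_dotProduct_shiftGram_mulVec hn z) (by positivity) ?_).trans ?_
  · rw [← shiftGram_updateRow_zero]
    exact (hW.updateRow_zero i).mul_le_dotProduct_shiftGram_mulVec hn z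
  · rw [one_div, inv_mul_le_iff₀ hn]
    exact hW.row_dotProduct_self_le (by positivity) i

lemma GramLE.dotProduct_inv_shiftGram_mulVec_le (hn : 0 < n) (hζ : 0 ≤ ζ) (hz : ζ < z)
    (hW : GramLE W (n * ζ)) (i : N) :
    1 / n * (W i ⬝ᵥ (shiftGram n z W)⁻¹ *ᵥ W i) ≤ ζ / (z - ζ) := by
  have hη : 0 < z - ζ := sub_pos.2 hz
  rw [le_div_iff₀' hη, mul_left_comm, one_div, inv_mul_le_iff₀ hn]
  exact (mul_dotProduct_inv_mulVec_le hη (hW.mul_le_dotProduct_shiftGram_mulVec hn z) _).trans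
    (hW.row_dotProduct_self_le (by positivity) i)

lemma GramLE.abs_one_sub_resTrace_mul_sub_resTrace_le [DecidableEq N] {ε : ℝ} (hn : 0 < n)
    (hζ : 0 ≤ ζ) (hz : ζ < z) (hW : GramLE W (n * ζ)) {i : N}
    (hε : |rowDeviation n z W i| ≤ ε * n) :
    |(1 - resTrace n z W) * (1 / n * (W i ⬝ᵥ (shiftGram n z W)⁻¹ *ᵥ W i)) - resTrace n z W|
      ≤ (1 + ζ / (z - ζ)) * (ε + ζ / ((z - ζ) ^ 2 * n)) := by
  have hη : 0 < z - ζ := sub_pos.2 hz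
  have hco := hW.mul_le_dotProduct_shiftGram_mulVec hn z
  have hco' := (hW.updateRow_zero i).mul_le_dotProduct_shiftGram_mulVec hn z
  set s := 1 / n * (W i ⬝ᵥ (shiftGram n z W)⁻¹ *ᵥ W i) with hs
  set q := 1 / n * (W i ⬝ᵥ (shiftGram n z (W.updateRow i 0))⁻¹ *ᵥ W i) with hq
  have hqs : (1 - q) * (1 + s) = 1 := by
    rw [hq, hs, shiftGram_updateRow_zero]
    refine one_sub_mul_one_add_dotProduct_inv_mulVec
      (isUnit_of_forall_mul_le_dotProduct_mulVec hη hco) ?_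
    rw [← shiftGram_updateRow_zero]
    exact isUnit_of_forall_mul_le_dotProduct_mulVec hη hco'
  have hs0 : 0 ≤ s := mul_nonneg (by positivity) (dotProduct_inv_mulVec_nonneg hη hco _)
  have hqφ : |q - resTrace n z W| ≤ ε + ζ / ((z - ζ) ^ 2 * n) := by
    have hsplit : q - resTrace n z W = (rowDeviation n z W i - ((shiftGram n z W)⁻¹.trace
        - (shiftGram n z (W.updateRow i 0))⁻¹.trace)) / n := by
      rw [hq, resTrace, rowDeviation]
      ring
    rw [hsplit, abs_div, abs_of_pos hn, div_le_iff₀ hn, add_mul, ← div_div,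
      div_mul_cancel₀ _ hn.ne']
    exact (abs_sub _ _).trans
      (add_le_add hε (hW.abs_trace_inv_sub_trace_inv_updateRow_le hn hζ hz i))
  have hfactor : (1 - resTrace n z W) * s - resTrace n z W = (1 + s) * (q - resTrace n z W) := by
    linear_combination hqs
  rw [hfactor, abs_mul, abs_of_nonneg (by positivity)]
  gcongr
  exact hW.dotProduct_inv_shiftGram_mulVec_le hn hζ hz i

lemma GramLE.abs_resTrace_equation_le [DecidableEq N] {ε : ℝ} (hn : 0 < n) (hζ : 0 ≤ ζ)
    (hz : ζ < z) (hW : GramLE W (n * ζ)) (hε : ∀ i, |rowDeviation n z W i| ≤ ε * n) :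
    |(1 - resTrace n z W) * (z * resTrace n z W - Fintype.card Q / n)
        - Fintype.card N / n * resTrace n z W|
      ≤ Fintype.card N / n * ((1 + ζ / (z - ζ)) * (ε + ζ / ((z - ζ) ^ 2 * n))) := by
  have hsum := sum_dotProduct_inv_shiftGram_mulVec (isUnit_of_forall_mul_le_dotProduct_mulVec
    (sub_pos.2 hz) (hW.mul_le_dotProduct_shiftGram_mulVec hn z))
  have hmean : (1 - resTrace n z W) * (z * resTrace n z W - Fintype.card Q / n)
      - Fintype.card N / n * resTrace n z W = (∑ i, ((1 - resTrace n z W) *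
        (1 / n * (W i ⬝ᵥ (shiftGram n z W)⁻¹ *ᵥ W i)) - resTrace n z W)) / n := by
    rw [Finset.sum_sub_distrib, ← Finset.mul_sum, hsum, Finset.sum_const, Finset.card_univ,
      nsmul_eq_mul, resTrace]
    ring
  rw [hmean, abs_div, abs_of_pos hn, div_mul_eq_mul_div]
  gcongr
  refine (Finset.abs_sum_le_sum_abs _ _).trans ((Finset.sum_le_sum fun i _ =>
    hW.abs_one_sub_resTrace_mul_sub_resTrace_le hn hζ hz (hε i)).trans_eq ?_)
  rw [Finset.sum_const, Finset.card_univ, nsmul_eq_mul]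

end LeaveOneOut

/-! ### Concentration of the row quadratic forms -/

lemma isClosed_setOf_gramLE {N Q : Type*} [Fintype N] [Fintype Q] (r : ℝ) :
    IsClosed {W : Matrix N Q ℝ | GramLE W r} := by
  simp only [GramLE, Set.ofPred_forall]
  exact isClosed_iInter fun x => isClosed_le (by fun_prop) continuous_const

lemma measurable_nonsing_inv_apply {X n : Type*} [TopologicalSpace X] [MeasurableSpace X]
    [BorelSpace X] [Fintype n] [DecidableEq n] {A : X → Matrix n n ℝ} (hA : Continuous A)
    (i j : n) : Measurable fun x => (A x)⁻¹ i j := by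
  simp only [inv_def, Ring.inverse_eq_inv', Matrix.smul_apply, smul_eq_mul]
  exact hA.matrix_det.measurable.inv.mul
    ((continuous_apply_apply i j).comp hA.matrix_adjugate).measurable

lemma measurable_rowDeviation {X N Q : Type*} [TopologicalSpace X] [MeasurableSpace X]
    [BorelSpace X] [Fintype N] [DecidableEq N] [Fintype Q] [DecidableEq Q] {W : X → Matrix N Q ℝ}
    (hW : Continuous W) (n z : ℝ) (i : N) : Measurable fun x => rowDeviation n z (W x) i := by
  have hW' := hW.matrix_updateRow i (continuous_const (y := (0 : Q → ℝ)))
  have hG : Continuous fun x => shiftGram n z ((W x).updateRow i 0) :=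
    continuous_const.sub ((hW'.matrix_transpose.matrix_mul hW').fun_const_smul _)
  have hinv (a b : Q) := measurable_nonsing_inv_apply hG a b
  have hrow (a : Q) : Measurable fun x => W x i a := (hW.matrix_elem i a).measurable
  simp only [rowDeviation, dotProduct, mulVec, Matrix.trace, diag_apply]
  exact (Finset.measurable_fun_sum _ fun a _ => (hrow a).mul
    (Finset.measurable_fun_sum _ fun b _ => (hinv a b).mul (hrow b))).sub
    (Finset.measurable_fun_sum _ fun a _ => hinv a a)

lemma measurePreserving_update_row {N Q : Type*} [Fintype N] [Fintype Q] [DecidableEq N] (i : N) :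
    MeasurePreserving
      (fun (y : (N × Q → ℝ) × (Q → ℝ)) q => if q.1 = i then y.2 q.2 else y.1 q)
      ((gaussianPi (N × Q)).prod (gaussianPi Q)) (gaussianPi (N × Q)) := by
  let f : N × Q → (N × Q) ⊕ Q := fun q => if q.1 = i then Sum.inr q.2 else Sum.inl q
  have hf : Function.Injective f := fun q q' h => by
    by_cases hq : q.1 = i <;> by_cases hq' : q'.1 = i <;>
      simp only [f, hq, hq', if_true, if_false, reduceCtorEq, Sum.inl.injEq, Sum.inr.injEq] at h
    · exact Prod.ext (hq.trans hq'.symm) h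
    · exact h
  convert (measurePreserving_precomp_pi (gaussianReal 0 1) hf).comp
    (measurePreserving_sumPiEquivProdPi_symm fun _ : (N × Q) ⊕ Q => gaussianReal 0 1) using 1
  ext y q
  by_cases hq : q.1 = i <;> simp [f, hq, MeasurableEquiv.sumPiEquivProdPi]

/- Conditioning on all rows but the `i`-th. -/
lemma gaussianPi_le_of_forall_updateRow_le {N Q : Type*} [Fintype N] [Fintype Q] [DecidableEq N]
    (i : N) {E : Set (Matrix N Q ℝ)}
    (hE : MeasurableSet {w : N × Q → ℝ | Matrix.of (Function.curry w) ∈ E}) {b : ENNReal}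
    (h : ∀ V : Matrix N Q ℝ, gaussianPi Q {x | V.updateRow i x ∈ E} ≤ b) :
    gaussianPi (N × Q) {w | Matrix.of (Function.curry w) ∈ E} ≤ b := by
  rw [← (measurePreserving_update_row i).measure_preimage hE.nullMeasurableSet,
    Measure.prod_apply ((measurePreserving_update_row i).measurable hE)]
  have hsection (w : N × Q → ℝ) : Prod.mk w ⁻¹' ((fun (y : (N × Q → ℝ) × (Q → ℝ)) q =>
      if q.1 = i then y.2 q.2 else y.1 q) ⁻¹' {w | Matrix.of (Function.curry w) ∈ E})
      = {x | (Matrix.of (Function.curry w)).updateRow i x ∈ E} := by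
    ext x
    refine iff_of_eq (congrArg (· ∈ E) ?_)
    ext a b
    by_cases ha : a = i <;> simp [updateRow_apply, ha, Function.curry]
  simp only [hsection]
  exact (lintegral_mono fun w => h _).trans_eq (by rw [lintegral_const, measure_univ, mul_one])

lemma GramLE.gaussianPi_lt_abs_quadForm_sub_trace_le {N Q : Type*} [Fintype N] [Fintype Q]
    [DecidableEq Q] {V : Matrix N Q ℝ} {n ζ z ε L : ℝ} (hV : GramLE V (n * ζ)) (hn : 0 < n)
    (hz : ζ < z) (hε : 0 < ε) (hL : 0 < L) (hQ : (Fintype.card Q : ℝ) ≤ L * n) :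
    gaussianPi Q {x | ε * n < |x ⬝ᵥ (shiftGram n z V)⁻¹ *ᵥ x - (shiftGram n z V)⁻¹.trace|}
      ≤ ENNReal.ofReal (2 * Real.exp (-hansonWrightRate ((z - ζ) * ε) L * n)) := by
  have hη : 0 < z - ζ := sub_pos.2 hz
  have hco := hV.mul_le_dotProduct_shiftGram_mulVec hn z
  refine (measure_mono fun x hx => ?_).trans (gaussianPi_abs_quadForm_sub_trace_ge_le_exp_rate
    (B := (z - ζ) • (shiftGram n z V)⁻¹) (τ := (z - ζ) * ε * n)
    ((isHermitian_shiftGram n z V).inv.smul (isSelfAdjoint_iff.2 rfl)) (fun x => ?_)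
    (mul_pos hη hε) hL hn.le le_rfl hQ)
  · rw [Set.mem_ofPred_eq, smul_mulVec, dotProduct_smul, trace_smul, ← smul_sub, smul_eq_mul,
      abs_mul, abs_of_pos hη, mul_assoc]
    exact mul_le_mul_of_nonneg_left (le_of_lt hx) hη.le
  · rw [smul_mulVec, dotProduct_smul, smul_eq_mul, abs_of_nonneg
      (mul_nonneg hη.le (dotProduct_inv_mulVec_nonneg hη hco x))]
    exact mul_dotProduct_inv_mulVec_le hη hco x

lemma gaussianPi_gramLE_and_lt_abs_rowDeviation_le {N Q : Type*} [Fintype N] [Fintype Q]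
    [DecidableEq N] [DecidableEq Q] (i : N) {n ζ z ε L : ℝ} (hn : 0 < n) (hz : ζ < z)
    (hε : 0 < ε) (hL : 0 < L) (hQ : (Fintype.card Q : ℝ) ≤ L * n) :
    gaussianPi (N × Q) {w | Matrix.of (Function.curry w) ∈ {W : Matrix N Q ℝ |
        GramLE (W.updateRow i 0) (n * ζ) ∧ ε * n < |rowDeviation n z W i|}}
      ≤ ENNReal.ofReal (2 * Real.exp (-hansonWrightRate ((z - ζ) * ε) L * n)) := by
  have hcont : Continuous fun w : N × Q → ℝ => Matrix.of (Function.curry w) :=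
    continuous_matrix fun a b => continuous_apply (a, b)
  refine gaussianPi_le_of_forall_updateRow_le i ?_ fun V => ?_
  · exact ((isClosed_setOf_gramLE _).preimage
      (hcont.matrix_updateRow i continuous_const)).measurableSet.inter
      (measurableSet_lt measurable_const (measurable_rowDeviation hcont n z i).abs)
  simp only [Set.mem_ofPred_eq, rowDeviation, updateRow_idem, updateRow_self]
  by_cases hV : GramLE (V.updateRow i 0) (n * ζ)
  · simpa only [hV, true_and] using hV.gaussianPi_lt_abs_quadForm_sub_trace_le hn hz hε hL hQ
  · simp [hV]

lemma ae_eventually_abs_rowDeviation_le {Ω : Type*} [MeasurableSpace Ω] {P : Measure Ω}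
    {N Q : ℕ → ℕ} {W : ∀ n, Ω → Matrix (Fin (N n)) (Fin (Q n)) ℝ}
    (hW : ∀ n, IIDGaussian P (fun ω => matEntries (W n ω)) 1) {a c : ℝ} (hc : 0 ≤ c)
    (hN : Tendsto (fun n : ℕ => (N n : ℝ) / n) atTop (𝓝 a))
    (hQ : Tendsto (fun n : ℕ => (Q n : ℝ) / n) atTop (𝓝 c)) {ζ z ε : ℝ} (hz : ζ < z)
    (hε : 0 < ε) :
    ∀ᵐ ω ∂P, ∀ᶠ n : ℕ in atTop, ∀ i, GramLE ((W n ω).updateRow i 0) (n * ζ) →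
      |rowDeviation n z (W n ω) i| ≤ ε * n := by
  have hrate := hansonWrightRate_pos (mul_pos (sub_pos.2 hz) hε) (by positivity : 0 < c + 1)
  set κ := hansonWrightRate ((z - ζ) * ε) (c + 1)
  have hbound : ∀ᶠ n : ℕ in atTop, P {ω | ∃ i, GramLE ((W n ω).updateRow i 0) (n * ζ) ∧
      ε * n < |rowDeviation n z (W n ω) i|}
      ≤ ENNReal.ofReal ((a + 1) * 2 * ((n : ℝ) ^ 1 * Real.exp (-κ * n))) := by
    filter_upwards [hN.eventually_lt_const (lt_add_one a), hQ.eventually_lt_const (lt_add_one c),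
      eventually_gt_atTop 0] with n hNn hQn hn
    have hn : (0 : ℝ) < n := Nat.cast_pos.2 hn
    rw [div_lt_iff₀ hn] at hNn hQn
    rw [Set.ofPred_exists]
    refine (measure_iUnion_fintype_le _ _).trans ((Finset.sum_le_sum fun i _ =>
      ((hW n).measure_le _).trans (gaussianPi_gramLE_and_lt_abs_rowDeviation_le i hn hz hε
        (by positivity : 0 < c + 1) (by simpa using hQn.le))).trans ?_)
    rw [Finset.sum_const, Finset.card_univ, Fintype.card_fin, ← ENNReal.ofReal_nsmul]
    refine ENNReal.ofReal_le_ofReal ?_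
    calc N n • (2 * Real.exp (-κ * n)) = N n * (2 * Real.exp (-κ * n)) := nsmul_eq_mul _ _
      _ ≤ (a + 1) * n * (2 * Real.exp (-κ * n)) := by gcongr
      _ = (a + 1) * 2 * ((n : ℝ) ^ 1 * Real.exp (-κ * n)) := by ring
  filter_upwards [ae_eventually_notMem_of_eventually_le_ofReal
    ((Real.summable_pow_mul_exp_neg_nat_mul 1 hrate).mul_left _) hbound] with ω hω
  filter_upwards [hω] with n hn i hi
  by_contra hlt
  exact hn ⟨i, hi, not_le.1 hlt⟩

lemma ae_tendsto_resTrace_equation {Ω : Type*} [MeasurableSpace Ω] {P : Measure Ω}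
    {N Q : ℕ → ℕ} {W : ∀ n, Ω → Matrix (Fin (N n)) (Fin (Q n)) ℝ}
    (hW : ∀ n, IIDGaussian P (fun ω => matEntries (W n ω)) 1) {a c : ℝ} (ha : 0 ≤ a) (hc : 0 ≤ c)
    (hN : Tendsto (fun n : ℕ => (N n : ℝ) / n) atTop (𝓝 a))
    (hQ : Tendsto (fun n : ℕ => (Q n : ℝ) / n) atTop (𝓝 c)) {z : ℝ} (hz : (√a + √c) ^ 2 < z) :
    ∀ᵐ ω ∂P, Tendsto (fun n : ℕ => (1 - resTrace n z (W n ω)) *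
        (z * resTrace n z (W n ω) - Q n / n) - N n / n * resTrace n z (W n ω)) atTop (𝓝 0) := by
  obtain ⟨ζ, hζ, hζz⟩ := exists_between hz
  have hζ0 : 0 ≤ ζ := (sq_nonneg _).trans hζ.le
  have : 0 < z - ζ := sub_pos.2 hζz
  filter_upwards [ae_all_iff.2 fun m : ℕ => ae_eventually_abs_rowDeviation_le hW hc hN hQ hζz
    (Nat.one_div_pos_of_nat (α := ℝ) (n := m)), ae_eventually_gramLE hW ha hc hN hQ hζ]
    with ω hdev hgram
  rw [tendsto_zero_iff_abs_tendsto_zero]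
  refine tendsto_order.2 ⟨fun _ h => .of_forall fun _ => h.trans_le (abs_nonneg _), fun δ hδ => ?_⟩
  have hbound (ε : ℝ) : Tendsto (fun n : ℕ => (N n : ℝ) / n * ((1 + ζ / (z - ζ)) *
      (ε + ζ / ((z - ζ) ^ 2 * n)))) atTop (𝓝 (a * ((1 + ζ / (z - ζ)) * (ε + 0)))) :=
    hN.mul ((tendsto_const_nhds.add (Tendsto.const_div_atTop
      (tendsto_natCast_atTop_atTop.const_mul_atTop (by positivity)) _)).const_mul _)
  have hlim : Tendsto (fun m : ℕ => a * ((1 + ζ / (z - ζ)) * (1 / ((m : ℝ) + 1) + 0))) atTop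
      (𝓝 0) := by
    simpa using (tendsto_one_div_add_atTop_nhds_zero_nat.const_mul (1 + ζ / (z - ζ))).const_mul a
  obtain ⟨m, hm⟩ := (hlim.eventually_lt_const hδ).exists
  filter_upwards [hdev m, hgram, (hbound _).eventually_lt_const hm, eventually_gt_atTop 0]
    with n hdev hgram hlt hn
  have h := hgram.abs_resTrace_equation_le (Nat.cast_pos.2 hn) hζ0 hζz
    fun i => hdev i (hgram.updateRow_zero i)
  rw [Fintype.card_fin, Fintype.card_fin] at h
  exact h.trans_lt hlt

/-! ### Convergence of the normalized resolvent trace -/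

lemma isHermitian_transpose_mul_self_real {N Q : Type*} [Fintype N] (W : Matrix N Q ℝ) :
    (Wᵀ * W).IsHermitian := by
  simpa only [conjTranspose_eq_transpose_of_trivial] using isHermitian_conjTranspose_mul_self W

lemma trace_inv_smul_one_sub_smul {Q : Type*} [Fintype Q] [DecidableEq Q] {A : Matrix Q Q ℝ}
    (hA : A.IsHermitian) {z c : ℝ} (h : ∀ i, z - c * hA.eigenvalues i ≠ 0) :
    (z • 1 - c • A)⁻¹.trace = ∑ i, (z - c * hA.eigenvalues i)⁻¹ := by
  let φ := Unitary.conjStarAlgAut ℝ (Matrix Q Q ℝ) hA.eigenvectorUnitary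
  have htrace (D : Matrix Q Q ℝ) : (φ D).trace = D.trace := by
    rw [Unitary.conjStarAlgAut_apply, trace_mul_cycle, Unitary.coe_star_mul_self, Matrix.one_mul]
  have hdiag : z • 1 - c • A = φ (diagonal fun i => z - c * hA.eigenvalues i) := by
    conv_lhs => rw [hA.spectral_theorem, ← map_one φ, ← map_smul, ← map_smul, ← map_sub]
    congr 1
    rw [smul_one_eq_diagonal, ← diagonal_smul, diagonal_sub]
    rfl
  have hinv : (z • 1 - c • A)⁻¹ = φ (diagonal fun i => (z - c * hA.eigenvalues i)⁻¹) := by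
    refine inv_eq_right_inv ?_
    simp only [hdiag, ← map_mul, diagonal_mul_diagonal, mul_inv_cancel₀ (h _), diagonal_one,
      map_one]
  rw [hinv, htrace, trace_diagonal]

lemma eigenvalues_transpose_mul_self_nonneg {N Q : Type*} [Fintype N] [Fintype Q] [DecidableEq Q]
    (W : Matrix N Q ℝ) (i : Q) :
    0 ≤ (isHermitian_transpose_mul_self_real W).eigenvalues i := by
  rw [← dotProduct_mulVec_eigenvectorBasis, dotProduct_transpose_mul_self_mulVec]
  exact dotProduct_self_nonneg _

lemma GramLE.eigenvalues_le {N Q : Type*} [Fintype N] [Fintype Q] [DecidableEq Q]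
    {W : Matrix N Q ℝ} {r : ℝ} (hW : GramLE W r) (i : Q) :
    (isHermitian_transpose_mul_self_real W).eigenvalues i ≤ r := by
  have h := hW ((isHermitian_transpose_mul_self_real W).eigenvectorBasis i).ofLp
  rwa [dotProduct_mulVec_eigenvectorBasis, dotProduct_eigenvectorBasis, if_pos rfl, mul_one] at h

section ResTrace

variable {N Q : Type*} [Fintype N] [Fintype Q] [DecidableEq Q] {n ζ : ℝ} {W : Matrix N Q ℝ}

lemma GramLE.sub_le_sub_eigenvalues (hW : GramLE W (n * ζ)) (hn : 0 < n) (z : ℝ) (i : Q) :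
    z - ζ ≤ z - 1 / n * (isHermitian_transpose_mul_self_real W).eigenvalues i := by
  rw [sub_le_sub_iff_left, one_div, inv_mul_le_iff₀ hn]
  exact hW.eigenvalues_le i

lemma GramLE.resTrace_eq (hW : GramLE W (n * ζ)) (hn : 0 < n) {z : ℝ} (hz : ζ < z) :
    resTrace n z W
      = (∑ i, (z - 1 / n * (isHermitian_transpose_mul_self_real W).eigenvalues i)⁻¹) / n := by
  rw [resTrace, shiftGram, trace_inv_smul_one_sub_smul (isHermitian_transpose_mul_self_real W)]
  exact fun i => ((sub_pos.2 hz).trans_le (hW.sub_le_sub_eigenvalues hn z i)).ne'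

lemma GramLE.resTrace_nonneg (hW : GramLE W (n * ζ)) (hn : 0 < n) {z : ℝ} (hz : ζ < z) :
    0 ≤ resTrace n z W := by
  rw [hW.resTrace_eq hn hz]
  exact div_nonneg (Finset.sum_nonneg fun i _ => inv_nonneg.2
    ((sub_nonneg.2 hz.le).trans (hW.sub_le_sub_eigenvalues hn z i))) hn.le

lemma GramLE.resTrace_le (hW : GramLE W (n * ζ)) (hn : 0 < n) {z : ℝ} (hz : ζ < z) :
    resTrace n z W ≤ Fintype.card Q / n * (z - ζ)⁻¹ := by
  rw [hW.resTrace_eq hn hz, div_mul_eq_mul_div]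
  gcongr
  refine (Finset.sum_le_card_nsmul _ _ _ fun i _ => ?_).trans_eq (nsmul_eq_mul _ _)
  exact inv_anti₀ (sub_pos.2 hz) (hW.sub_le_sub_eigenvalues hn z i)

lemma GramLE.antitoneOn_resTrace (hW : GramLE W (n * ζ)) (hn : 0 < n) :
    AntitoneOn (fun z => resTrace n z W) (Set.Ioi ζ) := fun y hy z hz hyz => by
  simp only [hW.resTrace_eq hn hy, hW.resTrace_eq hn hz]
  gcongr with i
  exact (sub_pos.2 hy).trans_le (hW.sub_le_sub_eigenvalues hn y i)

end ResTrace

lemma mpPoly_eq_neg_mul_of_root {c z r : ℝ} (hz : z ≠ 0) (hr0 : r ≠ 0) (hr : mpPoly c z r = 0)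
    (x : ℝ) : mpPoly c z x = -z * ((x - r) * (x - c / (z * r))) := by
  unfold mpPoly at hr ⊢
  field_simp
  linear_combination x * hr

lemma exists_mpPoly_other_root {c z r t : ℝ} (hz : 0 < z) (hr0 : 0 < r) (hrt : r < t)
    (ht1 : t < 1) (hr : mpPoly c z r = 0) (ht : 0 < mpPoly c z t) :
    ∃ R, t < R ∧ R < 1 ∧ ∀ x, mpPoly c z x = -z * ((x - r) * (x - R)) := by
  have hfac := mpPoly_eq_neg_mul_of_root hz.ne' hr0.ne' hr
  refine ⟨c / (z * r), ?_, ?_, hfac⟩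
  · by_contra! hle
    rw [hfac t, neg_mul, neg_pos] at ht
    exact ht.not_ge (mul_nonneg hz.le (mul_nonneg (sub_nonneg.2 hrt.le) (sub_nonneg.2 hle)))
  · by_contra! hle
    have h1 : -z * ((1 - r) * (1 - c / (z * r))) = -1 := by
      rw [← hfac 1, mpPoly]
      ring
    have h2 : 0 ≤ z * ((1 - r) * (c / (z * r) - 1)) :=
      mul_nonneg hz.le (mul_nonneg (sub_nonneg.2 (hrt.trans ht1).le) (sub_nonneg.2 hle))
    linarith

lemma mpPoly_other_root_lt {c z₀ z₁ r R₀ R₁ : ℝ} (hz₀ : 0 < z₀) (hz : z₀ < z₁)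
    (hfac : ∀ x, mpPoly c z₀ x = -z₀ * ((x - r) * (x - R₀))) (hroot : mpPoly c z₁ R₁ = 0)
    (hr : r < R₁) (hR0 : 0 < R₁) (hR1 : R₁ < 1) : R₀ < R₁ := by
  by_contra! hle
  have hneg : mpPoly c z₀ R₁ = mpPoly c z₁ R₁ - (z₁ - z₀) * (R₁ * (1 - R₁)) := by
    unfold mpPoly
    ring
  have h1 : 0 < (z₁ - z₀) * (R₁ * (1 - R₁)) :=
    mul_pos (sub_pos.2 hz) (mul_pos hR0 (sub_pos.2 hR1))
  have h2 : 0 ≤ z₀ * ((R₁ - r) * (R₀ - R₁)) :=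
    mul_nonneg hz₀.le (mul_nonneg (sub_nonneg.2 hr.le) (sub_nonneg.2 hle))
  rw [hfac, hroot] at hneg
  linarith

/- The larger root increases with the parameter, so it cannot be approached by the smaller of the
two approximate solutions. -/
lemma tendsto_small_root {ι : Type*} {F : Filter ι} {c z₀ z₁ r₀ r₁ t : ℝ} (hz₀ : 0 < z₀)
    (hz : z₀ < z₁) (h₀ : 0 < r₀) (h₁ : 0 < r₁) (ht₀ : r₀ < t) (ht₁ : r₁ < t) (ht1 : t < 1)
    (hr₀ : mpPoly c z₀ r₀ = 0) (hr₁ : mpPoly c z₁ r₁ = 0)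
    (hp₀ : 0 < mpPoly c z₀ t) (hp₁ : 0 < mpPoly c z₁ t) {x y : ι → ℝ}
    (hxy : ∀ᶠ n in F, y n ≤ x n) (hx : Tendsto (fun n => mpPoly c z₀ (x n)) F (𝓝 0))
    (hy : Tendsto (fun n => mpPoly c z₁ (y n)) F (𝓝 0)) :
    Tendsto y F (𝓝 r₁) := by
  have hz₁ : 0 < z₁ := hz₀.trans hz
  obtain ⟨R₀, hR₀, -, hfac₀⟩ := exists_mpPoly_other_root hz₀ h₀ ht₀ ht1 hr₀ hp₀
  obtain ⟨R₁, hR₁, hR₁', hfac₁⟩ := exists_mpPoly_other_root hz₁ h₁ ht₁ ht1 hr₁ hp₁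
  have hRR : R₀ < R₁ := mpPoly_other_root_lt hz₀ hz hfac₀ (by rw [hfac₁, sub_self]; ring)
    (ht₀.trans hR₁) (h₀.trans (ht₀.trans hR₁)) hR₁'
  obtain ⟨b, hb₀, hb₁⟩ := exists_between hRR
  have hxb : ∀ᶠ n in F, x n < b := by
    have hneg : mpPoly c z₀ b < 0 := by
      rw [hfac₀, neg_mul, neg_lt_zero]
      exact mul_pos hz₀ (mul_pos (by linarith) (by linarith))
    filter_upwards [hx.eventually_const_lt hneg] with n hn
    by_contra! hle
    rw [hfac₀, hfac₀, neg_mul, neg_mul, neg_lt_neg_iff, mul_lt_mul_iff_right₀ hz₀] at hn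
    exact hn.not_ge (mul_le_mul (by linarith) (by linarith) (by linarith) (by linarith))
  rw [← tendsto_sub_nhds_zero_iff]
  have hbound : Tendsto (fun n => |mpPoly c z₁ (y n)| / (z₁ * (R₁ - b))) F (𝓝 0) := by
    simpa using hy.abs.div_const (z₁ * (R₁ - b))
  refine squeeze_zero_norm' ?_ hbound
  filter_upwards [hxb, hxy] with n hxn hyn
  have hsub : R₁ - b ≤ |y n - R₁| := by
    rw [abs_sub_comm]
    exact (sub_le_sub_left (hyn.trans hxn.le) _).trans (le_abs_self _)
  rw [le_div_iff₀ (mul_pos hz₁ (sub_pos.2 hb₁)), hfac₁, Real.norm_eq_abs, abs_mul, abs_neg, abs_mul,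
    abs_of_pos hz₁, mul_left_comm]
  gcongr

/- A Pólya-type theorem: monotone functions converging pointwise on a dense set to a continuous
limit converge continuously. -/
lemma tendsto_prod_nhds_of_antitoneOn {ι : Type*} {F : Filter ι} {f : ι → ℝ → ℝ} {g : ℝ → ℝ}
    {s U : Set ℝ} {z₀ : ℝ} (hs : Dense s) (hU : U ∈ 𝓝 z₀) (hf : ∀ᶠ n in F, AntitoneOn (f n) U)
    (hfg : ∀ q ∈ s ∩ U, Tendsto (fun n => f n q) F (𝓝 (g q))) (hg : ContinuousAt g z₀) :
    Tendsto (fun x : ι × ℝ => f x.1 x.2) (F ×ˢ 𝓝 z₀) (𝓝 (g z₀)) := by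
  refine tendsto_order.2 ⟨fun y hy => ?_, fun y hy => ?_⟩
  · obtain ⟨b, hb, hbU⟩ := exists_Ico_subset_of_mem_nhds
      (inter_mem hU (hg.eventually_const_lt hy)) (exists_gt z₀)
    obtain ⟨q, hqs, hq, hqb⟩ := hs.exists_between hb
    obtain ⟨hqU, hyq⟩ := hbU ⟨hq.le, hqb⟩
    filter_upwards [(hf.and ((hfg q ⟨hqs, hqU⟩).eventually_const_lt hyq)).prod_mk
      (inter_mem hU (Iio_mem_nhds hq))] with x ⟨⟨hanti, hlt⟩, hxU, hxq⟩
    exact hlt.trans_le (hanti hxU hqU (le_of_lt hxq))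
  · obtain ⟨b, hb, hbU⟩ := exists_Ioc_subset_of_mem_nhds
      (inter_mem hU (hg.eventually_lt_const hy)) (exists_lt z₀)
    obtain ⟨q, hqs, hbq, hq⟩ := hs.exists_between hb
    obtain ⟨hqU, hyq⟩ := hbU ⟨hbq, hq.le⟩
    filter_upwards [(hf.and ((hfg q ⟨hqs, hqU⟩).eventually_lt_const hyq)).prod_mk
      (inter_mem hU (Ioi_mem_nhds hq))] with x ⟨⟨hanti, hlt⟩, hxU, hxq⟩
    exact (hanti hqU hxU (le_of_lt hxq)).trans_lt hlt

section TraceLimit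

variable {Ω : Type*} [MeasurableSpace Ω] {P : Measure Ω} {N Q : ℕ → ℕ}
  {W : ∀ n, Ω → Matrix (Fin (N n)) (Fin (Q n)) ℝ}

lemma ae_tendsto_mpPoly_resTrace (hW : ∀ n, IIDGaussian P (fun ω => matEntries (W n ω)) 1)
    {c : ℝ} (hc : 0 ≤ c) (hN : Tendsto (fun n : ℕ => (N n : ℝ) / n) atTop (𝓝 1))
    (hQ : Tendsto (fun n : ℕ => (Q n : ℝ) / n) atTop (𝓝 c)) {z : ℝ} (hz : (1 + √c) ^ 2 < z) :
    ∀ᵐ ω ∂P, Tendsto (fun n : ℕ => mpPoly c z (resTrace n z (W n ω))) atTop (𝓝 0) := by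
  obtain ⟨ζ, hζ, hζz⟩ := exists_between hz
  rw [← Real.sqrt_one] at hz hζ
  filter_upwards [ae_tendsto_resTrace_equation hW zero_le_one hc hN hQ hz,
    ae_eventually_gramLE hW zero_le_one hc hN hQ hζ] with ω heq hgram
  have hbdd : ∀ᶠ n : ℕ in atTop, |resTrace n z (W n ω)| ≤ (c + 1) * (z - ζ)⁻¹ := by
    filter_upwards [hgram, eventually_gt_atTop 0, hQ.eventually_lt_const (lt_add_one c)]
      with n hgram hn hQn
    have hn : (0 : ℝ) < n := Nat.cast_pos.2 hn
    rw [abs_of_nonneg (hgram.resTrace_nonneg hn hζz)]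
    refine (hgram.resTrace_le hn hζz).trans ?_
    rw [Fintype.card_fin]
    have := sub_pos.2 hζz
    gcongr
  have hbdd' : ∀ᶠ n : ℕ in atTop,
      |1 - resTrace n z (W n ω)| ≤ 1 + (c + 1) * (z - ζ)⁻¹ := by
    filter_upwards [hbdd] with n hn
    exact (abs_sub _ _).trans (by rw [abs_one]; gcongr)
  have hcorr := ((tendsto_sub_nhds_zero_iff.2 hQ).zero_mul_isBoundedUnder_le ⟨_, hbdd'⟩).add
    ((tendsto_sub_nhds_zero_iff.2 hN).zero_mul_isBoundedUnder_le ⟨_, hbdd⟩)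
  rw [add_zero] at hcorr
  refine (add_zero (0 : ℝ) ▸ heq.add hcorr).congr fun n => ?_
  rw [mpPoly]
  ring

lemma ae_tendsto_resTrace (hW : ∀ n, IIDGaussian P (fun ω => matEntries (W n ω)) 1)
    {γ : ℝ} (hγ : 1 ≤ γ) (hN : Tendsto (fun n : ℕ => (N n : ℝ) / n) atTop (𝓝 1))
    (hQ : Tendsto (fun n : ℕ => (Q n : ℝ) / n) atTop (𝓝 γ⁻¹)) {z : ℝ} (hz : bGamma γ < z) :
    ∀ᵐ ω ∂P, Tendsto (fun n : ℕ => resTrace n z (W n ω)) atTop (𝓝 (mpTrace γ z)) := by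
  have hγ0 : 0 < γ := zero_lt_one.trans_le hγ
  obtain ⟨z₀, hz₀, hz₀z⟩ := exists_between hz
  obtain ⟨ζ, hζ, hζz₀⟩ := exists_between hz₀
  filter_upwards [ae_tendsto_mpPoly_resTrace hW (inv_pos.2 hγ0).le hN hQ (bGamma_eq γ ▸ hz₀),
    ae_tendsto_mpPoly_resTrace hW (inv_pos.2 hγ0).le hN hQ (bGamma_eq γ ▸ hz),
    ae_eventually_gramLE hW zero_le_one (inv_pos.2 hγ0).le hN hQ
      (by rwa [Real.sqrt_one, ← bGamma_eq])] with ω hpoly₀ hpoly hgram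
  refine tendsto_small_root ((bGamma_nonneg γ).trans_lt hz₀) hz₀z (mpTrace_pos hγ hz₀)
    (mpTrace_pos hγ hz) (mpTrace_lt hγ hz₀) (mpTrace_lt hγ hz) ?_ (mpPoly_mpTrace hγ hz₀)
    (mpPoly_mpTrace hγ hz) (mpPoly_threshold_pos hγ0 hz₀) (mpPoly_threshold_pos hγ0 hz) ?_
    hpoly₀ hpoly
  · rw [div_lt_one (by positivity)]
    exact lt_one_add _
  · filter_upwards [hgram, eventually_gt_atTop 0] with n hgram hn
    exact hgram.antitoneOn_resTrace (Nat.cast_pos.2 hn) hζz₀ (hζz₀.trans hz₀z) hz₀z.le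

lemma ae_forall_eventually_gramLE (hW : ∀ n, IIDGaussian P (fun ω => matEntries (W n ω)) 1)
    {γ : ℝ} (hγ : 0 ≤ γ) (hN : Tendsto (fun n : ℕ => (N n : ℝ) / n) atTop (𝓝 1))
    (hQ : Tendsto (fun n : ℕ => (Q n : ℝ) / n) atTop (𝓝 γ⁻¹)) :
    ∀ᵐ ω ∂P, ∀ ζ, bGamma γ < ζ → ∀ᶠ n : ℕ in atTop, GramLE (W n ω) (n * ζ) := by
  have hrat : ∀ᵐ ω ∂P, ∀ r : ℚ, bGamma γ < r → ∀ᶠ n : ℕ in atTop, GramLE (W n ω) (n * r) :=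
    ae_all_iff.2 fun r => ae_all_iff.2 fun hr => ae_eventually_gramLE hW zero_le_one
      (inv_nonneg.2 hγ) hN hQ (by rwa [Real.sqrt_one, ← bGamma_eq])
  filter_upwards [hrat] with ω hω ζ hζ
  obtain ⟨r, hr, hrζ⟩ := exists_rat_btwn hζ
  filter_upwards [hω r hr] with n hn
  exact hn.mono (by gcongr)

lemma ae_tendsto_prod_resTrace (hW : ∀ n, IIDGaussian P (fun ω => matEntries (W n ω)) 1)
    {γ : ℝ} (hγ : 1 ≤ γ) (hN : Tendsto (fun n : ℕ => (N n : ℝ) / n) atTop (𝓝 1))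
    (hQ : Tendsto (fun n : ℕ => (Q n : ℝ) / n) atTop (𝓝 γ⁻¹)) :
    ∀ᵐ ω ∂P, ∀ z₀, bGamma γ < z₀ → Tendsto (fun x : ℕ × ℝ => resTrace x.1 x.2 (W x.1 ω))
      (atTop ×ˢ 𝓝 z₀) (𝓝 (mpTrace γ z₀)) := by
  have hlim : ∀ᵐ ω ∂P, ∀ q : ℚ, bGamma γ < q →
      Tendsto (fun n : ℕ => resTrace n q (W n ω)) atTop (𝓝 (mpTrace γ q)) :=
    ae_all_iff.2 fun q => ae_all_iff.2 fun hq => ae_tendsto_resTrace hW hγ hN hQ hq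
  filter_upwards [hlim, ae_forall_eventually_gramLE hW (zero_le_one.trans hγ) hN hQ]
    with ω hlim hgram z₀ hz₀
  obtain ⟨ζ, hζ, hζz₀⟩ := exists_rat_btwn hz₀
  refine tendsto_prod_nhds_of_antitoneOn (f := fun (n : ℕ) z => resTrace n z (W n ω))
    Rat.denseRange_cast (Ioi_mem_nhds hζz₀) ?_ ?_ (continuousAt_mpTrace hγ hz₀)
  · filter_upwards [hgram ζ hζ, eventually_gt_atTop 0] with n hgram hn
    exact hgram.antitoneOn_resTrace (Nat.cast_pos.2 hn)
  · rintro _ ⟨⟨q, rfl⟩, hq⟩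
    exact hlim q (hζ.trans hq)

end TraceLimit

/-! ### Ordered eigenvalues -/

lemma ofFn_ithEigDesc {p : ℕ} {A : Matrix (Fin p) (Fin p) ℝ} (hA : A.IsHermitian) :
    List.ofFn (fun α : Fin p => ithEigDesc A α)
      = (List.ofFn hA.eigenvalues).insertionSort (· ≥ ·) := by
  refine List.ext_getElem (by simp) fun i _ hi => ?_
  rw [List.getElem_ofFn, ithEigDesc, eigsDesc, dif_pos hA, List.getD_eq_getElem _ _ hi]

lemma ofFn_ithEigDesc_perm {p : ℕ} {A : Matrix (Fin p) (Fin p) ℝ} (hA : A.IsHermitian) :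
    (List.ofFn fun α : Fin p => ithEigDesc A α).Perm (List.ofFn hA.eigenvalues) :=
  ofFn_ithEigDesc hA ▸ List.perm_insertionSort _ _

lemma antitone_ithEigDesc {p : ℕ} {A : Matrix (Fin p) (Fin p) ℝ} (hA : A.IsHermitian) :
    Antitone fun α : Fin p => ithEigDesc A α := by
  have h := List.pairwise_insertionSort (· ≥ ·) (List.ofFn hA.eigenvalues)
  rw [← ofFn_ithEigDesc hA, List.pairwise_ofFn] at h
  exact fun a b hab => hab.eq_or_lt.elim (fun h => h ▸ le_rfl) fun hlt => h hlt

lemma exists_eigenvalues_eq_ithEigDesc {p : ℕ} {A : Matrix (Fin p) (Fin p) ℝ}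
    (hA : A.IsHermitian) (α : Fin p) : ∃ i, hA.eigenvalues i = ithEigDesc A α := by
  rw [← Set.mem_range, ← List.mem_ofFn', ← (ofFn_ithEigDesc_perm hA).mem_iff, List.mem_ofFn']
  exact Set.mem_range_self α

lemma sum_comp_ithEigDesc {p : ℕ} {A : Matrix (Fin p) (Fin p) ℝ} (hA : A.IsHermitian)
    {M : Type*} [AddCommMonoid M] (f : ℝ → M) :
    ∑ α : Fin p, f (ithEigDesc A α) = ∑ i, f (hA.eigenvalues i) := by
  have h := ((ofFn_ithEigDesc_perm hA).map f).sum_eq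
  rwa [List.map_ofFn, List.map_ofFn, List.sum_ofFn, List.sum_ofFn] at h

/-- `l` lists in decreasing order the eigenvalues of `(1 / n) Wᵀ W`; stated without a division, as
the model prescribes `n λ`. -/
def IsGramSpectrum {N : Type*} [Fintype N] {q : ℕ} (n : ℝ) (W : Matrix N (Fin q) ℝ)
    (l : Fin q → ℝ) : Prop :=
  ∀ α : Fin q, n * l α = ithEigDesc (Wᵀ * W) α

namespace IsGramSpectrum

variable {N : Type*} [Fintype N] {q : ℕ} {n : ℝ} {W : Matrix N (Fin q) ℝ} {l : Fin q → ℝ}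

lemma antitone (hl : IsGramSpectrum n W l) (hn : 0 < n) : Antitone l := fun a b hab =>
  le_of_mul_le_mul_left
    (by simpa only [hl _] using antitone_ithEigDesc (isHermitian_transpose_mul_self_real W) hab) hn

lemma nonneg (hl : IsGramSpectrum n W l) (hn : 0 < n) (a : Fin q) : 0 ≤ l a := by
  obtain ⟨i, hi⟩ := exists_eigenvalues_eq_ithEigDesc (isHermitian_transpose_mul_self_real W) a
  rw [← hl a] at hi
  exact nonneg_of_mul_nonneg_right (hi ▸ eigenvalues_transpose_mul_self_nonneg W i) hn

lemma le (hl : IsGramSpectrum n W l) (hn : 0 < n) {ζ : ℝ} (hW : GramLE W (n * ζ)) (a : Fin q) :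
    l a ≤ ζ := by
  obtain ⟨i, hi⟩ := exists_eigenvalues_eq_ithEigDesc (isHermitian_transpose_mul_self_real W) a
  rw [← hl a] at hi
  exact le_of_mul_le_mul_left (hi ▸ hW.eigenvalues_le i) hn

lemma resTrace_eq (hl : IsGramSpectrum n W l) (hn : 0 < n) {ζ z : ℝ} (hW : GramLE W (n * ζ))
    (hz : ζ < z) : resTrace n z W = (∑ a, (z - l a)⁻¹) / n := by
  rw [hW.resTrace_eq hn hz, ← sum_comp_ithEigDesc (isHermitian_transpose_mul_self_real W)
    fun t => (z - 1 / n * t)⁻¹]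
  congr! 4 with a
  rw [← hl a, one_div, inv_mul_cancel_left₀ hn.ne']

end IsGramSpectrum

/-! ### Weighted sums of products of Gaussian entries -/

lemma abs_sum_mul_le_of_antitoneOn {α : Type*} [LinearOrder α] {s : Finset α} {ρ ξ : α → ℝ}
    {C B : ℝ} (hρ : AntitoneOn ρ s) (h0 : ∀ a ∈ s, 0 ≤ ρ a) (hρC : ∀ a ∈ s, ρ a ≤ C) (hC : 0 ≤ C)
    (hB : 0 ≤ B) (hξ : ∀ b ∈ s, |∑ a ∈ s with a ≤ b, ξ a| ≤ B) :
    |∑ a ∈ s, ρ a * ξ a| ≤ C * B := by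
  induction s using Finset.induction_on_max generalizing ρ C with
  | empty => simpa using mul_nonneg hC hB
  | insert b s hb ih =>
    have hbs : b ∉ s := fun h => (hb b h).false
    have hmem : ∀ {a}, a ∈ s → a ∈ insert b s := Finset.mem_insert_of_mem
    have hself := Finset.mem_insert_self b s
    have htail : |∑ a ∈ s, (ρ a - ρ b) * ξ a| ≤ (C - ρ b) * B := by
      refine ih (fun x hx y hy hxy => ?_) (fun a ha => sub_nonneg.2 ?_)
        (fun a ha => sub_le_sub_right (hρC a (hmem ha)) _) (sub_nonneg.2 (hρC b hself))
        fun a ha => ?_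
      · exact sub_le_sub_right (hρ (hmem hx) (hmem hy) hxy) _
      · exact hρ (hmem ha) hself (hb a ha).le
      · have h := hξ a (hmem ha)
        rwa [Finset.filter_insert, if_neg (hb a ha).not_ge] at h
    have htotal : |∑ a ∈ insert b s, ξ a| ≤ B := by
      have h := hξ b hself
      rwa [Finset.filter_true_of_mem fun a ha => ?_] at h
      exact (Finset.mem_insert.1 ha).elim le_of_eq fun h => (hb a h).le
    calc |∑ a ∈ insert b s, ρ a * ξ a|
        = |∑ a ∈ s, (ρ a - ρ b) * ξ a + ρ b * ∑ a ∈ insert b s, ξ a| := by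
          rw [Finset.sum_insert hbs, Finset.sum_insert hbs, mul_add, Finset.mul_sum,
            add_left_comm, ← Finset.sum_add_distrib]
          simp only [← add_mul, sub_add_cancel]
      _ ≤ (C - ρ b) * B + ρ b * B := (abs_add_le _ _).trans <| by
          rw [abs_mul, abs_of_nonneg (h0 b hself)]
          exact add_le_add htail (mul_le_mul_of_nonneg_left htotal (h0 b hself))
      _ = C * B := by ring

/-- The law of large numbers with mean `t` for a triangular array, uniformly over the prefixes of
its `n`-th row: every prefix sum of `ξ n - t` is `o(n)`. -/
def PrefixSumsLLN {q : ℕ → ℕ} (ξ : ∀ n, Fin (q n) → ℝ) (t : ℝ) : Prop :=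
  ∀ ε > 0, ∀ᶠ n : ℕ in atTop, ∀ b, |∑ a with a ≤ b, (ξ n a - t)| ≤ ε * n

lemma PrefixSumsLLN.tendsto_weighted_sum {q : ℕ → ℕ} {ξ : ∀ n, Fin (q n) → ℝ} {t : ℝ}
    (hξ : PrefixSumsLLN ξ t) {X : Type*} {F : Filter X} {N : X → ℕ} (hN : Tendsto N F atTop)
    {ρ : ∀ x, Fin (q (N x)) → ℝ} {C : ℝ}
    (hρ : ∀ᶠ x in F, Antitone (ρ x) ∧ ∀ a, ρ x a ∈ Set.Icc 0 C) :
    Tendsto (fun x => (∑ a, ρ x a * (ξ (N x) a - t)) / N x) F (𝓝 0) := by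
  rw [Metric.tendsto_nhds]
  intro ε hε
  have hC : 0 < |C| + 1 := by positivity
  filter_upwards [hρ, hN.eventually (hξ (ε / 2 / (|C| + 1)) (by positivity)),
    hN.eventually_gt_atTop 0] with x ⟨hanti, hmem⟩ hsum hx
  have hx : (0 : ℝ) < N x := Nat.cast_pos.2 hx
  rw [Real.dist_0_eq_abs, abs_div, abs_of_pos hx, div_lt_iff₀ hx]
  calc |∑ a, ρ x a * (ξ (N x) a - t)|
      ≤ (|C| + 1) * (ε / 2 / (|C| + 1) * N x) :=
        abs_sum_mul_le_of_antitoneOn (hanti.antitoneOn _) (fun a _ => (hmem a).1)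
          (fun a _ => (hmem a).2.trans ((le_abs_self C).trans (lt_add_one _).le)) hC.le
          (by positivity) fun b _ => hsum b
    _ = ε / 2 * N x := by rw [← mul_assoc, mul_div_cancel₀ _ hC.ne']
    _ < ε * N x := mul_lt_mul_of_pos_right (half_lt_self hε) hx

lemma sum_sq_comp_le_dotProduct_self {ι α : Type*} [Fintype ι] {f : α → ι}
    (hf : Function.Injective f) (s : Finset α) (x : ι → ℝ) :
    ∑ a ∈ s, x (f a) ^ 2 ≤ x ⬝ᵥ x :=
  calc ∑ a ∈ s, x (f a) ^ 2 = ∑ i ∈ s.map ⟨f, hf⟩, x i ^ 2 := by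
        rw [Finset.sum_map, Function.Embedding.coeFn_mk]
    _ ≤ ∑ i, x i ^ 2 := Finset.sum_le_univ_sum_of_nonneg fun i => sq_nonneg _
    _ = x ⬝ᵥ x := by simp only [dotProduct, sq]

/-- The symmetric matrix of the quadratic form `x ↦ ∑ a ∈ s, x (f a) * x (g a)`. -/
def pairMatrix {ι α : Type*} [DecidableEq ι] (s : Finset α) (f g : α → ι) : Matrix ι ι ℝ :=
  ∑ a ∈ s, (1 / 2 : ℝ) • (single (f a) (g a) 1 + single (g a) (f a) 1)

section PairMatrix

variable {ι α : Type*} [DecidableEq ι] (s : Finset α) (f g : α → ι)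

lemma isHermitian_pairMatrix : (pairMatrix s f g).IsHermitian := by
  rw [IsHermitian, pairMatrix, conjTranspose_sum]
  simp [add_comm]

variable [Fintype ι]

lemma dotProduct_pairMatrix_mulVec (x : ι → ℝ) :
    x ⬝ᵥ pairMatrix s f g *ᵥ x = ∑ a ∈ s, x (f a) * x (g a) := by
  have hsingle (i j : ι) : x ⬝ᵥ single i j (1 : ℝ) *ᵥ x = x i * x j := by
    simp [single_mulVec, dotProduct, Function.update_apply]
  rw [pairMatrix, sum_mulVec, dotProduct_sum]
  refine Finset.sum_congr rfl fun a _ => ?_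
  rw [smul_mulVec, add_mulVec, dotProduct_smul, dotProduct_add, hsingle, hsingle, smul_eq_mul]
  ring

lemma trace_pairMatrix : (pairMatrix s f g).trace = ∑ a ∈ s, (1 : Matrix ι ι ℝ) (f a) (g a) := by
  rw [pairMatrix, trace_sum]
  refine Finset.sum_congr rfl fun a _ => ?_
  obtain h | h := eq_or_ne (f a) (g a)
  · rw [h, one_apply_eq, trace_smul, trace_add, trace_single_eq_same, smul_eq_mul]
    norm_num
  · rw [one_apply_ne h, trace_smul, trace_add, trace_single_eq_of_ne _ _ _ h,
      trace_single_eq_of_ne _ _ _ h.symm, add_zero, smul_zero]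

variable {s f g}

lemma abs_dotProduct_pairMatrix_mulVec_le (hf : Function.Injective f) (hg : Function.Injective g)
    (x : ι → ℝ) : |x ⬝ᵥ pairMatrix s f g *ᵥ x| ≤ x ⬝ᵥ x :=
  calc |x ⬝ᵥ pairMatrix s f g *ᵥ x|
      ≤ ∑ a ∈ s, |x (f a) * x (g a)| :=
        dotProduct_pairMatrix_mulVec s f g x ▸ Finset.abs_sum_le_sum_abs _ _
    _ ≤ ∑ a ∈ s, 1 / 2 * (x (f a) ^ 2 + x (g a) ^ 2) := by
        gcongr with a
        rw [abs_mul, ← sq_abs (x (f a)), ← sq_abs (x (g a))]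
        linarith [two_mul_le_add_sq |x (f a)| |x (g a)|]
    _ ≤ x ⬝ᵥ x := by
        rw [← Finset.mul_sum, Finset.sum_add_distrib]
        linarith [sum_sq_comp_le_dotProduct_self hf s x,
          sum_sq_comp_le_dotProduct_self hg s x]

lemma gaussianPi_le_abs_sum_mul_sub_le (hf : Function.Injective f) (hg : Function.Injective g)
    {η L r : ℝ} (hη : 0 < η) (hL : 0 < L) (hr : 0 ≤ r) (hcard : (Fintype.card ι : ℝ) ≤ L * r) :
    gaussianPi ι {x | η * r ≤ |∑ a ∈ s, (x (f a) * x (g a) - (1 : Matrix ι ι ℝ) (f a) (g a))|}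
      ≤ ENNReal.ofReal (2 * Real.exp (-hansonWrightRate η L * r)) := by
  simpa only [dotProduct_pairMatrix_mulVec, trace_pairMatrix, Finset.sum_sub_distrib] using
    gaussianPi_abs_quadForm_sub_trace_ge_le_exp_rate (isHermitian_pairMatrix s f g)
      (abs_dotProduct_pairMatrix_mulVec_le hf hg) hη hL hr le_rfl hcard

end PairMatrix

section PrefixSums

variable {Ω : Type*} [MeasurableSpace Ω] {P : Measure Ω} {J : Type*} [Fintype J] [DecidableEq J]
  {q : ℕ → ℕ} {A : ∀ n, Ω → Matrix J (Fin (q n)) ℝ} {c : ℝ}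

lemma ae_eventually_abs_prefix_sum_lt (hA : ∀ n, IIDGaussian P (fun ω => matEntries (A n ω)) 1)
    (hc : 0 ≤ c) (hq : Tendsto (fun n : ℕ => (q n : ℝ) / n) atTop (𝓝 c)) (i j : J) {ε : ℝ}
    (hε : 0 < ε) :
    ∀ᵐ ω ∂P, ∀ᶠ n : ℕ in atTop, ∀ b : Fin (q n),
      |∑ a with a ≤ b, (A n ω i a * A n ω j a - (1 : Matrix J J ℝ) i j)| < ε * n := by
  have hL : 0 < Fintype.card J * (c + 1) + 1 := by positivity
  have hrate := hansonWrightRate_pos hε hL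
  set κ := hansonWrightRate ε (Fintype.card J * (c + 1) + 1)
  have hbound : ∀ᶠ n : ℕ in atTop, P {ω | ∃ b : Fin (q n),
      ε * n ≤ |∑ a with a ≤ b, (A n ω i a * A n ω j a - (1 : Matrix J J ℝ) i j)|}
      ≤ ENNReal.ofReal ((c + 1) * 2 * ((n : ℝ) ^ 1 * Real.exp (-κ * n))) := by
    filter_upwards [hq.eventually_lt_const (lt_add_one c), eventually_gt_atTop 0] with n hqn hn
    have hn : (0 : ℝ) < n := Nat.cast_pos.2 hn
    rw [div_lt_iff₀ hn] at hqn
    have hcard : (Fintype.card (J × Fin (q n)) : ℝ) ≤ (Fintype.card J * (c + 1) + 1) * n := by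
      rw [Fintype.card_prod, Fintype.card_fin, Nat.cast_mul, add_mul, mul_assoc]
      exact le_add_of_le_of_nonneg (by gcongr) (by positivity)
    have htail (b : Fin (q n)) := ((hA n).measure_le _).trans <| gaussianPi_le_abs_sum_mul_sub_le
      (s := {a | a ≤ b}) (Prod.mk_right_injective i) (Prod.mk_right_injective j) hε hL hn.le hcard
    simp only [one_apply, Prod.mk.injEq, and_true] at htail ⊢
    rw [Set.ofPred_exists]
    refine (measure_iUnion_fintype_le _ _).trans ((Finset.sum_le_sum fun b _ => htail b).trans ?_)
    rw [Finset.sum_const, Finset.card_univ, Fintype.card_fin, ← ENNReal.ofReal_nsmul]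
    refine ENNReal.ofReal_le_ofReal ?_
    calc q n • (2 * Real.exp (-κ * n)) = q n * (2 * Real.exp (-κ * n)) := nsmul_eq_mul _ _
      _ ≤ (c + 1) * n * (2 * Real.exp (-κ * n)) := by gcongr
      _ = (c + 1) * 2 * ((n : ℝ) ^ 1 * Real.exp (-κ * n)) := by ring
  filter_upwards [ae_eventually_notMem_of_eventually_le_ofReal
    ((Real.summable_pow_mul_exp_neg_nat_mul 1 hrate).mul_left _) hbound] with ω hω
  filter_upwards [hω] with n hn b
  exact not_le.1 fun hle => hn ⟨b, hle⟩

lemma ae_prefixSumsLLN (hA : ∀ n, IIDGaussian P (fun ω => matEntries (A n ω)) 1)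
    (hc : 0 ≤ c) (hq : Tendsto (fun n : ℕ => (q n : ℝ) / n) atTop (𝓝 c)) :
    ∀ᵐ ω ∂P, ∀ i j, PrefixSumsLLN (fun n a => A n ω i a * A n ω j a) ((1 : Matrix J J ℝ) i j) := by
  have h : ∀ᵐ ω ∂P, ∀ i j, ∀ m : ℕ, ∀ᶠ n : ℕ in atTop, ∀ b : Fin (q n),
      |∑ a with a ≤ b, (A n ω i a * A n ω j a - (1 : Matrix J J ℝ) i j)| < 1 / (m + 1 : ℝ) * n :=
    ae_all_iff.2 fun i => ae_all_iff.2 fun j => ae_all_iff.2 fun m =>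
      ae_eventually_abs_prefix_sum_lt hA hc hq i j Nat.one_div_pos_of_nat
  filter_upwards [h] with ω hω i j ε hε
  obtain ⟨m, hm⟩ := exists_nat_one_div_lt hε
  filter_upwards [hω i j m] with n hn b
  exact (hn b).le.trans (by gcongr)

end PrefixSums

lemma one_div_sqrt_mul_self (n : ℕ) : 1 / √(n : ℝ) * (1 / √n) = 1 / n := by
  rw [div_mul_div_comm, one_mul, Real.mul_self_sqrt n.cast_nonneg]

lemma inv_sqrt_smul_mul_mul_inv_sqrt_smul_transpose {I J Q : Type*} [Fintype Q] (n : ℕ)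
    (A : Matrix I Q ℝ) (M : Matrix Q Q ℝ) (B : Matrix J Q ℝ) :
    ((1 / √n) • A) * M * ((1 / √n) • B)ᵀ = (1 / (n : ℝ)) • (A * M * Bᵀ) := by
  rw [transpose_smul, Matrix.smul_mul, Matrix.smul_mul, Matrix.mul_smul, smul_smul,
    one_div_sqrt_mul_self]

lemma PrefixSumsLLN.tendsto_mul_diagonal_mul_transpose {I J : Type*} {q : ℕ → ℕ}
    {A : ∀ n, Matrix I (Fin (q n)) ℝ} {B : ∀ n, Matrix J (Fin (q n)) ℝ} {τ R : Matrix I J ℝ}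
    (hAB : ∀ i j, PrefixSumsLLN (fun n a => A n i a * B n j a) (τ i j))
    {X : Type*} {F : Filter X} {N : X → ℕ} (hN : Tendsto N F atTop)
    {ρ : ∀ x, Fin (q (N x)) → ℝ} {C : ℝ}
    (hρ : ∀ᶠ x in F, Antitone (ρ x) ∧ ∀ a, ρ x a ∈ Set.Icc 0 C)
    (hR : Tendsto (fun x => ((∑ a, ρ x a) / N x) • τ) F (𝓝 R)) :
    Tendsto (fun x => ((1 / √(N x)) • A (N x)) * diagonal (ρ x) * ((1 / √(N x)) • B (N x))ᵀ) F
      (𝓝 R) := by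
  have hsub : Tendsto (fun x => (1 / (N x : ℝ)) • (A (N x) * diagonal (ρ x) * (B (N x))ᵀ)
      - ((∑ a, ρ x a) / N x) • τ) F (𝓝 0) := by
    refine tendsto_pi_nhds.2 fun i => tendsto_pi_nhds.2 fun j => ?_
    refine ((hAB i j).tendsto_weighted_sum hN hρ).congr fun x => ?_
    have hentry : (A (N x) * diagonal (ρ x) * (B (N x))ᵀ) i j
        = ∑ a, ρ x a * (A (N x) i a * B (N x) j a) := by
      rw [mul_apply]
      exact Finset.sum_congr rfl fun a _ => by rw [mul_diagonal, transpose_apply]; ring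
    rw [Matrix.sub_apply, Matrix.smul_apply, Matrix.smul_apply, hentry, smul_eq_mul, smul_eq_mul,
      one_div_mul_eq_div, div_mul_eq_mul_div, ← sub_div, Finset.sum_mul,
      ← Finset.sum_sub_distrib]
    simp only [mul_sub]
  simpa only [inv_sqrt_smul_mul_mul_inv_sqrt_smul_transpose, sub_add_cancel, zero_add]
    using hsub.add hR

lemma PrefixSumsLLN.tendsto_mul_transpose_self {J : Type*} [DecidableEq J] {q : ℕ → ℕ}
    {A : ∀ n, Matrix J (Fin (q n)) ℝ}
    (hA : ∀ i j, PrefixSumsLLN (fun n a => A n i a * A n j a) ((1 : Matrix J J ℝ) i j)) {c : ℝ}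
    (hq : Tendsto (fun n : ℕ => (q n : ℝ) / n) atTop (𝓝 c)) :
    Tendsto (fun n : ℕ => ((1 / √n) • A n) * ((1 / √n) • A n)ᵀ) atTop (𝓝 (c • 1)) := by
  have h := tendsto_mul_diagonal_mul_transpose hA tendsto_id (ρ := fun _ _ => 1) (C := 1)
    (.of_forall fun n => ⟨antitone_const, fun _ => by simp⟩) (R := c • 1)
    (by simpa using hq.smul_const 1)
  simpa only [diagonal_one, Matrix.mul_one, id_eq] using h

/-! ### Gaussian blocks -/

namespace IIDGaussian

variable {Ω ι κ : Type*} [MeasurableSpace Ω] [Fintype ι] [Fintype κ] {P : Measure Ω} {v : NNReal}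

lemma comp_injective {X : Ω → ι → ℝ} (hX : IIDGaussian P X v) {f : κ → ι}
    (hf : Function.Injective f) : IIDGaussian P (fun ω => X ω ∘ f) v := by
  have h := measurePreserving_precomp_pi (gaussianReal 0 v) hf
  rw [IIDGaussian, ← h.map_eq, ← hX, AEMeasurable.map_map_of_aemeasurable
    h.measurable.aemeasurable hX.aemeasurable]
  rfl

lemma transpose {A : Ω → Matrix ι κ ℝ} (hA : IIDGaussian P (fun ω => matEntries (A ω)) v) :
    IIDGaussian P (fun ω => matEntries (A ω)ᵀ) v :=
  hA.comp_injective Prod.swap_injective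

lemma sumElim [IsFiniteMeasure P] {X : Ω → ι → ℝ} {Y : Ω → κ → ℝ} (hX : IIDGaussian P X v)
    (hY : IIDGaussian P Y v) (h : IndepFun X Y P) :
    IIDGaussian P (fun ω => Sum.elim (X ω) (Y ω)) v := by
  have hprod := (indepFun_iff_map_prod_eq_prod_map_map hX.aemeasurable hY.aemeasurable).1 h
  have hsum := measurePreserving_sumPiEquivProdPi_symm fun _ : ι ⊕ κ => gaussianReal 0 v
  have helim : (fun ω => Sum.elim (X ω) (Y ω))
      = (MeasurableEquiv.sumPiEquivProdPi fun _ : ι ⊕ κ => ℝ).symm ∘ fun ω => (X ω, Y ω) := by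
    funext ω s
    cases s <;> rfl
  rw [hX, hY] at hprod
  rw [IIDGaussian, helim, ← AEMeasurable.map_map_of_aemeasurable hsum.measurable.aemeasurable
    (hX.aemeasurable.prodMk hY.aemeasurable), hprod]
  exact hsum.map_eq

end IIDGaussian

lemma measurable_matEntries {m n : Type*} :
    Measurable (matEntries : Matrix m n ℝ → m × n → ℝ) :=
  measurable_pi_lambda _ fun q =>
    (measurable_pi_apply q.2).comp (measurable_pi_apply (X := fun _ : m => n → ℝ) q.1)

lemma IIDGaussian.fromRows {Ω I J Q : Type*} [MeasurableSpace Ω] [Fintype I] [Fintype J]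
    [Fintype Q] {P : Measure Ω} [IsFiniteMeasure P] {v : NNReal} {A : Ω → Matrix I Q ℝ}
    {B : Ω → Matrix J Q ℝ} (hA : IIDGaussian P (fun ω => matEntries (A ω)) v)
    (hB : IIDGaussian P (fun ω => matEntries (B ω)) v)
    (h : IndepFun (fun ω => matEntries (A ω)) (fun ω => matEntries (B ω)) P) :
    IIDGaussian P (fun ω => matEntries (Matrix.fromRows (A ω) (B ω))) v := by
  convert (hA.sumElim hB h).comp_injective (Equiv.sumProdDistrib I J Q).injective using 3 with ω
  ext ⟨i | j, a⟩ <;> rfl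

/-! ### Dimensions, weights and the algebra of the limit -/

lemma tendsto_natCast_div_self : Tendsto (fun n : ℕ => (n : ℝ) / n) atTop (𝓝 1) :=
  tendsto_const_nhds.congr' <| (eventually_ne_atTop 0).mono fun _ hn =>
    (div_self (Nat.cast_ne_zero.2 hn)).symm

lemma tendsto_natCast_sub_div {a b : ℕ → ℕ} {x y : ℝ}
    (ha : Tendsto (fun n : ℕ => (a n : ℝ) / n) atTop (𝓝 x))
    (hb : Tendsto (fun n : ℕ => (b n : ℝ) / n) atTop (𝓝 y)) (hyx : y ≤ x) :
    Tendsto (fun n : ℕ => ((a n - b n : ℕ) : ℝ) / n) atTop (𝓝 (x - y)) := by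
  have hcast (n : ℕ) : ((a n - b n : ℕ) : ℝ) = max ((a n : ℝ) - b n) 0 := by
    obtain h | h := le_total (b n) (a n)
    · rw [Nat.cast_sub h, max_eq_left (sub_nonneg.2 (Nat.cast_le.2 h))]
    · rw [Nat.sub_eq_zero_of_le h, Nat.cast_zero, max_eq_right (sub_nonpos.2 (Nat.cast_le.2 h))]
  have h := (ha.sub hb).max (tendsto_const_nhds (x := (0 : ℝ)))
  rw [max_eq_left (sub_nonneg.2 hyx)] at h
  refine h.congr fun n => ?_
  rw [hcast, ← sub_div, ← max_div_div_right n.cast_nonneg, zero_div]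

lemma antitone_mul_inv_sub {α : Type*} [Preorder α] {l : α → ℝ} {ζ z₁ z : ℝ} (hl : Antitone l)
    (hlζ : ∀ a, l a ∈ Set.Icc 0 ζ) (hζ : ζ < z₁) (hz : z₁ ≤ z) {g : ℝ → ℝ}
    (hg : MonotoneOn g (Set.Ici 0)) (hg0 : 0 ≤ g 0) :
    Antitone (fun a => g (l a) * (z - l a)⁻¹) ∧
      ∀ a, g (l a) * (z - l a)⁻¹ ∈ Set.Icc 0 (g ζ * (z₁ - ζ)⁻¹) := by
  have hnonneg (a : α) : 0 ≤ g (l a) := hg0.trans (hg Set.self_mem_Ici (hlζ a).1 (hlζ a).1)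
  have hpos (a : α) : z₁ - ζ ≤ z - l a := sub_le_sub hz (hlζ a).2
  have hinv (a : α) : 0 ≤ (z - l a)⁻¹ := inv_nonneg.2 ((sub_pos.2 hζ).le.trans (hpos a))
  refine ⟨fun a b hab => ?_, fun a => ⟨mul_nonneg (hnonneg a) (hinv a), ?_⟩⟩
  · exact mul_le_mul (hg (hlζ b).1 (hlζ a).1 (hl hab)) (inv_anti₀ ((sub_pos.2 hζ).trans_le (hpos a))
      (sub_le_sub_left (hl hab) z)) (hinv b) (hnonneg a)
  · exact mul_le_mul (hg (hlζ a).1 ((hlζ a).1.trans (hlζ a).2) (hlζ a).2)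
      (inv_anti₀ (sub_pos.2 hζ) (hpos a)) (hinv a)
      ((hnonneg a).trans (hg (hlζ a).1 ((hlζ a).1.trans (hlζ a).2) (hlζ a).2))

lemma inv_diagonal_add_transpose_mul_self_sub {K : Type*} [Field K] {I Q : Type*} [Fintype I]
    [DecidableEq I] [Fintype Q] [DecidableEq Q] {l : Q → K} {z : K} (hl : ∀ a, l a ≠ z)
    (Y : Matrix I Q K) {R : Matrix Q Q K} (hR : R = diagonal fun a => (z - l a)⁻¹)
    (hdet : (1 - Y * R * Yᵀ).det ≠ 0) :
    (diagonal l + Yᵀ * Y - z • 1)⁻¹ = -(R + R * Yᵀ * (1 - Y * R * Yᵀ)⁻¹ * Y * R) := by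
  have hright : (diagonal l - z • 1) * -R = 1 := by
    rw [hR, smul_one_eq_diagonal, diagonal_sub, diagonal_neg, diagonal_mul_diagonal,
      ← diagonal_one]
    congr! 2 with a
    rw [← inv_neg, neg_sub, mul_inv_cancel₀ (sub_ne_zero.2 (hl a))]
  have hinv : (diagonal l - z • 1)⁻¹ = -R := inv_eq_right_inv hright
  have hcore : (1 : Matrix I I K)⁻¹ + Y * (diagonal l - z • 1)⁻¹ * Yᵀ = 1 - Y * R * Yᵀ := by
    rw [hinv, inv_one, Matrix.mul_neg, Matrix.neg_mul, sub_eq_add_neg]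
  have h := Matrix.add_mul_mul_inv_eq_sub (diagonal l - z • 1) Yᵀ (1 : Matrix I I K) Y
    (IsUnit.of_mul_eq_one _ hright) isUnit_one
    (by rw [hcore, Matrix.isUnit_iff_isUnit_det]; exact hdet.isUnit)
  rw [hcore, hinv, Matrix.mul_one, sub_add_eq_add_sub] at h
  rw [h]
  simp only [Matrix.neg_mul, Matrix.mul_neg, neg_neg]
  abel

lemma tendsto_zero_of_tendsto_mul_transpose_self {ι I J : Type*} [Fintype J] {F : Filter ι}
    {A : ι → Matrix I J ℝ} (hA : Tendsto (fun x => A x * (A x)ᵀ) F (𝓝 0)) :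
    Tendsto A F (𝓝 0) := by
  refine tendsto_pi_nhds.2 fun i => tendsto_pi_nhds.2 fun j => ?_
  have hi := (tendsto_pi_nhds.1 (tendsto_pi_nhds.1 hA i) i).sqrt
  rw [Matrix.zero_apply, Real.sqrt_zero] at hi
  refine squeeze_zero_norm (fun x => ?_) hi
  refine Real.abs_le_sqrt ?_
  simpa only [mul_apply, transpose_apply, sq] using
    Finset.single_le_sum (f := fun j => A x i j * A x i j) (fun j _ => mul_self_nonneg _)
      (Finset.mem_univ j)

lemma one_sub_smul_one {K A : Type*} [Ring K] [Ring A] [Module K A] (a : K) :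
    (1 - a) • (1 : A) = 1 - a • 1 := by
  rw [sub_smul, one_smul]

lemma T0lim_eq {k : ℕ} {γ z : ℝ} (hγ : 1 ≤ γ) (hz : bGamma γ < z) {μ : Fin k → ℝ}
    (hμ : ∀ i, 0 ≤ μ i) {D : Matrix (Fin k) (Fin k) ℝ} (hD : D = diagonal fun i => √(μ i)) :
    T0lim γ μ z = diagonal μ + 1 - z • 1
      + (mpTrace γ z • diagonal μ + (z * mpTrace γ z - γ⁻¹) • 1)
      + (mpTrace γ z • D) * (1 - mpTrace γ z • (1 : Matrix (Fin k) (Fin k) ℝ))⁻¹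
        * (mpTrace γ z • D)ᵀ := by
  have hpoly := mpPoly_mpTrace hγ hz
  have hφ0 := (mpTrace_pos hγ hz).ne'
  have hφ1 := (sub_pos.2 (mpTrace_lt_one hγ hz)).ne'
  have hγ0 : γ ≠ 0 := (zero_lt_one.trans_le hγ).ne'
  have hm : mpStieltjes γ z = -(γ * mpTrace γ z) := by
    rw [mpTrace, mul_neg, neg_neg, mul_inv_cancel_left₀ hγ0]
  generalize mpTrace γ z = φ at *
  have hinv : (1 - φ • (1 : Matrix (Fin k) (Fin k) ℝ))⁻¹ = (1 - φ)⁻¹ • 1 := by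
    refine inv_eq_right_inv ?_
    rw [← one_sub_smul_one, Matrix.smul_mul, Matrix.one_mul, smul_smul, mul_inv_cancel₀ hφ1,
      one_smul]
  have hDD : D * Dᵀ = diagonal μ := by
    rw [hD, diagonal_transpose, diagonal_mul_diagonal]
    exact congrArg diagonal (funext fun i => Real.mul_self_sqrt (hμ i))
  have hcoeffD : (1 + γ⁻¹ * -(γ * φ))⁻¹ = 1 + φ + φ * ((1 - φ)⁻¹ * φ) := by
    rw [mul_neg, inv_mul_cancel_left₀ hγ0, ← sub_eq_add_neg]
    field_simp
    ring
  have hcoeff1 : (-(γ * φ))⁻¹ = 1 - z + (z * φ - γ⁻¹) := by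
    rw [mpPoly] at hpoly
    field_simp at hpoly ⊢
    linarith
  rw [T0lim, hm, hinv, hcoeffD, hcoeff1, transpose_smul]
  simp only [Matrix.mul_smul, Matrix.smul_mul, Matrix.mul_one, hDD]
  module

/-! ### The secular matrix -/

namespace BlockModel

variable {k : ℕ} {γ : ℝ} {p : ℕ → ℕ} {Ω : Type*} [MeasurableSpace Ω] {P : Measure Ω}
  {μ : Fin k → ℝ}

section Blocks

variable (M : BlockModel k γ p Ω P μ) (n : ℕ) (ω : Ω)

/-- The block `D_n + n^{-1/2} E_{n,11}` of `n^{-1/2} X̃_n`. -/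
def X11 : Matrix (Fin k) (Fin k) ℝ := diagonal (M.d n ω) + (1 / √n) • M.E11 n ω

/-- The block `n^{-1/2} E_{n,12}` of `n^{-1/2} X̃_n`. -/
def X12 : Matrix (Fin k) (Fin (p n - k)) ℝ := (1 / √n) • M.E12 n ω

/-- The block `n^{-1/2} E_{n,21}` of `n^{-1/2} X̃_n`. -/
def X21 : Matrix (Fin (p n - k)) (Fin k) ℝ := (1 / √n) • M.E21 n ω

/-- The block `Λ_n^{1/2}` of `n^{-1/2} X̃_n`. -/
def X22 : Matrix (Fin (p n - k)) (Fin (p n - k)) ℝ := diagonal fun a => √(M.lam n ω a)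

/-- The block `n^{-1/2} E_{n,31}` of `n^{-1/2} X̃_n`. -/
def X31 : Matrix (Fin (n - p n)) (Fin k) ℝ := (1 / √n) • M.E31 n ω

/-- The resolvent `(z - Λ_n)⁻¹`, whose sign makes it positive above the spectrum. -/
def resolvent (z : ℝ) : Matrix (Fin (p n - k)) (Fin (p n - k)) ℝ :=
  diagonal fun a => (z - M.lam n ω a)⁻¹

/-- The matrix with rows those of `E_{n,12}` and of `E_{n,21}ᵀ`: it has iid entries, and the inner
products of its rows gather those of `E_{n,12}`, of `E_{n,21}ᵀ`, and between the two. -/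
def offDiag : Matrix (Fin k ⊕ Fin k) (Fin (p n - k)) ℝ := fromRows (M.E12 n ω) (M.E21 n ω)ᵀ

lemma S11_eq : M.S11 n ω
    = (M.X11 n ω)ᵀ * M.X11 n ω + (M.X21 n ω)ᵀ * M.X21 n ω + (M.X31 n ω)ᵀ * M.X31 n ω := by
  have hdd : diagonal (fun i => M.d n ω i ^ 2) = diagonal (M.d n ω) * diagonal (M.d n ω) := by
    simp only [diagonal_mul_diagonal, sq]
  simp only [S11, X11, X21, X31, hdd, ← one_div_sqrt_mul_self, transpose_add, transpose_smul,
    diagonal_transpose, Matrix.add_mul, Matrix.mul_add, Matrix.smul_mul, Matrix.mul_smul,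
    smul_smul, smul_add]
  abel

lemma S12_eq : M.S12 n ω = (M.X11 n ω)ᵀ * M.X12 n ω + (M.X21 n ω)ᵀ * M.X22 n ω := by
  simp only [S12, X11, X12, X21, X22, ← one_div_sqrt_mul_self, transpose_add, transpose_smul,
    diagonal_transpose, Matrix.add_mul, Matrix.smul_mul, Matrix.mul_smul, smul_smul, smul_add]
  abel

lemma S21_eq : M.S21 n ω = (M.S12 n ω)ᵀ := by
  simp only [S21, S12, transpose_add, transpose_smul, transpose_mul, diagonal_transpose,
    transpose_transpose]

lemma S22_eq : M.S22 n ω = diagonal (M.lam n ω) + (M.X12 n ω)ᵀ * M.X12 n ω := by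
  rw [S22, X12, transpose_smul, Matrix.smul_mul, Matrix.mul_smul, smul_smul,
    one_div_sqrt_mul_self]

lemma transpose_resolvent (z : ℝ) : (M.resolvent n ω z)ᵀ = M.resolvent n ω z :=
  diagonal_transpose _

lemma transpose_X22 : (M.X22 n ω)ᵀ = M.X22 n ω :=
  diagonal_transpose _

lemma resolvent_mul_X22 (z : ℝ) : M.resolvent n ω z * M.X22 n ω
    = diagonal fun a => √(M.lam n ω a) * (z - M.lam n ω a)⁻¹ := by
  simp only [resolvent, X22, diagonal_mul_diagonal, mul_comm]

variable {n ω}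

lemma X22_mul_resolvent_mul_X22 (hl : ∀ a, 0 ≤ M.lam n ω a) (z : ℝ) :
    M.X22 n ω * M.resolvent n ω z * M.X22 n ω
      = diagonal fun a => M.lam n ω a * (z - M.lam n ω a)⁻¹ := by
  rw [Matrix.mul_assoc, resolvent_mul_X22, X22, diagonal_mul_diagonal]
  simp only [← mul_assoc, Real.mul_self_sqrt (hl _)]

lemma T_eq {z : ℝ} (hz : ∀ a, M.lam n ω a ≠ z)
    (hdet : (1 - M.X12 n ω * M.resolvent n ω z * (M.X12 n ω)ᵀ).det ≠ 0) :
    M.T n ω z = M.S11 n ω - z • 1 + M.S12 n ω * M.resolvent n ω z * (M.S12 n ω)ᵀ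
      + (M.S12 n ω * M.resolvent n ω z * (M.X12 n ω)ᵀ)
        * (1 - M.X12 n ω * M.resolvent n ω z * (M.X12 n ω)ᵀ)⁻¹
        * (M.S12 n ω * M.resolvent n ω z * (M.X12 n ω)ᵀ)ᵀ := by
  rw [T, S22_eq, S21_eq, inv_diagonal_add_transpose_mul_self_sub hz _ (resolvent.eq_1 M n ω z) hdet]
  simp only [transpose_mul, transpose_transpose, transpose_resolvent, Matrix.mul_neg,
    Matrix.neg_mul, Matrix.mul_add, Matrix.add_mul, Matrix.mul_assoc]
  abel

end Blocks

lemma tendsto_p_div (M : BlockModel k γ p Ω P μ) (hγ : 0 < γ) :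
    Tendsto (fun n : ℕ => (p n : ℝ) / n) atTop (𝓝 γ⁻¹) := by
  have hsqrt : Tendsto (fun n : ℕ => (√n)⁻¹) atTop (𝓝 0) :=
    tendsto_inv_atTop_zero.comp (Real.tendsto_sqrt_atTop.comp tendsto_natCast_atTop_atTop)
  have hdiv := (hsqrt.mul M.aspect).add_const γ
  rw [zero_mul, zero_add] at hdiv
  refine (hdiv.inv₀ hγ.ne').congr' ?_
  filter_upwards [eventually_gt_atTop 0] with n hn
  rw [inv_mul_cancel_left₀ (Real.sqrt_pos.2 (Nat.cast_pos.2 hn)).ne', sub_add_cancel, inv_div]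

lemma tendsto_p_sub_div (M : BlockModel k γ p Ω P μ) (hγ : 0 < γ) :
    Tendsto (fun n : ℕ => ((p n - k : ℕ) : ℝ) / n) atTop (𝓝 γ⁻¹) := by
  simpa only [sub_zero] using tendsto_natCast_sub_div (M.tendsto_p_div hγ)
    (tendsto_const_div_atTop_nhds_zero_nat _) (inv_nonneg.2 hγ.le)

lemma tendsto_sub_p_div (M : BlockModel k γ p Ω P μ) (hγ : 1 ≤ γ) :
    Tendsto (fun n : ℕ => ((n - p n : ℕ) : ℝ) / n) atTop (𝓝 (1 - γ⁻¹)) :=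
  tendsto_natCast_sub_div tendsto_natCast_div_self (M.tendsto_p_div (zero_lt_one.trans_le hγ))
    (inv_le_one_of_one_le₀ hγ)

lemma iidGaussian_offDiag [IsFiniteMeasure P] (M : BlockModel k γ p Ω P μ) (n : ℕ) :
    IIDGaussian P (fun ω => matEntries (M.offDiag n ω)) 1 :=
  (M.E12gauss n).fromRows (M.E21gauss n).transpose <| (M.indep3 n).comp measurable_matEntries <|
    (measurable_pi_lambda (fun A : Matrix (Fin (p n - k)) (Fin k) ℝ => matEntries Aᵀ) fun q =>
      (measurable_pi_apply q.swap).comp measurable_matEntries).comp measurable_fst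

/-- The almost sure properties of the blocks from which the limit of the secular matrix follows
deterministically. -/
structure Typical (M : BlockModel k γ p Ω P μ) (ω : Ω) : Prop where
  tendsto_d : ∀ i, Tendsto (fun n => M.d n ω i) atTop (𝓝 √(μ i))
  gramLE : ∀ ζ, bGamma γ < ζ → ∀ᶠ n in atTop, GramLE (M.W n ω) (n * ζ)
  tendsto_resTrace : ∀ z₀, bGamma γ < z₀ → Tendsto (fun x : ℕ × ℝ =>
    resTrace x.1 x.2 (M.W x.1 ω)) (atTop ×ˢ 𝓝 z₀) (𝓝 (mpTrace γ z₀))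
  lln_E11 : ∀ i j, PrefixSumsLLN (fun n a => M.E11 n ω i a * M.E11 n ω j a)
    ((1 : Matrix (Fin k) (Fin k) ℝ) i j)
  lln_E31 : ∀ i j, PrefixSumsLLN (fun n a => (M.E31 n ω)ᵀ i a * (M.E31 n ω)ᵀ j a)
    ((1 : Matrix (Fin k) (Fin k) ℝ) i j)
  lln_offDiag : ∀ i j, PrefixSumsLLN (fun n a => M.offDiag n ω i a * M.offDiag n ω j a)
    ((1 : Matrix (Fin k ⊕ Fin k) (Fin k ⊕ Fin k) ℝ) i j)

lemma ae_typical [IsFiniteMeasure P] (M : BlockModel k γ p Ω P μ) (hγ : 1 ≤ γ) :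
    ∀ᵐ ω ∂P, M.Typical ω := by
  have hγ0 : 0 < γ := zero_lt_one.trans_le hγ
  have hk : Tendsto (fun n : ℕ => (k : ℝ) / n) atTop (𝓝 0) :=
    tendsto_const_div_atTop_nhds_zero_nat _
  have hn_sub : Tendsto (fun n : ℕ => ((n - k : ℕ) : ℝ) / n) atTop (𝓝 1) := by
    simpa only [sub_zero] using tendsto_natCast_sub_div tendsto_natCast_div_self hk zero_le_one
  filter_upwards [M.dconv,
    ae_forall_eventually_gramLE M.Wgauss hγ0.le hn_sub (M.tendsto_p_sub_div hγ0),
    ae_tendsto_prod_resTrace M.Wgauss hγ hn_sub (M.tendsto_p_sub_div hγ0),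
    ae_prefixSumsLLN M.E11gauss le_rfl hk,
    ae_prefixSumsLLN (fun n => (M.E31gauss n).transpose)
      (sub_nonneg.2 (inv_le_one_of_one_le₀ hγ)) (M.tendsto_sub_p_div hγ),
    ae_prefixSumsLLN M.iidGaussian_offDiag (inv_nonneg.2 hγ0.le) (M.tendsto_p_sub_div hγ0)]
    with ω hd hgram hres h11 h31 hoff
  exact ⟨hd, hgram, hres, h11, h31, hoff⟩

namespace Typical

variable {M : BlockModel k γ p Ω P μ} {ω : Ω}

lemma lln_E12 (hT : M.Typical ω) (i j : Fin k) :
    PrefixSumsLLN (fun n a => M.E12 n ω i a * M.E12 n ω j a)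
      ((1 : Matrix (Fin k) (Fin k) ℝ) i j) := by
  simpa [offDiag, one_apply] using hT.lln_offDiag (.inl i) (.inl j)

lemma lln_E12_E21 (hT : M.Typical ω) (i j : Fin k) :
    PrefixSumsLLN (fun n a => M.E12 n ω i a * (M.E21 n ω)ᵀ j a) 0 := by
  simpa [offDiag] using hT.lln_offDiag (.inl i) (.inr j)

lemma lln_E21 (hT : M.Typical ω) (i j : Fin k) :
    PrefixSumsLLN (fun n a => (M.E21 n ω)ᵀ i a * (M.E21 n ω)ᵀ j a)
      ((1 : Matrix (Fin k) (Fin k) ℝ) i j) := by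
  simpa [offDiag, one_apply] using hT.lln_offDiag (.inr i) (.inr j)

lemma eventually_lam_mem_Icc (hT : M.Typical ω) {ζ : ℝ} (hζ : bGamma γ < ζ) :
    ∀ᶠ n in atTop, Antitone (M.lam n ω) ∧ ∀ a, M.lam n ω a ∈ Set.Icc 0 ζ := by
  filter_upwards [hT.gramLE ζ hζ, eventually_gt_atTop 0] with n hgram hn
  have hl : IsGramSpectrum n (M.W n ω) (M.lam n ω) := M.lamEig n ω
  have hn : (0 : ℝ) < n := Nat.cast_pos.2 hn
  exact ⟨hl.antitone hn, fun a => ⟨hl.nonneg hn a, hl.le hn hgram a⟩⟩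

lemma tendsto_X11 (hT : M.Typical ω) :
    Tendsto (fun n => M.X11 n ω) atTop (𝓝 (diagonal fun i => √(μ i))) := by
  have hgram := PrefixSumsLLN.tendsto_mul_transpose_self hT.lln_E11
    (tendsto_const_div_atTop_nhds_zero_nat _)
  rw [zero_smul] at hgram
  have h := ((continuous_id.matrix_diagonal.tendsto _).comp (tendsto_pi_nhds.2 hT.tendsto_d)).add
    (tendsto_zero_of_tendsto_mul_transpose_self hgram)
  rw [add_zero] at h
  exact h

lemma tendsto_S11 (hT : M.Typical ω) (hγ : 1 ≤ γ) (hμ : ∀ i, 0 ≤ μ i) :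
    Tendsto (fun n => M.S11 n ω) atTop (𝓝 (diagonal μ + 1)) := by
  have h21 := PrefixSumsLLN.tendsto_mul_transpose_self hT.lln_E21
    (M.tendsto_p_sub_div (zero_lt_one.trans_le hγ))
  have h31 := PrefixSumsLLN.tendsto_mul_transpose_self hT.lln_E31 (M.tendsto_sub_p_div hγ)
  have h11 := ((continuous_id.matrix_transpose.tendsto _).comp hT.tendsto_X11).mul hT.tendsto_X11
  convert (h11.add h21).add h31 using 2 with n
  · rw [S11_eq, X21, X31]
    simp only [transpose_smul, transpose_transpose, Function.comp_apply, id_eq]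
  · rw [add_assoc, ← add_smul, add_sub_cancel, one_smul, id_eq, diagonal_transpose,
      diagonal_mul_diagonal]
    simp only [Real.mul_self_sqrt (hμ _)]

variable {z₀ : ℝ}

lemma eventually_lam_mem_Ico (hT : M.Typical ω) (hz₀ : bGamma γ < z₀) :
    ∀ᶠ x : ℕ × ℝ in atTop ×ˢ 𝓝 z₀, ∀ a, M.lam x.1 ω a ∈ Set.Ico 0 x.2 := by
  obtain ⟨ζ, hζ, hζz₀⟩ := exists_between hz₀
  filter_upwards [(hT.eventually_lam_mem_Icc hζ).prod_mk (lt_mem_nhds hζz₀)] with x ⟨⟨_, hl⟩, hx⟩ a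
  exact ⟨(hl a).1, (hl a).2.trans_lt hx⟩

lemma tendsto_sum_inv (hT : M.Typical ω) (hz₀ : bGamma γ < z₀) :
    Tendsto (fun x : ℕ × ℝ => (∑ a, (x.2 - M.lam x.1 ω a)⁻¹) / x.1)
      (atTop ×ˢ 𝓝 z₀) (𝓝 (mpTrace γ z₀)) := by
  obtain ⟨ζ, hζ, hζz₀⟩ := exists_between hz₀
  refine (hT.tendsto_resTrace z₀ hz₀).congr' ?_
  filter_upwards [((hT.gramLE ζ hζ).and (eventually_gt_atTop 0)).prod_mk (lt_mem_nhds hζz₀)]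
    with x ⟨⟨hgram, hn⟩, hx⟩
  have hl : IsGramSpectrum x.1 (M.W x.1 ω) (M.lam x.1 ω) := M.lamEig x.1 ω
  exact hl.resTrace_eq (Nat.cast_pos.2 hn) hgram hx

lemma tendsto_sum_lam_mul_inv (hT : M.Typical ω) (hz₀ : bGamma γ < z₀) (hγ : 0 < γ) :
    Tendsto (fun x : ℕ × ℝ => (∑ a, M.lam x.1 ω a * (x.2 - M.lam x.1 ω a)⁻¹) / x.1)
      (atTop ×ˢ 𝓝 z₀) (𝓝 (z₀ * mpTrace γ z₀ - γ⁻¹)) := by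
  refine ((tendsto_snd.mul (hT.tendsto_sum_inv hz₀)).sub
    ((M.tendsto_p_sub_div hγ).comp tendsto_fst)).congr' ?_
  filter_upwards [hT.eventually_lam_mem_Ico hz₀] with x hx
  have hterm (a : Fin (p x.1 - k)) : x.2 * (x.2 - M.lam x.1 ω a)⁻¹ - 1
      = M.lam x.1 ω a * (x.2 - M.lam x.1 ω a)⁻¹ := by
    have := (sub_pos.2 (hx a).2).ne'
    field_simp
    ring
  simp only [Function.comp_apply, ← hterm, Finset.sum_sub_distrib, ← Finset.mul_sum,
    Finset.sum_const, Finset.card_univ, Fintype.card_fin, nsmul_eq_mul, mul_one, sub_div,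
    mul_div_assoc]

lemma tendsto_mul_diagonal_mul_transpose (hT : M.Typical ω) (hz₀ : bGamma γ < z₀)
    {A B : ∀ n, Matrix (Fin k) (Fin (p n - k)) ℝ}
    {τ R : Matrix (Fin k) (Fin k) ℝ}
    (hAB : ∀ i j, PrefixSumsLLN (fun n a => A n i a * B n j a) (τ i j)) {g : ℝ → ℝ}
    (hg : MonotoneOn g (Set.Ici 0)) (hg0 : 0 ≤ g 0)
    (hR : Tendsto (fun x : ℕ × ℝ =>
      ((∑ a, g (M.lam x.1 ω a) * (x.2 - M.lam x.1 ω a)⁻¹) / x.1) • τ) (atTop ×ˢ 𝓝 z₀) (𝓝 R)) :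
    Tendsto (fun x : ℕ × ℝ => ((1 / √x.1) • A x.1)
      * diagonal (fun a => g (M.lam x.1 ω a) * (x.2 - M.lam x.1 ω a)⁻¹)
      * ((1 / √x.1) • B x.1)ᵀ) (atTop ×ˢ 𝓝 z₀) (𝓝 R) := by
  obtain ⟨ζ, hζ, hζz₀⟩ := exists_between hz₀
  obtain ⟨z₁, hζz₁, hz₁⟩ := exists_between hζz₀
  refine PrefixSumsLLN.tendsto_mul_diagonal_mul_transpose hAB tendsto_fst
    (C := g ζ * (z₁ - ζ)⁻¹) ?_ hR
  filter_upwards [(hT.eventually_lam_mem_Icc hζ).prod_mk (lt_mem_nhds hz₁)] with x ⟨⟨hanti, hl⟩, hx⟩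
  exact antitone_mul_inv_sub hanti hl hζz₁ hx.le hg hg0

lemma tendsto_X12_resolvent_X12 (hT : M.Typical ω) (hz₀ : bGamma γ < z₀) :
    Tendsto (fun x : ℕ × ℝ => M.X12 x.1 ω * M.resolvent x.1 ω x.2 * (M.X12 x.1 ω)ᵀ)
      (atTop ×ˢ 𝓝 z₀) (𝓝 (mpTrace γ z₀ • 1)) := by
  simpa only [X12, resolvent, one_mul] using
    hT.tendsto_mul_diagonal_mul_transpose hz₀ hT.lln_E12 (g := fun _ => 1)
      monotoneOn_const zero_le_one
      (by simpa only [one_mul] using (hT.tendsto_sum_inv hz₀).smul_const _)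

lemma tendsto_X12_resolvent_X22_X21 (hT : M.Typical ω) (hz₀ : bGamma γ < z₀) :
    Tendsto (fun x : ℕ × ℝ => M.X12 x.1 ω * (M.resolvent x.1 ω x.2 * M.X22 x.1 ω) * M.X21 x.1 ω)
      (atTop ×ˢ 𝓝 z₀) (𝓝 0) := by
  simpa only [X12, X21, resolvent_mul_X22, transpose_smul, transpose_transpose] using
    hT.tendsto_mul_diagonal_mul_transpose hz₀ (τ := 0) hT.lln_E12_E21
      (fun _ _ _ _ h => Real.sqrt_le_sqrt h) (Real.sqrt_nonneg 0)
      (by simpa only [smul_zero] using tendsto_const_nhds)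

lemma tendsto_X21_X22_resolvent_X22_X21 (hT : M.Typical ω) (hz₀ : bGamma γ < z₀)
    (hγ : 0 < γ) :
    Tendsto (fun x : ℕ × ℝ =>
        (M.X21 x.1 ω)ᵀ * (M.X22 x.1 ω * M.resolvent x.1 ω x.2 * M.X22 x.1 ω) * M.X21 x.1 ω)
      (atTop ×ˢ 𝓝 z₀) (𝓝 ((z₀ * mpTrace γ z₀ - γ⁻¹) • 1)) := by
  refine (hT.tendsto_mul_diagonal_mul_transpose hz₀ hT.lln_E21 (g := fun t => t)
    (fun _ _ _ _ h => h) le_rfl ((hT.tendsto_sum_lam_mul_inv hz₀ hγ).smul_const _)).congr' ?_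
  filter_upwards [hT.eventually_lam_mem_Ico hz₀] with x hx
  rw [X22_mul_resolvent_mul_X22 M (fun a => (hx a).1), X21, transpose_smul, transpose_smul,
    transpose_transpose]

lemma tendsto_S12_resolvent_X12 (hT : M.Typical ω) (hz₀ : bGamma γ < z₀) :
    Tendsto (fun x : ℕ × ℝ => M.S12 x.1 ω * M.resolvent x.1 ω x.2 * (M.X12 x.1 ω)ᵀ)
      (atTop ×ˢ 𝓝 z₀) (𝓝 (mpTrace γ z₀ • diagonal fun i => √(μ i))) := by
  have hX11 := hT.tendsto_X11.comp (tendsto_fst (g := 𝓝 z₀))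
  have h := (((continuous_id.matrix_transpose.tendsto _).comp hX11).mul
    (hT.tendsto_X12_resolvent_X12 hz₀)).add ((continuous_id.matrix_transpose.tendsto _).comp
      (hT.tendsto_X12_resolvent_X22_X21 hz₀))
  convert h using 2 with x
  · simp only [S12_eq, Function.comp_apply, id_eq, transpose_mul, transpose_resolvent,
      transpose_X22, Matrix.add_mul, Matrix.mul_assoc]
  · simp only [id_eq, diagonal_transpose, transpose_zero, add_zero, Matrix.mul_smul, Matrix.mul_one]

lemma tendsto_S12_resolvent_S12 (hT : M.Typical ω) (hz₀ : bGamma γ < z₀)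
    (hγ : 0 < γ) (hμ : ∀ i, 0 ≤ μ i) :
    Tendsto (fun x : ℕ × ℝ => M.S12 x.1 ω * M.resolvent x.1 ω x.2 * (M.S12 x.1 ω)ᵀ)
      (atTop ×ˢ 𝓝 z₀) (𝓝 (mpTrace γ z₀ • diagonal μ + (z₀ * mpTrace γ z₀ - γ⁻¹) • 1)) := by
  have hX11 := hT.tendsto_X11.comp (tendsto_fst (g := 𝓝 z₀))
  have h := ((hT.tendsto_S12_resolvent_X12 hz₀).mul hX11).add
    ((((continuous_id.matrix_transpose.tendsto _).comp hX11).mul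
      (hT.tendsto_X12_resolvent_X22_X21 hz₀)).add (hT.tendsto_X21_X22_resolvent_X22_X21 hz₀ hγ))
  convert h using 2 with x
  · simp only [S12_eq, Function.comp_apply, id_eq, transpose_add, transpose_mul,
      transpose_transpose, transpose_X22, Matrix.add_mul, Matrix.mul_add, Matrix.mul_assoc]
  · simp only [Matrix.mul_zero, zero_add, Matrix.smul_mul, diagonal_mul_diagonal,
      Real.mul_self_sqrt (hμ _)]

lemma tendsto_T (hT : M.Typical ω) (hz₀ : bGamma γ < z₀) (hγ : 1 ≤ γ) (hμ : ∀ i, 0 ≤ μ i) :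
    Tendsto (fun x : ℕ × ℝ => M.T x.1 ω x.2) (atTop ×ˢ 𝓝 z₀) (𝓝 (T0lim γ μ z₀)) := by
  have hcore := (hT.tendsto_X12_resolvent_X12 hz₀).const_sub 1
  have hdet : (1 - mpTrace γ z₀ • (1 : Matrix (Fin k) (Fin k) ℝ)).det ≠ 0 := by
    rw [← one_sub_smul_one, det_smul, det_one, mul_one]
    exact pow_ne_zero _ (sub_pos.2 (mpTrace_lt_one hγ hz₀)).ne'
  have hinv := (continuousAt_matrix_inv _ (by
    simpa only [Ring.inverse_eq_inv'] using continuousAt_inv₀ hdet)).tendsto.comp hcore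
  have hS12 := hT.tendsto_S12_resolvent_X12 hz₀
  rw [T0lim_eq hγ hz₀ hμ rfl]
  refine (((((hT.tendsto_S11 hγ hμ).comp tendsto_fst).sub (tendsto_snd.smul_const _)).add
    (hT.tendsto_S12_resolvent_S12 hz₀ (zero_lt_one.trans_le hγ) hμ)).add ((hS12.mul hinv).mul
      ((continuous_id.matrix_transpose.tendsto _).comp hS12))).congr' ?_
  filter_upwards [hT.eventually_lam_mem_Ico hz₀,
    ((continuous_id.matrix_det.tendsto _).comp hcore).eventually_ne hdet] with x hx hxdet
  exact (M.T_eq (fun a => (hx a).2.ne) hxdet).symm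

end Typical

end BlockModel

/-! ### Uniform convergence -/

lemma continuousOn_of_tendsto_prod {ι X Y : Type*} [TopologicalSpace X] [TopologicalSpace Y]
    [RegularSpace Y] {l : Filter ι} [l.NeBot] {F : ι → X → Y} {f : X → Y} {s : Set X}
    (h : ∀ z ∈ s, Tendsto (fun x : ι × X => F x.1 x.2) (l ×ˢ 𝓝[s] z) (𝓝 (f z))) :
    ContinuousOn f s := by
  intro z hz
  refine (closed_nhds_basis (f z)).tendsto_right_iff.2 fun V hV => ?_
  obtain ⟨A, hA, U, hU, hAU⟩ := eventually_prod_iff.1 ((h z hz).eventually_mem hV.1)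
  filter_upwards [hU, self_mem_nhdsWithin] with w hw hws
  exact hV.2.mem_of_tendsto ((h w hws).comp (tendsto_id.prodMk
    ((tendsto_const_pure (b := w)).mono_right (pure_le_nhdsWithin hws))))
      (hA.mono fun n hn => hAU hn hw)

lemma tendstoLocallyUniformlyOn_of_tendsto_prod {ι X Y : Type*} [TopologicalSpace X]
    [UniformSpace Y] {l : Filter ι} [l.NeBot] {F : ι → X → Y} {f : X → Y} {s : Set X}
    (h : ∀ z ∈ s, Tendsto (fun x : ι × X => F x.1 x.2) (l ×ˢ 𝓝[s] z) (𝓝 (f z))) :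
    TendstoLocallyUniformlyOn F f l s := by
  refine tendstoLocallyUniformlyOn_iff_filter.2 fun z hz => ?_
  have hf : Tendsto f (𝓝[s] z) (𝓝 (f z)) := continuousOn_of_tendsto_prod h z hz
  exact tendstoUniformlyOnFilter_iff_tendsto.2
    (((hf.comp tendsto_snd).prodMk_nhds (h z hz)).mono_right (nhds_le_uniformity (f z)))

theorem secular_matrix_uniform_as_limit_general {k : ℕ} {γ : ℝ} (hγ : 1 ≤ γ) {p : ℕ → ℕ}
    {Ω : Type*} [MeasurableSpace Ω] {P : Measure Ω} [IsFiniteMeasure P] {μ : Fin k → ℝ}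
    (M : BlockModel k γ p Ω P μ) (hμ : ∀ i, 0 ≤ μ i) :
    ∀ᵐ ω ∂P, ∀ i j : Fin k, TendstoLocallyUniformlyOn (fun n z => M.T n ω z i j)
      (fun z => T0lim γ μ z i j) atTop (Set.Ioi (bGamma γ)) := by
  filter_upwards [M.ae_typical hγ] with ω hω i j
  refine tendstoLocallyUniformlyOn_of_tendsto_prod fun z hz => ?_
  have hT := tendsto_pi_nhds.1 (tendsto_pi_nhds.1 (hω.tendsto_T hz hγ hμ) i) j
  exact hT.mono_left (prod_mono le_rfl nhdsWithin_le_nhds)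

/-- If `[u, v] ⊂ (b_γ, ∞)` is a closed interval, then `T_n(z)` converges
almost surely to `T₀(z) = (1 + γ⁻¹ m(z))⁻¹ D² + m(z)⁻¹ I_k`, uniformly in `z ∈ [u, v]`
(entrywise). -/
theorem secular_matrix_uniform_as_limit
    {k : ℕ} (hk : 1 ≤ k) {γ : ℝ} (hγ : 1 ≤ γ)
    {p : ℕ → ℕ} {Ω : Type*} [MeasurableSpace Ω] {P : Measure Ω} [IsProbabilityMeasure P]
    {μ : Fin k → ℝ} (M : BlockModel k γ p Ω P μ)
    (hd : ∀ n ω, StrictAnti (M.d n ω))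
    (hμanti : StrictAnti μ) (hμpos : ∀ i, 0 < μ i)
    (u v : ℝ) (hu : bGamma γ < u) (huv : u ≤ v) :
    ∀ᵐ ω ∂P, ∀ i j : Fin k,
      TendstoUniformlyOn (fun n z => M.T n ω z i j) (fun z => T0lim γ μ z i j)
        atTop (Set.Icc u v) := by
  filter_upwards [secular_matrix_uniform_as_limit_general hγ M fun i => (hμpos i).le] with ω hω i j
  exact (tendstoLocallyUniformlyOn_iff_forall_isCompact isOpen_Ioi).1 (hω i j) _
    (fun z hz => hu.trans_le hz.1) isCompact_Icc
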